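/- For every integer α ≥ 1 there exist integers d(n,0), d(n,2) for n ≥ 1 and d(n,1) for n ≥ 2 such that, in the d_5 tower, L_{2α} = p_0·∑_{n≥1} d(n,0)·7^{⌊(7n+2)/4⌋}·t^n + p_1·∑_{n≥2} d(n,1)·7^{⌊(7n−1)/4⌋}·t^n + ∑_{n≥1} d(n,2)·7^{⌊(7n−2)/4⌋}·t^n, where the infinite sums converge coefficientwise since t^n has q-order n. -/

import Mathlib

noncomputable section

/-- `J b = ∏_{k=1}^∞ (1 - q^{b·k})` as a formal power series with integer coefficients. -/
def J (b : ℕ) : PowerSeries ℤ :=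
  PowerSeries.mk fun n =>
    PowerSeries.coeff n
      (∏ k ∈ Finset.range (n + 1), (1 - (PowerSeries.X : PowerSeries ℤ) ^ (b * (k + 1))))

/-- The coefficientwise-convergent sum `∑_{n≥0} c(n)·t^n`: since `t` has q-order 1, the
coefficient of `q^m` only receives contributions from `n ≤ m`. -/
def tpowSum (t : PowerSeries ℤ) (c : ℕ → ℤ) : PowerSeries ℤ :=
  PowerSeries.mk fun m =>
    ∑ n ∈ Finset.range (m + 1), c n * PowerSeries.coeff m (t ^ n)

namespace D5
open PowerSeries

section partA
variable {R : Type*} [CommRing R]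

def ip (f : ℕ → R⟦X⟧) : R⟦X⟧ :=
  PowerSeries.mk fun n => PowerSeries.coeff n (∏ k ∈ Finset.range (n + 1), f k)

def CL (F : ℕ → R⟦X⟧) (f : R⟦X⟧) : Prop := ∀ M : ℕ, ∃ N0, ∀ n ≥ N0, X ^ M ∣ F n - f

lemma CL.unique {F : ℕ → R⟦X⟧} {f g : R⟦X⟧} (h1 : CL F f) (h2 : CL F g) : f = g := by
  ext m
  obtain ⟨a, ha⟩ := h1 (m+1)
  obtain ⟨b, hb⟩ := h2 (m+1)
  have := (hb (max a b) (le_max_right _ _)).sub (ha (max a b) (le_max_left _ _))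
    |> fun h => (X_pow_dvd_iff.1 h) m (Nat.lt_succ_self m)
  simp only [map_sub] at this
  linear_combination this

lemma CL.const (f : R⟦X⟧) : CL (fun _ => f) f := fun M => ⟨0, fun n _ => by simp⟩

lemma CL.mul {F G : ℕ → R⟦X⟧} {f g : R⟦X⟧} (h1 : CL F f) (h2 : CL G g) :
    CL (fun n => F n * G n) (f * g) := fun M => by
  obtain ⟨a, ha⟩ := h1 M
  obtain ⟨b, hb⟩ := h2 M
  refine ⟨max a b, fun n hn => ?_⟩
  have h := ((ha n (le_trans (le_max_left _ _) hn)).mul_right (G n)).add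
    ((hb n (le_trans (le_max_right _ _) hn)).mul_left f)
  convert h using 1
  ring

lemma CL.comp {F : ℕ → R⟦X⟧} {f : R⟦X⟧} (h : CL F f) (s : ℕ → ℕ)
    (hs : ∀ B, ∃ N0, ∀ n ≥ N0, B ≤ s n) : CL (fun n => F (s n)) f := fun M => by
  obtain ⟨a, ha⟩ := h M
  obtain ⟨N0, hN⟩ := hs a
  exact ⟨N0, fun n hn => ha _ (hN n hn)⟩

lemma CL.congr' {F G : ℕ → R⟦X⟧} {f : R⟦X⟧} (h : CL F f) (N1 : ℕ) (hs : ∀ n ≥ N1, G n = F n) :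
    CL G f := fun M => by
  obtain ⟨a, ha⟩ := h M
  refine ⟨max a N1, fun n hn => ?_⟩
  rw [hs n (le_trans (le_max_right _ _) hn)]
  exact ha n (le_trans (le_max_left _ _) hn)

lemma CL.cancel {F G : ℕ → R⟦X⟧} {f g : R⟦X⟧} (h1 : CL (fun n => F n * G n) (f * g))
    (h2 : CL G g) (hg : IsUnit g) : CL F f := fun M => by
  obtain ⟨a, ha⟩ := h1 M
  obtain ⟨b, hb⟩ := h2 M
  refine ⟨max a b, fun n hn => ?_⟩
  have h := (ha n (le_trans (le_max_left _ _) hn)).sub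
    ((hb n (le_trans (le_max_right _ _) hn)).mul_left (F n))
  have : X ^ M ∣ (F n - f) * g := by
    convert h using 1
    ring
  exact (hg.dvd_mul_right).1 this

lemma prod_dvd (f : ℕ → R⟦X⟧) (m : ℕ) (hf : ∀ i ≥ m, X ^ m ∣ f i - 1) (n : ℕ) (hn : m ≤ n) :
    X ^ m ∣ (∏ i ∈ Finset.range n, f i) - ∏ i ∈ Finset.range m, f i := by
  induction n, hn using Nat.le_induction with
  | base => simp
  | succ n hn ih =>
    rw [Finset.prod_range_succ]
    have := ih.add ((hf n hn).mul_left (∏ i ∈ Finset.range n, f i))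
    convert this using 1
    ring

lemma ip_CL (f : ℕ → R⟦X⟧) (hf : ∀ i, X ^ i ∣ f i - 1) :
    CL (fun n => ∏ i ∈ Finset.range n, f i) (ip f) := fun M => by
  refine ⟨M, fun n hn => ?_⟩
  rw [X_pow_dvd_iff]
  intro m hm
  have h := prod_dvd f (m+1) (fun i hi => (pow_dvd_pow X hi).trans (hf i)) n (by omega)
  have := X_pow_dvd_iff.1 h m (Nat.lt_succ_self m)
  rw [map_sub] at this ⊢
  simpa [ip] using this

lemma ip_unique (f : ℕ → R⟦X⟧) (hf : ∀ i, X ^ i ∣ f i - 1) {g : R⟦X⟧}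
    (h : CL (fun n => ∏ i ∈ Finset.range n, f i) g) : ip f = g := (ip_CL f hf).unique h

lemma ip_isUnit (f : ℕ → R⟦X⟧) (hf : constantCoeff (f 0) = 1) : IsUnit (ip f) := by
  rw [PowerSeries.isUnit_iff_constantCoeff]
  rw [← coeff_zero_eq_constantCoeff_apply]
  simp [ip, hf]

/-! q-binomials -/
def qb {A : Type*} [CommRing A] (Q : A) : ℕ → ℕ → A
  | _, 0 => 1
  | 0, _ + 1 => 0
  | M + 1, k + 1 => qb Q M (k+1) + Q ^ (M - k) * qb Q M k

def qf {A : Type*} [CommRing A] (Q : A) (n : ℕ) : A := ∏ i ∈ Finset.range n, (1 - Q ^ (i+1))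

lemma qb_zero {A : Type*} [CommRing A] (Q : A) (M k : ℕ) (h : M < k) : qb Q M k = 0 := by
  induction M generalizing k with
  | zero => cases k with
    | zero => omega
    | succ k => simp [qb]
  | succ M ih => cases k with
    | zero => omega
    | succ k => simp [qb, ih (k+1) (by omega), ih k (by omega)]

lemma qb_self {A : Type*} [CommRing A] (Q : A) (M : ℕ)  : qb Q M 0 = 1 := by
  cases M <;> simp [qb]

lemma qb_prod {A : Type*} [CommRing A] (Q x y : A) (M : ℕ) :
    ∏ i ∈ Finset.range M, (y + x * Q ^ i) =
      ∑ k ∈ Finset.range (M+1), Q ^ (k*(k-1)/2) * qb Q M k * x ^ k * y ^ (M - k) := by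
  induction M with
  | zero => simp [qb]
  | succ M ih =>
    rw [Finset.prod_range_succ, ih, Finset.sum_range_succ' _ (M+1)]
    have h1 : ∀ k ∈ Finset.range (M+1), Q ^ ((k+1)*(k+1-1)/2) * qb Q (M+1) (k+1) * x ^ (k+1)
        * y ^ (M + 1 - (k+1)) =
        Q ^ ((k+1)*(k+1-1)/2) * qb Q M (k+1) * x ^ (k+1) * y ^ (M + 1 - (k+1)) +
        (Q ^ (k*(k-1)/2) * qb Q M k * x ^ k * y ^ (M - k)) * (x * Q ^ M) := by
      intro k hk
      have hk' : k ≤ M := by simpa [Nat.lt_succ_iff] using hk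
      have e1 : (k+1)*(k+1-1)/2 = k*(k-1)/2 + k := by
        rcases k with _ | k
        · simp
        · have : (k+1+1)*(k+1+1-1) = (k+1)*(k+1-1) + (k+1)*2 := by simp; ring
          rw [this, Nat.add_mul_div_right _ _ (by norm_num)]
      have e2 : Q ^ M = Q ^ k * Q ^ (M-k) := by rw [← pow_add]; congr 1; omega
      have e3 : M + 1 - (k+1) = M - k := by omega
      rw [e1, e2, e3, qb]
      ring
    rw [Finset.sum_congr rfl h1, Finset.sum_add_distrib, ← Finset.sum_mul, mul_add,
      Finset.sum_range_succ' _ M, Finset.sum_range_succ _ M]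
    rw [qb_zero Q M (M+1) (by omega)]
    have h2 : ∀ k ∈ Finset.range M, Q ^ ((k+1)*(k+1-1)/2) * qb Q M (k+1) * x ^ (k+1)
        * y ^ (M + 1 - (k+1)) = Q ^ ((k+1)*(k+1-1)/2) * qb Q M (k+1) * x ^ (k+1)
        * y ^ (M - (k+1)) * y := by
      intro k hk
      have hk' : k < M := by simpa using hk
      have : M + 1 - (k+1) = (M - (k+1)) + 1 := by omega
      rw [this, pow_succ]; ring
    rw [Finset.sum_congr rfl h2, ← Finset.sum_mul]
    simp only [qb_self]
    simp
    ring

lemma qb_fact {A : Type*} [CommRing A] (Q : A) (M k : ℕ) (hk : k ≤ M) :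
    qf Q k * qf Q (M - k) * qb Q M k = qf Q M := by
  induction M generalizing k with
  | zero => obtain rfl : k = 0 := by omega
            simp [qb, qf]
  | succ M ih =>
    rcases k with _ | k
    · simp [qb, qf]
    · have s : ∀ n, qf Q (n+1) = qf Q n * (1 - Q^(n+1)) := fun n => by
        simp [qf, Finset.prod_range_succ]
      rw [qb]
      rcases Nat.lt_or_ge k M with h | h
      · have i1 := ih (k+1) (by omega)
        have i2 := ih k (by omega)
        obtain ⟨l, rfl⟩ : ∃ l, M = k + 1 + l := ⟨M - (k+1), by omega⟩
        have a1 : k + 1 + l - (k+1) = l := by omega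
        have a2 : k + 1 + l - k = l + 1 := by omega
        have a3 : k + 1 + l + 1 - (k+1) = l + 1 := by omega
        rw [a1] at i1
        rw [a2] at i2
        rw [a2, a3]
        rw [s] at i1
        rw [s] at i2
        have e : k + 1 + l + 1 = (l + 1) + (k+1) := by omega
        rw [s (k+1+l), s l, s k, e, pow_add]
        linear_combination (1 - Q^(l+1)) * i1 + Q^(l+1) * (1 - Q^(k+1)) * i2
      · obtain rfl : k = M := by omega
        have i2 := ih k le_rfl
        rw [qb_zero Q k (k+1) (by omega)]
        simp only [Nat.sub_self] at i2 ⊢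
        rw [s]
        simp only [pow_zero]
        linear_combination (1 - Q^(k+1)) * i2

/-! theta series -/
def th (g : ℤ → R) (e : ℤ → ℕ) : R⟦X⟧ :=
  PowerSeries.mk fun m => ∑ᶠ k : ℤ, if e k = m then g k else 0

lemma coeff_th (g : ℤ → R) (e : ℤ → ℕ) (m : ℕ) (S : Finset ℤ) (hS : ∀ k, e k = m → k ∈ S) :
    coeff m (th g e) = ∑ k ∈ S, if e k = m then g k else 0 := by
  rw [th, coeff_mk]
  apply finsum_eq_sum_of_support_subset
  intro k hk
  simp only [Function.mem_support, ne_eq, ite_eq_right_iff, Classical.not_imp] at hk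
  exact hS k hk.1

lemma th_CL (g : ℤ → R) (e : ℤ → ℕ) (he : ∀ k, k.natAbs ≤ e k + 1) (c : ℕ → ℤ → R⟦X⟧)
    (hc : ∀ k, CL (fun n => c n k) 1) :
    CL (fun n => ∑ k ∈ Finset.Icc (-(n:ℤ)) n, C (g k) * X ^ (e k) * c n k) (th g e) := fun M => by
  choose N0 hN0 using fun k => hc k M
  let K := Finset.Icc (-(M+1:ℤ)) (M+1)
  refine ⟨max (M+1) (K.sup N0), fun n hn => ?_⟩
  have hn1 : M + 1 ≤ n := le_trans (le_max_left _ _) hn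
  have hsub : K ⊆ Finset.Icc (-(n:ℤ)) n := Finset.Icc_subset_Icc (by omega) (by omega)
  show X ^ M ∣ (∑ k ∈ Finset.Icc (-(n:ℤ)) n, C (g k) * X ^ (e k) * c n k) - th g e
  rw [← Finset.sum_sdiff hsub]
  have h1 : X ^ M ∣ ∑ k ∈ Finset.Icc (-(n:ℤ)) n \ K, C (g k) * X ^ (e k) * c n k := by
    apply Finset.dvd_sum
    intro k hk
    have hk2 : k ∉ K := (Finset.mem_sdiff.1 hk).2
    have : M ≤ e k := by
      have := he k
      simp only [K, Finset.mem_Icc, not_and_or, not_le] at hk2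
      omega
    exact ((pow_dvd_pow X this).mul_left _).mul_right _
  have h2 : X ^ M ∣ ∑ k ∈ K, C (g k) * X ^ (e k) * (c n k - 1) := by
    apply Finset.dvd_sum
    intro k hk
    exact (hN0 k n (le_trans ((Finset.le_sup hk).trans (le_max_right _ _)) hn)).mul_left _
  have h3 : X ^ M ∣ ∑ k ∈ K, C (g k) * X ^ (e k) - th g e := by
    rw [X_pow_dvd_iff]
    intro m hm
    rw [map_sub, coeff_th g e m K, map_sum]
    · simp only [coeff_C_mul, coeff_X_pow, mul_ite, mul_one, mul_zero, sub_eq_zero]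
      exact Finset.sum_congr rfl fun k _ => by simp [eq_comm]
    · intro k hk
      have := he k
      simp only [K, Finset.mem_Icc]
      omega
  have := (h1.add h2).add h3
  convert this using 1
  simp only [mul_sub, Finset.sum_sub_distrib, mul_one]
  ring

def ex (N c : ℤ) (k : ℤ) : ℕ := (N * (k * (k - 1) / 2) + c * k).toNat

lemma tri_two (k : ℤ) : 2 * (k * (k - 1) / 2) = k * (k-1) := by
  have := Int.even_mul_pred_self k
  obtain ⟨r, hr⟩ := this
  rw [hr]; omega

lemma ex_cast (N c k : ℤ) (hN : 1 ≤ N) (hc : 0 ≤ c) (hcN : c ≤ N) :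
    (ex N c k : ℤ) = N * (k * (k - 1) / 2) + c * k := by
  have := tri_two k
  rw [ex, Int.toNat_of_nonneg]
  rcases le_or_gt k 0 with h | h
  · have h5 : 2 * (k * (k-1)/2 + k) = k * (k+1) := by rw [mul_add, this]; ring
    have h6 : 0 ≤ k * (k-1) / 2 + k := by
      have : 0 ≤ k * (k+1) := by
        rcases eq_or_lt_of_le h with h | h
        · simp [h]
        · nlinarith
      omega
    nlinarith [mul_nonneg (neg_nonneg.2 h) (sub_nonneg.2 hcN), mul_nonneg (sub_nonneg.2 hN) h6]
  · have : 0 ≤ k * (k - 1) := mul_nonneg h.le (by omega)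
    have h2 : 0 ≤ k * (k-1) / 2 := by omega
    positivity

lemma ex_bound (N c k : ℤ) (hN : 1 ≤ N) (hc : 0 ≤ c) (hcN : c ≤ N) :
    k.natAbs ≤ ex N c k + 1 := by
  have h1 := ex_cast N c k hN hc hcN
  have h2 := tri_two k
  zify
  rw [h1]
  rcases le_or_gt k 0 with h | h
  · rw [abs_of_nonpos h]
    have h3 : 0 ≤ (N - c) * (-k) := mul_nonneg (by omega) (by omega)
    have h5 : 2 * (k * (k-1)/2 + k) = k * (k+1) := by rw [mul_add, h2]; ring
    have h4 : -k - 1 ≤ k * (k-1) / 2 + k := by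
      have : 0 ≤ (k+1)*(k+2) := by
        rcases lt_or_ge k (-1) with h | h
        · nlinarith
        · exact mul_nonneg (by omega) (by omega)
      nlinarith
    have h6 : 0 ≤ k * (k-1) / 2 + k := by
      have : 0 ≤ k * (k+1) := by
        rcases eq_or_lt_of_le h with h | h
        · simp [h]
        · nlinarith
      omega
    nlinarith [mul_nonneg (sub_nonneg.2 hN) h6]
  · rw [abs_of_pos h]
    have h4 : k - 1 ≤ k * (k-1)/2 := by
      have : 0 ≤ (k-1)*(k-2) := by
        rcases lt_or_ge k 2 with h' | h'
        · obtain rfl : k = 1 := by omega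
          simp
        · exact mul_nonneg (by omega) (by omega)
      nlinarith
    nlinarith [mul_nonneg (sub_nonneg.2 hN) (show 0 ≤ k * (k-1)/2 by omega), mul_nonneg hc h.le]

end partA
end D5

namespace D5
open PowerSeries

section partB
variable {R : Type*} [CommRing R]

def JR (R : Type*) [CommRing R] (N : ℕ) : R⟦X⟧ := ip fun i => 1 - X ^ (N * (i+1))
def PP (z : R) (N c : ℕ) : R⟦X⟧ := ip fun i => 1 + C z * X ^ (N * i + c)

lemma JR_hyp (N : ℕ) (hN : 1 ≤ N) (i : ℕ) : (X : R⟦X⟧) ^ i ∣ (1 - X ^ (N * (i+1))) - 1 := by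
  have : (1 - X ^ (N * (i+1)) : R⟦X⟧) - 1 = -X ^ (N * (i+1)) := by ring
  rw [this, dvd_neg]
  exact pow_dvd_pow X (by nlinarith)

lemma PP_hyp (z : R) (N c : ℕ) (hN : 1 ≤ N) (i : ℕ) :
    (X : R⟦X⟧) ^ i ∣ (1 + C z * X ^ (N * i + c)) - 1 := by
  rw [add_sub_cancel_left]
  exact (pow_dvd_pow X (by nlinarith)).mul_left _

lemma JR_CL (N : ℕ) (hN : 1 ≤ N) : CL (fun n => qf ((X : R⟦X⟧) ^ N) n) (JR R N) := by
  have := ip_CL (R := R) _ (JR_hyp N hN)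
  simpa only [qf, JR, ← pow_mul] using this

lemma JR_unit (N : ℕ) (hN : 1 ≤ N) : IsUnit (JR R N) := by
  apply ip_isUnit
  have : N ≠ 0 := by omega
  simp [this]

lemma X_pow_cancel {f g : R⟦X⟧} (n : ℕ) (h : X ^ n * f = X ^ n * g) : f = g := by
  ext m
  have := congrArg (coeff (m + n)) h
  simpa [coeff_X_pow_mul] using this

lemma C_zpow_mul (z : Rˣ) (a b : ℤ) :
    (C ((z ^ a : Rˣ) : R) : R⟦X⟧) * C ((z ^ b : Rˣ) : R) = C ((z ^ (a + b) : Rˣ) : R) := by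
  rw [← map_mul, ← Units.val_mul, ← zpow_add]

lemma jtp_finite (z : Rˣ) (N c : ℕ) (hN : 1 ≤ N) (hc : c ≤ N) (n : ℕ) :
    (∏ i ∈ Finset.range n, (1 + C (z : R) * X ^ (N * i + c))) *
      (∏ i ∈ Finset.range n, (1 + C ((z⁻¹ : Rˣ) : R) * X ^ (N * i + (N - c)))) =
    ∑ k ∈ Finset.range (2 * n + 1), C ((z ^ ((k:ℤ) - n) : Rˣ) : R) * X ^ (ex N c ((k:ℤ) - n)) *
      qb ((X : R⟦X⟧) ^ N) (2 * n) k := by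
  have key := qb_prod ((X : R⟦X⟧) ^ N) (C (z:R) * X ^ c) ((X ^ N) ^ n) (2 * n)
  set E0 := c * n + N * (n * (n-1) / 2) + N * (n * n) with hE0
  have hz : (C ((z^n : Rˣ) : R) : R⟦X⟧) * C (((z^n)⁻¹ : Rˣ) : R) = 1 := by
    rw [← map_mul, ← Units.val_mul]; simp
  -- left side
  have hl : ∏ i ∈ Finset.range (2*n), ((X ^ N) ^ n + C (z:R) * X ^ c * (X ^ N) ^ i : R⟦X⟧) =
      X ^ E0 * (C ((z^n : Rˣ) : R) * ((∏ i ∈ Finset.range n, (1 + C (z : R) * X ^ (N * i + c))) *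
      (∏ i ∈ Finset.range n, (1 + C ((z⁻¹ : Rˣ) : R) * X ^ (N * i + (N - c)))))) := by
    rw [two_mul, Finset.prod_range_add]
    have a1 : ∏ i ∈ Finset.range n, ((X ^ N) ^ n + C (z:R) * X ^ c * (X ^ N) ^ (n + i) : R⟦X⟧) =
        X ^ (N * (n * n)) * ∏ i ∈ Finset.range n, (1 + C (z : R) * X ^ (N * i + c)) := by
      have : (X : R⟦X⟧) ^ (N * (n * n)) = ∏ i ∈ Finset.range n, X ^ (N * n) := by
        rw [Finset.prod_const, Finset.card_range, ← pow_mul]; ring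
      rw [this, ← Finset.prod_mul_distrib]
      refine Finset.prod_congr rfl fun i _ => ?_
      ring
    have a2 : ∏ i ∈ Finset.range n, ((X ^ N) ^ n + C (z:R) * X ^ c * (X ^ N) ^ i : R⟦X⟧) =
        X ^ (c * n + N * (n * (n-1) / 2)) * (C ((z^n : Rˣ) : R) *
        ∏ i ∈ Finset.range n, (1 + C ((z⁻¹ : Rˣ) : R) * X ^ (N * i + (N - c)))) := by
      rw [← Finset.prod_range_reflect (fun i => (1 + C ((z⁻¹ : Rˣ) : R) * X ^ (N * i + (N - c))))]
      have b1 : (X : R⟦X⟧) ^ (c * n + N * (n * (n-1) / 2)) * C ((z^n : Rˣ) : R) =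
          ∏ i ∈ Finset.range n, (C (z:R) * X ^ (c + N * i)) := by
        rw [Finset.prod_mul_distrib, Finset.prod_const, Finset.card_range,
          Finset.prod_pow_eq_pow_sum, Finset.sum_add_distrib, ← Finset.mul_sum,
          Finset.sum_range_id]
        simp
        ring
      rw [← mul_assoc, b1, ← Finset.prod_mul_distrib]
      refine Finset.prod_congr rfl fun i hi => ?_
      have hi' : i < n := by simpa using hi
      have b2 : (C (z:R) : R⟦X⟧) * C ((z⁻¹ : Rˣ) : R) = 1 := by
        rw [← map_mul, ← Units.val_mul]; simp
      have b3 : (X ^ N) ^ n = (X : R⟦X⟧) ^ (c + N * i) * X ^ (N * (n - 1 - i) + (N - c)) := by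
        rw [← pow_mul, ← pow_add]
        congr 1
        obtain ⟨l, rfl⟩ : ∃ l, n = i + 1 + l := ⟨n - (i+1), by omega⟩
        have : i + 1 + l - 1 - i = l := by omega
        rw [this]
        obtain ⟨d, rfl⟩ : ∃ d, N = c + d := ⟨N - c, by omega⟩
        simp only [Nat.add_sub_cancel_left]
        ring
      rw [b3]
      linear_combination (-(X : R⟦X⟧) ^ (c + N * i) * X ^ (N * (n - 1 - i) + (N - c))) * b2
    rw [a1, a2, hE0, pow_add _ _ (N * (n*n))]
    ring
  have hr : ∑ k ∈ Finset.range (2*n+1), ((X : R⟦X⟧) ^ N) ^ (k*(k-1)/2) * qb ((X : R⟦X⟧) ^ N) (2*n) k *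
      (C (z:R) * X ^ c) ^ k * ((X ^ N) ^ n) ^ (2 * n - k) =
      X ^ E0 * (C ((z^n : Rˣ) : R) * ∑ k ∈ Finset.range (2 * n + 1), C ((z ^ ((k:ℤ) - n) : Rˣ) : R) *
        X ^ (ex N c ((k:ℤ) - n)) * qb ((X : R⟦X⟧) ^ N) (2 * n) k) := by
    rw [Finset.mul_sum, Finset.mul_sum]
    refine Finset.sum_congr rfl fun k hk => ?_
    have hk' : k ≤ 2 * n := by simpa [Nat.lt_succ_iff] using hk
    have c1 : (C (z:R) * X ^ c : R⟦X⟧) ^ k = C ((z^n : Rˣ) : R) * C ((z ^ ((k:ℤ) - n) : Rˣ) : R) *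
        X ^ (c * k) := by
      have := C_zpow_mul z n ((k:ℤ) - n)
      rw [zpow_natCast] at this
      rw [this, mul_pow, ← pow_mul]
      congr 1
      rw [show (n:ℤ) + (k - n) = (k:ℤ) by ring, zpow_natCast]
      simp
    have c2 : N * (k*(k-1)/2) + c * k + N * (n * (2 * n - k)) = E0 + ex N c ((k:ℤ) - n) := by
      zify
      rw [ex_cast _ _ _ (by exact_mod_cast hN) (by positivity) (by exact_mod_cast hc), hE0]
      have t1 : ((k * (k-1) / 2 : ℕ) : ℤ) = (k:ℤ) * (k - 1) / 2 := by
        rcases k with _ | k <;> simp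
      have t2 : ((n * (n-1) / 2 : ℕ) : ℤ) = (n:ℤ) * (n - 1) / 2 := by
        rcases n with _ | n <;> simp
      have s1 := tri_two (k:ℤ)
      have s2 := tri_two (n:ℤ)
      have s3 := tri_two ((k:ℤ) - n)
      have : (k * (k-1) / 2 : ℤ) + n * (2 * n - k) - n * (n-1)/2 - n * n =
        ((k:ℤ) - n) * ((k - n) - 1) / 2 := by
        have : 2 * ((k * (k-1) / 2 : ℤ) + n * (2 * n - k) - n * (n-1)/2 - n * n) =
          2 * (((k:ℤ) - n) * ((k - n) - 1) / 2) := by linear_combination s1 - s2 - s3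
        omega
      push_cast [Nat.cast_sub hk']
      push_cast at t1 t2
      rw [t1, t2]
      linear_combination (N:ℤ) * this
    have c3 : ((X : R⟦X⟧) ^ N) ^ (k*(k-1)/2) * X ^ (c * k) * ((X ^ N) ^ n) ^ (2 * n - k) =
        X ^ E0 * X ^ (ex N c ((k:ℤ) - n)) := by
      rw [← pow_add, ← c2, ← pow_mul, ← pow_mul, ← pow_mul, ← pow_add, ← pow_add]
    rw [c1]
    linear_combination (qb (X ^ N) (2 * n) k * C ((z^n : Rˣ) : R) * C ((z ^ ((k:ℤ) - n) : Rˣ) : R)) * c3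
  rw [hl, hr] at key
  have k2 := X_pow_cancel _ key
  have k3 := congrArg (fun x => C (((z^n)⁻¹ : Rˣ) : R) * x) k2
  simp only [← mul_assoc] at k3
  rw [mul_comm (C (((z^n)⁻¹ : Rˣ) : R)), hz] at k3
  simpa only [one_mul, mul_assoc] using k3

lemma sum_range_Icc {A : Type*} [AddCommMonoid A] (n : ℕ) (f : ℤ → A) :
    ∑ k ∈ Finset.range (2 * n + 1), f ((k:ℤ) - n) = ∑ k ∈ Finset.Icc (-(n:ℤ)) n, f k := by
  refine Finset.sum_bij (fun k _ => (k:ℤ) - n) ?_ ?_ ?_ ?_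
  · intro k hk
    simp only [Finset.mem_range, Finset.mem_Icc] at *
    omega
  · intro a _ b _ h
    simpa using h
  · intro b hb
    simp only [Finset.mem_Icc] at hb
    exact ⟨(b + n).toNat, by simp; omega, by omega⟩
  · intros; rfl

theorem jtp (z : Rˣ) (N c : ℕ) (hN : 1 ≤ N) (hc : c ≤ N) :
    th (fun k => ((z ^ k : Rˣ) : R)) (ex N c) =
      JR R N * (PP (z:R) N c * PP ((z⁻¹ : Rˣ) : R) N (N - c)) := by
  have h1 := (JR_CL (R := R) N hN).mul
    ((ip_CL (R := R) _ (PP_hyp (z:R) N c hN)).mul (ip_CL _ (PP_hyp ((z⁻¹ : Rˣ) : R) N (N-c) hN)))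
  refine CL.unique (th_CL _ _ (fun k => ex_bound _ _ k (by exact_mod_cast hN) (by positivity)
    (by exact_mod_cast hc)) (fun n l => qf (X ^ N) n * qb (X ^ N) (2 * n) (n + l).toNat) ?_) ?_
  · intro l
    have j := JR_CL (R := R) N hN
    refine CL.cancel (G := fun n => qf (X ^ N) (n + l).toNat * qf (X ^ N) (n - l).toNat)
      (g := JR R N * JR R N) ?_ ?_ ((JR_unit N hN).mul (JR_unit N hN))
    · rw [one_mul]
      have := j.mul (j.comp (fun n => 2 * n) (fun B => ⟨B, fun n hn => by omega⟩))
      refine this.congr' l.natAbs fun n hn => ?_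
      have := qb_fact ((X : R⟦X⟧) ^ N) (2 * n) (n + l).toNat (by omega)
      have e : 2 * n - ((n:ℤ) + l).toNat = ((n:ℤ) - l).toNat := by omega
      rw [e] at this
      linear_combination qf ((X : R⟦X⟧) ^ N) n * this
    · exact (j.comp (fun n => ((n:ℤ) + l).toNat) (fun B => ⟨B + l.natAbs, fun n hn => by omega⟩)).mul
        (j.comp (fun n => ((n:ℤ) - l).toNat) (fun B => ⟨B + l.natAbs, fun n hn => by omega⟩))
  · refine h1.congr' 0 fun n _ => ?_
    rw [jtp_finite z N c hN hc n, Finset.mul_sum, ← sum_range_Icc]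
    refine Finset.sum_congr rfl fun k _ => ?_
    have : ((n:ℤ) + ((k:ℤ) - n)).toNat = k := by omega
    rw [this]
    ring

end partB
end D5

namespace D5
open PowerSeries

section partC
variable {R : Type*} [CommRing R]

lemma prod_blocks {A : Type*} [CommMonoid A] (a n : ℕ) (f : ℕ → A) :
    ∏ i ∈ Finset.range (a * n), f i = ∏ i ∈ Finset.range n, ∏ r ∈ Finset.range a, f (a * i + r) := by
  induction n with
  | zero => simp
  | succ n ih => rw [Nat.mul_succ, Finset.prod_range_add, ih, Finset.prod_range_succ]

lemma JR_CL' (N : ℕ) (hN : 1 ≤ N) :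
    CL (fun n => ∏ i ∈ Finset.range n, (1 - (X : R⟦X⟧) ^ (N * (i+1)))) (JR R N) :=
  ip_CL _ (JR_hyp N hN)

lemma PP_CL (z : R) (N c : ℕ) (hN : 1 ≤ N) :
    CL (fun n => ∏ i ∈ Finset.range n, (1 + C z * X ^ (N * i + c))) (PP z N c) :=
  ip_CL _ (PP_hyp z N c hN)

lemma tend_mul (a : ℕ) (ha : 1 ≤ a) : ∀ B, ∃ N0, ∀ n ≥ N0, B ≤ a * n :=
  fun B => ⟨B, fun n hn => by nlinarith⟩

lemma pp3 : JR R 3 * (PP (-1) 3 1 * PP (-1) 3 2) = JR R 1 := by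
  refine CL.unique ((JR_CL' 3 (by norm_num)).mul ((PP_CL _ 3 1 (by norm_num)).mul
    (PP_CL _ 3 2 (by norm_num)))) (((JR_CL' (R := R) 1 le_rfl).comp (fun n => 3 * n)
      (tend_mul 3 (by norm_num))).congr' 0 fun n _ => ?_)
  rw [prod_blocks, ← Finset.prod_mul_distrib, ← Finset.prod_mul_distrib]
  refine Finset.prod_congr rfl fun i _ => ?_
  simp only [Finset.prod_range_succ, Finset.prod_range_zero, map_neg, map_one]
  ring

lemma pp2 : JR R 2 * PP (-1) 2 1 = JR R 1 := by
  refine CL.unique ((JR_CL' 2 (by norm_num)).mul (PP_CL _ 2 1 (by norm_num)))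
    (((JR_CL' (R := R) 1 le_rfl).comp (fun n => 2 * n)
      (tend_mul 2 (by norm_num))).congr' 0 fun n _ => ?_)
  rw [prod_blocks, ← Finset.prod_mul_distrib]
  refine Finset.prod_congr rfl fun i _ => ?_
  simp only [Finset.prod_range_succ, Finset.prod_range_zero, map_neg, map_one]
  ring

lemma pp1 (N : ℕ) (hN : 1 ≤ N) : JR R N * PP 1 N N = JR R (2 * N) := by
  refine CL.unique ((JR_CL' N hN).mul (PP_CL _ N N hN))
    ((JR_CL' (R := R) (2 * N) (by omega)).congr' 0 fun n _ => ?_)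
  rw [← Finset.prod_mul_distrib]
  refine Finset.prod_congr rfl fun i _ => ?_
  simp only [map_one]
  ring

lemma PP_shift (z : R) : PP z 1 0 = C (1 + z) * PP z 1 1 := by
  refine CL.unique ((PP_CL z 1 0 le_rfl).comp (fun n => n + 1) (fun B => ⟨B, fun n hn => by omega⟩))
    (((CL.const (C (1 + z))).mul (PP_CL z 1 1 le_rfl)).congr' 0 fun n _ => ?_)
  rw [Finset.prod_range_succ', mul_comm]
  congr 1
  simp

lemma pp7 : PP (1:R) 7 1 * PP 1 7 2 * PP 1 7 3 * PP 1 7 4 * PP 1 7 5 * PP 1 7 6 * PP 1 7 7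
    = PP (1:R) 1 1 := by
  have h : ∀ c, CL (fun n => ∏ i ∈ Finset.range n, (1 + C (1:R) * X ^ (7 * i + c))) (PP 1 7 c) :=
    fun c => PP_CL 1 7 c (by norm_num)
  refine CL.unique (((((((h 1).mul (h 2)).mul (h 3)).mul (h 4)).mul (h 5)).mul (h 6)).mul (h 7))
    (((PP_CL 1 1 1 le_rfl).comp (fun n => 7 * n)
      (tend_mul 7 (by norm_num))).congr' 0 fun n _ => ?_)
  rw [prod_blocks]
  simp only [← Finset.prod_mul_distrib]
  refine Finset.prod_congr rfl fun i _ => ?_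
  simp only [Finset.prod_range_succ, Finset.prod_range_zero, map_one, one_mul, add_assoc,
    Nat.reduceAdd, zero_add, add_zero]

def sg (k : ℤ) : ℤ := ((-1 : ℤˣ) ^ k : ℤˣ)

lemma c1 : JR R 1 = th (fun k => ((((-1 : Rˣ) ^ k : Rˣ)) : R)) (ex 3 1) := by
  have := jtp (R := R) (-1) 3 1 (by norm_num) (by norm_num)
  simp only [Nat.cast_ofNat, Nat.cast_one, inv_neg_one, Units.val_neg, Units.val_one] at this
  rw [this, pp3]

lemma c3 : JR R 2 * th (fun k => ((((-1 : Rˣ) ^ k : Rˣ)) : R)) (ex 2 1) = JR R 1 ^ 2 := by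
  have := jtp (R := R) (-1) 2 1 (by norm_num) (by norm_num)
  simp only [Nat.cast_ofNat, Nat.cast_one, inv_neg_one, Units.val_neg, Units.val_one] at this
  rw [this]
  linear_combination (JR R 2 * PP (-1) 2 1 + JR R 1) * pp2 (R := R)

lemma c4 : JR R 1 * th (fun _ => (1 : R)) (ex 1 0) = 2 * JR R 2 ^ 2 := by
  have := jtp (R := R) 1 1 0 le_rfl (by norm_num)
  simp only [Nat.cast_one, Nat.cast_zero, inv_one, Units.val_one, one_zpow] at this
  rw [this]
  have h1 := PP_shift (1 : R)
  have h2 := pp1 (R := R) 1 le_rfl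
  have h3 : (C (1 + 1 : R) : R⟦X⟧) = 2 := by rw [map_add, map_one]; norm_num
  rw [h3] at h1
  rw [h1]
  simp only [Nat.sub_zero, mul_one] at h2 ⊢
  linear_combination 2 * (JR R 1 * PP 1 1 1 + JR R 2) * h2

lemma c5 : th (fun _ => (1 : R)) (ex 7 4) * th (fun _ => (1 : R)) (ex 7 5) *
    th (fun _ => (1 : R)) (ex 7 6) * (JR R 1 * JR R 14) = JR R 7 ^ 4 * JR R 2 := by
  have a4 := jtp (R := R) 1 7 4 (by norm_num) (by norm_num)
  have a5 := jtp (R := R) 1 7 5 (by norm_num) (by norm_num)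
  have a6 := jtp (R := R) 1 7 6 (by norm_num) (by norm_num)
  simp only [Nat.cast_ofNat, inv_one, Units.val_one, one_zpow, Nat.reduceSub] at a4 a5 a6
  rw [a4, a5, a6]
  have h1 := pp1 (R := R) 1 le_rfl
  have h7 := pp1 (R := R) 7 (by norm_num)
  have p7 := pp7 (R := R)
  simp only [mul_one, Nat.reduceMul] at h1 h7
  rw [← h7, ← h1, ← p7]
  ring

/-! Jacobi -/
lemma eps_ip (z : DualNumber R) (hz : DualNumber.eps * z = -DualNumber.eps) :
    C (DualNumber.eps : DualNumber R) * PP z 1 1 = C DualNumber.eps * JR (DualNumber R) 1 := by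
  refine CL.unique ((CL.const _).mul (PP_CL z 1 1 le_rfl)) (((CL.const _).mul
    (JR_CL' 1 le_rfl)).congr' 0 fun n hn => ?_)
  clear hn
  induction n with
  | zero => simp
  | succ n ih =>
    rw [Finset.prod_range_succ, Finset.prod_range_succ, ← mul_assoc, ih, ← mul_assoc]
    have : C (DualNumber.eps : DualNumber R) * C z = -C DualNumber.eps := by
      rw [← map_mul, hz, map_neg]
    rw [one_mul, one_mul]
    linear_combination (∏ x ∈ Finset.range n, (1 - X ^ (1 * (x+1)))) * X ^ (n+1) * this

lemma map_ip {S : Type*} [CommRing S] (φ : R →+* S) (f : ℕ → R⟦X⟧) :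
    PowerSeries.map φ (ip f) = ip fun i => PowerSeries.map φ (f i) := by
  ext n
  rw [coeff_map, ip, coeff_mk, ip, coeff_mk, ← map_prod, coeff_map]

lemma map_JR {S : Type*} [CommRing S] (φ : R →+* S) (N : ℕ) :
    PowerSeries.map φ (JR R N) = JR S N := by
  simp [JR, map_ip]

def dz (R : Type*) [CommRing R] : (DualNumber R)ˣ where
  val := 1 + DualNumber.eps
  inv := 1 - DualNumber.eps
  val_inv := by
    have := DualNumber.eps_mul_eps (R := R)
    linear_combination -this
  inv_val := by
    have := DualNumber.eps_mul_eps (R := R)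
    linear_combination -this

lemma dz_pow (k : ℤ) : ((dz R ^ k : (DualNumber R)ˣ) : DualNumber R) =
    1 + (k : DualNumber R) * DualNumber.eps := by
  have h := DualNumber.eps_mul_eps (R := R)
  induction k using Int.induction_on with
  | zero => simp
  | succ n ih =>
    rw [zpow_add_one, Units.val_mul, ih]
    simp only [dz]
    push_cast
    linear_combination (n : DualNumber R) * h
  | pred n ih =>
    rw [zpow_sub_one, Units.val_mul, ih]
    simp only [dz, Units.val_inv_eq_inv_val, Units.inv_mk]
    push_cast
    linear_combination (n : DualNumber R) * h

lemma coeff_th' (g : ℤ → R) (e : ℤ → ℕ) (he : ∀ k, k.natAbs ≤ e k + 1) (m : ℕ) :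
    coeff m (th g e) = ∑ k ∈ Finset.Icc (-(m+1:ℤ)) (m+1), if e k = m then g k else 0 := by
  apply coeff_th
  intro k hk
  have := he k
  rw [Finset.mem_Icc]
  omega

lemma neg_one_zpow_val {S : Type*} [CommRing S] (k : ℤ) :
    (((-1 : Sˣ) ^ k : Sˣ) : S) = (((-1 : ℤˣ) ^ k : ℤˣ) : ℤ) := by
  rcases Int.even_or_odd k with h | h
  · simp [h.neg_one_zpow]
  · simp [h.neg_one_zpow]

lemma c2 : JR R 1 ^ 3 = th (fun k => -((((-1 : ℤˣ) ^ k : ℤˣ) : ℤ) : R) * (k : R)) (ex 1 0) := by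
  have := jtp (R := DualNumber R) (-dz R) 1 0 le_rfl (by norm_num)
  rw [PP_shift] at this
  have he := DualNumber.eps_mul_eps (R := R)
  have e1 : (1 + ((-dz R : (DualNumber R)ˣ) : DualNumber R)) = -DualNumber.eps := by
    simp [dz]
  have e2 := eps_ip ((-dz R : (DualNumber R)ˣ) : DualNumber R) (by
    rw [Units.val_neg]; simp only [dz]; linear_combination -he)
  have e3 := eps_ip (((-dz R)⁻¹ : (DualNumber R)ˣ) : DualNumber R) (by
    rw [inv_neg, Units.val_neg]; simp only [dz, Units.val_inv_eq_inv_val, Units.inv_mk]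
    linear_combination he)
  rw [e1, map_neg] at this
  have key : th (fun k => (((-dz R) ^ k : (DualNumber R)ˣ) : DualNumber R)) (ex 1 0) =
      - (C DualNumber.eps * PowerSeries.map (TrivSqZeroExt.inlHom R R) (JR R 1 ^ 3)) := by
    simp only [Nat.cast_one, Nat.cast_zero] at this
    rw [this, map_pow, map_JR]
    simp only [Nat.sub_zero]
    linear_combination (-JR (DualNumber R) 1 * PP (((-dz R)⁻¹ : (DualNumber R)ˣ) : DualNumber R) 1 1) * e2
      - JR (DualNumber R) 1 ^ 2 * e3
  ext m
  have hm := congrArg (fun x => TrivSqZeroExt.snd (coeff m x)) key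
  rw [coeff_th' _ _ (fun k => ex_bound _ _ k le_rfl le_rfl (by norm_num))] at hm ⊢
  rw [map_neg, coeff_C_mul, coeff_map, TrivSqZeroExt.snd_neg, TrivSqZeroExt.snd_sum] at hm
  have r1 : TrivSqZeroExt.snd (DualNumber.eps * (TrivSqZeroExt.inlHom R R) (coeff m (JR R 1 ^ 3)))
      = coeff m (JR R 1 ^ 3) := by simp
  rw [r1] at hm
  rw [← neg_eq_iff_eq_neg] at hm
  rw [← hm, ← Finset.sum_neg_distrib]
  refine Finset.sum_congr rfl fun k _ => ?_
  split_ifs with h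
  · have : (((-dz R) ^ k : (DualNumber R)ˣ) : DualNumber R) =
      ((((-1 : ℤˣ) ^ k : ℤˣ) : ℤ) : DualNumber R) * (1 + (k : DualNumber R) * DualNumber.eps) := by
      have h0 := congrArg Units.val (mul_zpow (-1 : (DualNumber R)ˣ) (dz R) k)
      rw [Units.val_mul, dz_pow, neg_one_zpow_val] at h0
      rw [← neg_one_mul (dz R)]
      exact h0
    rw [this]
    simp
  · simp

end partC
end D5

namespace D5
open PowerSeries

section partD
variable {R : Type*} [CommRing R]

def res (r : ℕ) (f : R⟦X⟧) : R⟦X⟧ := PowerSeries.mk fun n => if n % 7 = r then coeff n f else 0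

lemma res_sum (f : R⟦X⟧) : f = res 0 f + res 1 f + res 2 f + res 3 f + res 4 f + res 5 f + res 6 f := by
  ext n
  simp only [map_add, res, coeff_mk]
  have : n % 7 < 7 := Nat.mod_lt _ (by norm_num)
  interval_cases n % 7 <;> simp

lemma th_congr {g g' : ℤ → R} {e e' : ℤ → ℕ} (h : ∀ k, g k = g' k) (h' : ∀ k, e k = e' k) :
    th g e = th g' e' := by
  rw [funext h, funext h']

lemma th_add (g g' : ℤ → R) (e : ℤ → ℕ) (he : ∀ k : ℤ, k.natAbs ≤ e k + 1) :
    th (fun k => g k + g' k) e = th g e + th g' e := by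
  ext m
  rw [map_add, coeff_th' _ _ he, coeff_th' _ _ he, coeff_th' _ _ he, ← Finset.sum_add_distrib]
  refine Finset.sum_congr rfl fun k _ => ?_
  split_ifs <;> simp

lemma th_smul (c : R) (g : ℤ → R) (e : ℤ → ℕ) (he : ∀ k : ℤ, k.natAbs ≤ e k + 1) :
    th (fun k => c * g k) e = C c * th g e := by
  ext m
  rw [coeff_C_mul, coeff_th' _ _ he, coeff_th' _ _ he, Finset.mul_sum]
  refine Finset.sum_congr rfl fun k _ => ?_
  split_ifs <;> simp

lemma res_th_zero (r : ℕ) (g : ℤ → R) (e : ℤ → ℕ) (h : ∀ k, e k % 7 ≠ r) : res r (th g e) = 0 := by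
  ext m
  simp only [res, coeff_mk, map_zero]
  split_ifs with hm
  · rw [th, coeff_mk]
    rw [finsum_eq_zero_of_forall_eq_zero]
    intro k
    rw [if_neg]
    rintro rfl
    exact h k hm
  · rfl

lemma res_th_one (r : ℕ) (g : ℤ → R) (e : ℤ → ℕ) (s : ℤ → ℤ) (hs : Function.Injective s)
    (h : ∀ k, e k % 7 = r ↔ k ∈ Set.range s) :
    res r (th g e) = th (fun l => g (s l)) (fun l => e (s l)) := by
  ext m
  simp only [res, coeff_mk, th]
  split_ifs with hm
  · rw [← finsum_mem_range (f := fun k => if e k = m then g k else 0) hs,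
      ← finsum_mem_univ (fun k => if e k = m then g k else 0)]
    refine finsum_mem_inter_support_eq' _ _ _ fun k hk => ?_
    simp only [Function.mem_support, ne_eq, ite_eq_right_iff, Classical.not_imp] at hk
    simp only [Set.mem_univ, true_iff]
    rw [← h, hk.1, hm]
  · rw [finsum_eq_zero_of_forall_eq_zero]
    intro l
    rw [if_neg]
    intro hl
    exact hm (by rw [← hl]; exact (h _).2 ⟨l, rfl⟩)

lemma res_th_two (r : ℕ) (g : ℤ → R) (e : ℤ → ℕ) (he : ∀ k : ℤ, k.natAbs ≤ e k + 1)
    (s s' : ℤ → ℤ) (hs : Function.Injective s) (hs' : Function.Injective s')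
    (hd : Disjoint (Set.range s) (Set.range s'))
    (h : ∀ k, e k % 7 = r ↔ (k ∈ Set.range s ∨ k ∈ Set.range s')) :
    res r (th g e) = th (fun l => g (s l)) (fun l => e (s l))
      + th (fun l => g (s' l)) (fun l => e (s' l)) := by
  ext m
  simp only [res, coeff_mk, th, map_add]
  split_ifs with hm
  · have hfin : (Function.support (fun k => if e k = m then g k else 0)).Finite := by
      refine (Finset.Icc (-((m:ℤ)+1)) (m+1)).finite_toSet.subset fun k hk => ?_
      simp only [Function.mem_support, ne_eq, ite_eq_right_iff, Classical.not_imp] at hk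
      have := he k
      simp only [Finset.coe_Icc, Set.mem_Icc]
      omega
    rw [← finsum_mem_range (f := fun k => if e k = m then g k else 0) hs,
      ← finsum_mem_range (f := fun k => if e k = m then g k else 0) hs',
      ← finsum_mem_univ (fun k => if e k = m then g k else 0),
      ← finsum_mem_union' hd (hfin.subset Set.inter_subset_right)
        (hfin.subset Set.inter_subset_right)]
    refine finsum_mem_inter_support_eq' _ _ _ fun k hk => ?_
    simp only [Function.mem_support, ne_eq, ite_eq_right_iff, Classical.not_imp] at hk
    simp only [Set.mem_univ, true_iff, Set.mem_union]
    rw [← h, hk.1, hm]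
  · rw [finsum_eq_zero_of_forall_eq_zero, finsum_eq_zero_of_forall_eq_zero, add_zero]
    all_goals
      intro l
      rw [if_neg]
      intro hl
      refine hm ?_
      rw [← hl]
      refine (h _).2 ?_
      simp

lemma th_affine (g : ℤ → R) (e : ℤ → ℕ) (c p : ℕ) (hp : p ≠ 0) :
    th g (fun k => c + p * e k) = X ^ c * expand p hp (th g e) := by
  ext m
  rw [coeff_X_pow_mul']
  split_ifs with h
  · rw [coeff_expand]
    split_ifs with h2
    · obtain ⟨j, hj⟩ := h2
      rw [hj, Nat.mul_div_cancel_left _ (Nat.pos_of_ne_zero hp), th, th, coeff_mk, coeff_mk]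
      refine finsum_congr fun k => if_congr ?_ rfl rfl
      constructor
      · intro hk
        have : p * e k = p * j := by omega
        exact Nat.eq_of_mul_eq_mul_left (Nat.pos_of_ne_zero hp) this
      · intro hk
        rw [hk]; omega
    · rw [th, coeff_mk]
      refine finsum_eq_zero_of_forall_eq_zero fun k => if_neg fun hk => h2 ⟨e k, by omega⟩
  · rw [th, coeff_mk]
    refine finsum_eq_zero_of_forall_eq_zero fun k => if_neg fun hk => h (by omega)

lemma expand_JR (p N : ℕ) (hp : p ≠ 0) (hN : 1 ≤ N) : expand p hp (JR R N) = JR R (p * N) := by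
  have hN' : 1 ≤ p * N := Nat.mul_pos (Nat.pos_of_ne_zero hp) hN
  have h1 : CL (fun n => expand p hp (∏ i ∈ Finset.range n, (1 - (X : R⟦X⟧) ^ (N * (i+1)))))
      (expand p hp (JR R N)) := by
    intro M
    obtain ⟨N0, h⟩ := JR_CL' (R := R) N hN M
    refine ⟨N0, fun n hn => ?_⟩
    obtain ⟨y, hy⟩ := h n hn
    rw [← map_sub, hy, map_mul, map_pow, expand_X, ← pow_mul]
    exact Dvd.dvd.mul_right (pow_dvd_pow _ (Nat.le_mul_of_pos_left _ (Nat.pos_of_ne_zero hp))) _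
  refine CL.unique h1 ((JR_CL' (p * N) hN').congr' 0 fun n _ => ?_)
  rw [map_prod]
  refine Finset.prod_congr rfl fun i _ => ?_
  rw [map_sub, map_one, map_pow, expand_X, ← pow_mul, mul_assoc]

lemma eb (N c : ℤ) (hN : 1 ≤ N) (hc : 0 ≤ c) (hcN : c ≤ N) : ∀ k : ℤ, k.natAbs ≤ ex N c k + 1 :=
  fun k => ex_bound N c k hN hc hcN

lemma ex2 (N c k : ℤ) (hN : 1 ≤ N) (hc : 0 ≤ c) (hcN : c ≤ N) :
    2 * (ex N c k : ℤ) = N * (k * (k - 1)) + 2 * c * k := by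
  have := tri_two k
  rw [ex_cast N c k hN hc hcN]
  linear_combination N * this

lemma mod7_cases (k : ℤ) : ∃ l, k = 7*l ∨ k = 7*l+1 ∨ k = 7*l+2 ∨ k = 7*l+3 ∨ k = 7*l+4 ∨
    k = 7*l+5 ∨ k = 7*l-1 := ⟨(k+1)/7, by omega⟩

lemma ex31_mod (k : ℤ) : (k % 7 = 6 ∧ ex 3 1 k % 7 = 2) ∨
    (k % 7 ≠ 6 ∧ (ex 3 1 k % 7 = 0 ∨ ex 3 1 k % 7 = 1 ∨ ex 3 1 k % 7 = 5)) := by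
  have h := ex2 3 1 k (by norm_num) (by norm_num) (by norm_num)
  obtain ⟨l, hl⟩ := mod7_cases k
  rcases hl with rfl | rfl | rfl | rfl | rfl | rfl | rfl <;> ring_nf at h <;>
    generalize hs : l ^ 2 = s at h <;> ring_nf at * <;> omega

lemma ex10_mod (k : ℤ) : (k % 7 = 4 ∧ ex 1 0 k % 7 = 6) ∨ ((k % 7 = 0 ∨ k % 7 = 1) ∧ ex 1 0 k % 7 = 0)
   ∨ ((k % 7 = 2 ∨ k % 7 = 6) ∧ ex 1 0 k % 7 = 1) ∨ ((k % 7 = 3 ∨ k % 7 = 5) ∧ ex 1 0 k % 7 = 3) := by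
  have h := ex2 1 0 k (by norm_num) (by norm_num) (by norm_num)
  obtain ⟨l, hl⟩ := mod7_cases k
  rcases hl with rfl | rfl | rfl | rfl | rfl | rfl | rfl <;> ring_nf at h <;>
    generalize hs : l ^ 2 = s at h <;> ring_nf at * <;> omega

lemma ex21_mod (k : ℤ) : (k % 7 = 0 ∧ ex 2 1 k % 7 = 0) ∨
    (k % 7 ≠ 0 ∧ (ex 2 1 k % 7 = 1 ∨ ex 2 1 k % 7 = 2 ∨ ex 2 1 k % 7 = 4)) := by
  have h := ex2 2 1 k (by norm_num) (by norm_num) (by norm_num)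
  obtain ⟨l, hl⟩ := mod7_cases k
  rcases hl with rfl | rfl | rfl | rfl | rfl | rfl | rfl <;> ring_nf at h <;>
    generalize hs : l ^ 2 = s at h <;> ring_nf at * <;> omega

lemma exshift (N c k N' c' l : ℤ) (a p : ℕ) (hN : 1 ≤ N) (hc : 0 ≤ c) (hcN : c ≤ N)
    (hN' : 1 ≤ N') (hc' : 0 ≤ c') (hcN' : c' ≤ N')
    (h : N * (k * (k - 1)) + 2 * c * k = 2 * a + p * (N' * (l * (l - 1)) + 2 * c' * l)) :
    ex N c k = a + p * ex N' c' l := by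
  have h1 := ex2 N c k hN hc hcN
  have h2 := ex2 N' c' l hN' hc' hcN'
  zify
  rw [← h1, ← h2] at h
  linarith

lemma sgn7 (l c : ℤ) : ((((-1 : Rˣ) ^ (7 * l + c) : Rˣ)) : R) =
    (((-1 : Rˣ) ^ l : Rˣ) : R) * (((-1 : Rˣ) ^ c : Rˣ) : R) := by
  rw [zpow_add, zpow_mul, Units.val_mul]
  congr 3
  norm_num [zpow_ofNat]

lemma range7 (c k : ℤ) : k ∈ Set.range (fun l : ℤ => 7 * l + c) ↔ k % 7 = c % 7 := by
  constructor
  · rintro ⟨l, rfl⟩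
    simp only
    omega
  · intro h
    exact ⟨(k - c) / 7, by simp only; omega⟩

lemma inj7 (c : ℤ) : Function.Injective (fun l : ℤ => 7 * l + c) := by
  intro a b h
  simp only at h
  omega

lemma d1_zero (r : ℕ) (hr : r = 3 ∨ r = 4 ∨ r = 6) : res r (JR R 1) = 0 := by
  rw [c1]
  refine res_th_zero _ _ _ fun k => ?_
  have := ex31_mod k
  omega

lemma d1_two : res 2 (JR R 1) = - (X ^ 2 * JR R 49) := by
  rw [c1, res_th_one 2 _ _ (fun l => 7 * l + (-1)) (inj7 _)]
  · rw [← expand_JR 49 1 (by norm_num) le_rfl, c1, ← th_affine]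
    have hh : ∀ k : ℤ, k.natAbs ≤ (fun k => 2 + 49 * ex 3 1 k) k + 1 := fun k => by
      have := eb 3 1 (by norm_num) (by norm_num) (by norm_num) k
      simp only
      omega
    have h := th_smul (-1 : R) (fun k => (((-1 : Rˣ) ^ k : Rˣ) : R)) _ hh
    rw [map_neg, map_one, neg_one_mul] at h
    rw [← h]
    refine th_congr (fun l => ?_) fun l => ?_
    · rw [sgn7]
      simp
    · exact exshift _ _ _ _ _ _ 2 49 (by norm_num) (by norm_num) (by norm_num) (by norm_num)
        (by norm_num) (by norm_num) (by push_cast; ring)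
  · intro k
    rw [range7]
    have := ex31_mod k
    omega

lemma d2_zero (r : ℕ) (hr : r = 2 ∨ r = 4 ∨ r = 5) : res r (JR R 1 ^ 3) = 0 := by
  rw [c2]
  refine res_th_zero _ _ _ fun k => ?_
  have := ex10_mod k
  omega

lemma alt_zero : th (fun k => (((-1 : Rˣ) ^ k : Rˣ) : R)) (ex 1 0) = 0 := by
  have := jtp (R := R) (-1) 1 0 le_rfl (by norm_num)
  have h1 := PP_shift (-1 : R)
  simp only [Nat.cast_one, Nat.cast_zero, Units.val_neg, Units.val_one] at this
  rw [this, h1]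
  simp

lemma d2_six : res 6 (JR R 1 ^ 3) = - (7 * X ^ 6 * JR R 49 ^ 3) := by
  have e1 := eb 1 0 (by norm_num) (by norm_num) (by norm_num)
  rw [c2, res_th_one 6 _ _ (fun l => 7 * l + (-3)) (inj7 _)]
  · rw [← expand_JR 49 1 (by norm_num) le_rfl, ← map_pow, c2]
    have hh : ∀ k : ℤ, k.natAbs ≤ (fun k => 6 + 49 * ex 1 0 k) k + 1 := fun k => by
      have := e1 k
      simp only
      omega
    have h : th (fun k => (-7 : R) * (-((((-1 : ℤˣ) ^ k : ℤˣ) : ℤ) : R) * (k : R)) + (-3 : R) *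
       (((-1 : Rˣ) ^ k : Rˣ) : R)) (fun k => 6 + 49 * ex 1 0 k) = C (-7 : R) *
      (X ^ 6 * expand 49 (by norm_num) (th (fun k => -((((-1 : ℤˣ) ^ k : ℤˣ) : ℤ) : R) * (k : R)) (ex 1 0)))
        + C (-3 : R) * (X ^ 6 * expand 49 (by norm_num) (th (fun k => (((-1 : Rˣ) ^ k : Rˣ) : R)) (ex 1 0))) := by
      rw [← th_affine, ← th_affine, th_add _ _ _ hh, th_smul _ _ _ hh, th_smul _ _ _ hh]
    rw [alt_zero, map_zero, mul_zero, mul_zero, add_zero] at h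
    have h7 : C (-7 : R) = -7 := by rw [map_neg]; rfl
    rw [h7] at h
    rw [← neg_mul, ← neg_mul, mul_assoc, ← h]
    refine th_congr (fun l => ?_) fun l => ?_
    · rw [← neg_one_zpow_val, ← neg_one_zpow_val, sgn7]
      have : (((-1 : Rˣ) ^ (-3 : ℤ) : Rˣ) : R) = -1 := by
        have : (-1 : Rˣ) ^ (-3 : ℤ) = -1 := Odd.neg_one_zpow (by decide)
        rw [this]; simp
      rw [this]
      push_cast
      ring
    · exact exshift _ _ _ _ _ _ 6 49 (by norm_num) (by norm_num) (by norm_num) (by norm_num)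
        (by norm_num) (by norm_num) (by push_cast; ring)
  · intro k
    rw [range7]
    have := ex10_mod k
    omega

def Th (R : Type*) [CommRing R] : R⟦X⟧ := th (fun k => (((-1 : Rˣ) ^ k : Rˣ) : R)) (ex 2 1)
def Ps (R : Type*) [CommRing R] : R⟦X⟧ := th (fun _ => (1 : R)) (ex 1 0)

lemma d3_zero (r : ℕ) (hr : r = 3 ∨ r = 5 ∨ r = 6) : res r (Th R) = 0 := by
  refine res_th_zero _ _ _ fun k => ?_
  have := ex21_mod k
  omega

lemma d3_one : res 0 (Th R) = expand 49 (by norm_num) (Th R) := by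
  rw [Th, res_th_one 0 _ _ (fun l => 7 * l + 0) (inj7 _)]
  · have h := th_affine (fun k => (((-1 : Rˣ) ^ k : Rˣ) : R)) (ex 2 1) 0 49 (by norm_num)
    rw [pow_zero, one_mul] at h
    rw [← h]
    refine th_congr (fun l => ?_) fun l => ?_
    · rw [sgn7]
      simp
    · exact exshift _ _ _ _ _ _ 0 49 (by norm_num) (by norm_num) (by norm_num) (by norm_num)
        (by norm_num) (by norm_num) (by push_cast; ring)
  · intro k
    rw [range7]
    have := ex21_mod k
    omega

lemma d4_zero (r : ℕ) (hr : r = 2 ∨ r = 4 ∨ r = 5) : res r (Ps R) = 0 := by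
  refine res_th_zero _ _ _ fun k => ?_
  have := ex10_mod k
  omega

lemma d4_six : res 6 (Ps R) = X ^ 6 * expand 49 (by norm_num) (Ps R) := by
  rw [Ps, res_th_one 6 _ _ (fun l => 7 * l + (-3)) (inj7 _)]
  · rw [← th_affine]
    refine th_congr (fun l => rfl) fun l => ?_
    exact exshift _ _ _ _ _ _ 6 49 (by norm_num) (by norm_num) (by norm_num) (by norm_num)
        (by norm_num) (by norm_num) (by push_cast; ring)
  · intro k
    rw [range7]
    have := ex10_mod k
    omega

lemma d4_aux (r a : ℕ) (i j c : ℤ) (hc : 0 ≤ c) (hc7 : c ≤ 7) (hij : i % 7 ≠ j % 7) (hs : i + j = 1)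
    (h : ∀ k : ℤ, ex 1 0 k % 7 = r ↔ (k % 7 = i % 7 ∨ k % 7 = j % 7))
    (hi : ∀ l : ℤ, (7*l+i)*(7*l+i-1) = 2 * a + 7 * (7 * (l * (l-1)) + 2 * c * l)) :
    res r (Ps R) = 2 * X ^ a * expand 7 (by norm_num) (th (fun _ => (1 : R)) (ex 7 c)) := by
  have e1 := eb 1 0 (by norm_num) (by norm_num) (by norm_num)
  rw [Ps, res_th_two r _ _ e1 (fun l => 7 * l + i) (fun l => 7 * (-l) + j) (inj7 _)
    ((inj7 _).comp neg_injective)]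
  · rw [mul_assoc, ← th_affine, two_mul]
    congr 1
    · refine th_congr (fun l => rfl) fun l => ?_
      exact exshift _ _ _ _ _ _ a 7 (by norm_num) (by norm_num) (by norm_num) (by norm_num)
        hc hc7 (by linear_combination hi l)
    · refine th_congr (fun l => rfl) fun l => ?_
      refine exshift _ _ _ _ _ _ a 7 (by norm_num) (by norm_num) (by norm_num) (by norm_num)
        hc hc7 ?_
      obtain rfl : j = 1 - i := by omega
      linear_combination hi l
  · rw [Set.disjoint_left]
    rintro k hk ⟨l, hl⟩
    rw [range7] at hk
    simp only at hl
    omega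
  · intro k
    have : k ∈ Set.range (fun l : ℤ => 7 * (-l) + j) ↔ k ∈ Set.range (fun l : ℤ => 7 * l + j) := by
      constructor
      · rintro ⟨l, hl⟩; exact ⟨-l, hl⟩
      · rintro ⟨l, hl⟩; exact ⟨-l, by simpa using hl⟩
    rw [this, range7, range7, h]

lemma d4_0 : res 0 (Ps R) = 2 * X ^ 0 * expand 7 (by norm_num) (th (fun _ => (1 : R)) (ex 7 4)) :=
  d4_aux 0 0 1 0 4 (by norm_num) (by norm_num) (by norm_num) (by norm_num)
    (fun k => by have := ex10_mod k; omega) (fun l => by push_cast; ring)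
lemma d4_1 : res 1 (Ps R) = 2 * X ^ 1 * expand 7 (by norm_num) (th (fun _ => (1 : R)) (ex 7 5)) :=
  d4_aux 1 1 2 (-1) 5 (by norm_num) (by norm_num) (by norm_num) (by norm_num)
    (fun k => by have := ex10_mod k; omega) (fun l => by push_cast; ring)
lemma d4_3 : res 3 (Ps R) = 2 * X ^ 3 * expand 7 (by norm_num) (th (fun _ => (1 : R)) (ex 7 6)) :=
  d4_aux 3 3 3 (-2) 6 (by norm_num) (by norm_num) (by norm_num) (by norm_num)
    (fun k => by have := ex10_mod k; omega) (fun l => by push_cast; ring)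

end partD
end D5

namespace D5
open PowerSeries

section partE

abbrev F := LaurentSeries ℂ
abbrev io : ℂ⟦X⟧ →+* F := HahnSeries.ofPowerSeries ℤ ℂ

def Hm (r : ZMod 7) (x : F) : Prop := ∀ n : ℤ, x.coeff n ≠ 0 → (n : ZMod 7) = r

lemma Hm.add {r x y} (hx : Hm r x) (hy : Hm r y) : Hm r (x + y) := by
  intro n hn
  by_contra h
  have h1 : x.coeff n = 0 := by by_contra h'; exact h (hx n h')
  have h2 : y.coeff n = 0 := by by_contra h'; exact h (hy n h')
  exact hn (by rw [HahnSeries.coeff_add, h1, h2, add_zero])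
lemma Hm.neg {r x} (hx : Hm r x) : Hm r (-x) := by
  intro n hn
  exact hx n (fun h => hn (by rw [HahnSeries.coeff_neg, h, neg_zero]))
lemma Hm.sub {r x y} (hx : Hm r x) (hy : Hm r y) : Hm r (x - y) := by
  rw [sub_eq_add_neg]; exact hx.add hy.neg
lemma Hm.mul {r s x y} (hx : Hm r x) (hy : Hm s y) : Hm (r + s) (x * y) := by
  intro n hn
  rw [HahnSeries.coeff_mul] at hn
  obtain ⟨ij, hij, h⟩ := Finset.exists_ne_zero_of_sum_ne_zero hn
  rw [Finset.mem_antidiagonal] at hij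
  rw [← hx _ (left_ne_zero_of_mul h), ← hy _ (right_ne_zero_of_mul h), ← Int.cast_add, hij.2.2]
lemma Hm.cast {r s x} (hx : Hm r x) (h : r = s := by decide) : Hm s x := h ▸ hx
lemma Hm.eq {r x y} (hx : Hm r x) (h : y = x) : Hm r y := h ▸ hx
lemma Hm.zero {r} : Hm r 0 := by intro n hn; simp at hn
lemma Hm.one : Hm 0 1 := by
  intro n hn
  rw [HahnSeries.coeff_one] at hn
  split_ifs at hn with h
  · simp [h]
  · simp at hn
lemma Hm.pow {r x} (hx : Hm r x) (n : ℕ) : Hm (n * r) (x ^ n) := by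
  induction n with
  | zero => simpa using Hm.one
  | succ n ih => rw [pow_succ]; exact (ih.mul hx).cast (by push_cast; ring)
lemma Hm.nat (n : ℕ) : Hm 0 (n : F) := by
  induction n with
  | zero => simpa using Hm.zero
  | succ n ih => push_cast; exact ih.add Hm.one
lemma Hm.int (n : ℤ) : Hm 0 (n : F) := by
  rcases Int.eq_nat_or_neg n with ⟨m, rfl | rfl⟩
  · simpa using Hm.nat m
  · simpa using (Hm.nat m).neg

def E (r : ZMod 7) : F →+ F where
  toFun x := ⟨fun n => if (n : ZMod 7) = r then x.coeff n else 0,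
    x.isPWO_support.mono (by intro n hn; simp only [Function.mem_support] at hn ⊢; intro h; simp [h] at hn)⟩
  map_zero' := by ext; simp
  map_add' x y := by
    ext n
    simp only [HahnSeries.coeff_add]
    split_ifs <;> simp

lemma E_coeff (r x n) : (E r x).coeff n = if (n : ZMod 7) = r then x.coeff n else 0 := rfl
lemma Hm_E (r x) : Hm r (E r x) := by
  intro n hn
  rw [E_coeff] at hn
  by_contra h
  simp [h] at hn
lemma Hm.E {r x} (h : Hm r x) : E r x = x := by
  ext n
  rw [E_coeff]
  split_ifs with h1
  · rfl
  · by_contra h2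
    exact h1 (h n (Ne.symm h2))
lemma Hm.E' {r s x} (h : Hm r x) (hrs : r ≠ s := by decide) : D5.E s x = 0 := by
  ext n
  rw [E_coeff]
  split_ifs with h1
  · by_contra h2
    exact hrs (by rw [← h n h2, h1])
  · rfl
lemma E_sum (x : F) : x = ∑ r : ZMod 7, E r x := by
  ext n
  rw [HahnSeries.coeff_sum]
  simp only [E_coeff, Finset.sum_ite_eq, Finset.mem_univ, if_true]

lemma indep {x0 x1 x2 x3 x4 x5 x6 : F} (h0 : Hm 0 x0) (h1 : Hm 1 x1) (h2 : Hm 2 x2) (h3 : Hm 3 x3)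
    (h4 : Hm 4 x4) (h5 : Hm 5 x5) (h6 : Hm 6 x6) (h : x0 + x1 + x2 + x3 + x4 + x5 + x6 = 0) :
    x0 = 0 ∧ x1 = 0 ∧ x2 = 0 ∧ x3 = 0 ∧ x4 = 0 ∧ x5 = 0 ∧ x6 = 0 := by
  have key : ∀ r, E r x0 + E r x1 + E r x2 + E r x3 + E r x4 + E r x5 + E r x6 = 0 := by
    intro r
    rw [← map_add, ← map_add, ← map_add, ← map_add, ← map_add, ← map_add, h, map_zero]
  have k0 := key 0
  have k1 := key 1
  have k2 := key 2
  have k3 := key 3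
  have k4 := key 4
  have k5 := key 5
  have k6 := key 6
  rw [h0.E, h1.E', h2.E', h3.E', h4.E', h5.E', h6.E'] at k0
  rw [h1.E, h0.E', h2.E', h3.E', h4.E', h5.E', h6.E'] at k1
  rw [h2.E, h1.E', h0.E', h3.E', h4.E', h5.E', h6.E'] at k2
  rw [h3.E, h1.E', h2.E', h0.E', h4.E', h5.E', h6.E'] at k3
  rw [h4.E, h1.E', h2.E', h3.E', h0.E', h5.E', h6.E'] at k4
  rw [h5.E, h1.E', h2.E', h3.E', h4.E', h0.E', h6.E'] at k5
  rw [h6.E, h1.E', h2.E', h3.E', h4.E', h5.E', h0.E'] at k6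
  simp only [add_zero, zero_add] at *
  exact ⟨k0, k1, k2, k3, k4, k5, k6⟩

/-! Frobenius type substitution `q → q^p`. -/
def fr (p : ℕ) (hp : 0 < p) : F →+* F :=
  HahnSeries.embDomainRingHom (AddMonoidHom.mulLeft (p : ℤ))
    (fun a b h => by
      simp only [AddMonoidHom.coe_mulLeft] at h
      exact mul_left_cancel₀ (by exact_mod_cast hp.ne') h)
    (fun a b => by
      simp only [AddMonoidHom.coe_mulLeft]
      exact mul_le_mul_iff_of_pos_left (by exact_mod_cast hp))

lemma fr_coeff (p hp x) (n : ℤ) : (fr p hp x).coeff (p * n) = x.coeff n :=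
  HahnSeries.embDomain_mk_coeff _ _
lemma fr_coeff' (p : ℕ) (hp x) (n : ℤ) (h : ¬ (p : ℤ) ∣ n) : (fr p hp x).coeff n = 0 := by
  apply HahnSeries.embDomain_of_notMem_range
  rintro ⟨a, ha⟩
  exact h ⟨a, ha.symm⟩

lemma fr_io (p hp) (f : ℂ⟦X⟧) : fr p hp (io f) = io (expand p hp.ne' f) := by
  ext n
  by_cases h : (p : ℤ) ∣ n
  · obtain ⟨j, rfl⟩ := h
    rw [fr_coeff, PowerSeries.coeff_coe, PowerSeries.coeff_coe]
    have h0 : (p:ℤ) * j < 0 ↔ j < 0 := by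
      constructor
      · intro h; by_contra h'; push Not at h'; nlinarith [mul_nonneg (Int.natCast_nonneg p) h']
      · intro h; exact mul_neg_of_pos_of_neg (by exact_mod_cast hp) h
    simp only [h0]
    split_ifs
    · rfl
    · rw [Int.natAbs_mul, Int.natAbs_natCast, coeff_expand_mul]
  · rw [fr_coeff' _ _ _ _ h, PowerSeries.coeff_coe]
    split_ifs
    · rfl
    · rw [coeff_expand_of_not_dvd]
      rwa [← Int.natCast_dvd]

lemma fr_fr (p hp q hq x) : fr p hp (fr q hq x) = fr (p * q) (Nat.mul_pos hp hq) x := by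
  ext n
  by_cases h : ((p * q : ℕ) : ℤ) ∣ n
  · obtain ⟨j, rfl⟩ := h
    rw [fr_coeff]
    push_cast
    rw [mul_assoc, fr_coeff, fr_coeff]
  · rw [fr_coeff' _ _ _ _ h]
    by_cases h1 : (p : ℤ) ∣ n
    · obtain ⟨j, rfl⟩ := h1
      rw [fr_coeff, fr_coeff']
      intro h2
      push_cast at h
      exact h (mul_dvd_mul_left _ h2)
    · rw [fr_coeff' _ _ _ _ h1]

abbrev ph : F →+* F := fr 7 (by norm_num)
abbrev f2 : F →+* F := fr 2 (by norm_num)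

lemma f2_ph (x) : f2 (ph x) = ph (f2 x) := by
  rw [ph, f2, fr_fr, fr_fr]

lemma ph_inj : Function.Injective ph := ph.injective

lemma Hm_ph (x) : Hm 0 (ph x) := by
  intro n hn
  by_contra h
  apply hn
  apply fr_coeff'
  intro h'
  exact h ((ZMod.intCast_zmod_eq_zero_iff_dvd n 7).2 h')

lemma Hm.f2 {r x} (h : Hm r x) : Hm (2 * r) (f2 x) := by
  intro n hn
  by_cases h1 : ((2:ℕ) : ℤ) ∣ n
  · obtain ⟨j, rfl⟩ := h1
    rw [fr_coeff] at hn
    rw [← h j hn]; push_cast; rfl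
  · exact absurd (fr_coeff' _ _ _ _ h1) hn

def U : F →+ F where
  toFun x := HahnSeries.ofSuppBddBelow (fun n => x.coeff (7 * n)) (by
    obtain ⟨b, hb⟩ : BddBelow x.support :=
      ⟨x.order, fun n hn => HahnSeries.order_le_of_coeff_ne_zero hn⟩
    refine ⟨min b 0, fun n hn => ?_⟩
    have := hb (show (7 * n) ∈ x.support from hn)
    omega)
  map_zero' := by ext; simp
  map_add' x y := by ext; simp

lemma U_coeff (x n) : (U x).coeff n = x.coeff (7 * n) := rfl

lemma ph_U (x) : ph (U x) = E 0 x := by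
  ext n
  rw [E_coeff]
  by_cases h : (7 : ℤ) ∣ n
  · rw [if_pos ((ZMod.intCast_zmod_eq_zero_iff_dvd n 7).2 h)]
    obtain ⟨j, rfl⟩ := h
    exact (fr_coeff 7 _ (U x) j).trans (U_coeff x j)
  · rw [if_neg (fun h' => h ((ZMod.intCast_zmod_eq_zero_iff_dvd n 7).1 h')), fr_coeff' _ _ _ _ h]

lemma E_ph (x y) : E 0 (ph x * y) = ph x * E 0 y := by
  conv_lhs => rw [E_sum y]
  rw [Finset.mul_sum, map_sum, Finset.sum_eq_single 0]
  · exact (((Hm_ph x).mul (Hm_E 0 y)).cast).E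
  · intro r _ hr
    exact ((Hm_ph x).mul (Hm_E r y)).E' (by simpa using hr)
  · simp

lemma U_ph (x y) : U (ph x * y) = x * U y := by
  apply ph_inj
  rw [ph_U, E_ph, map_mul, ph_U]

lemma U_ph' (x) : U (ph x) = x := by
  apply ph_inj
  rw [ph_U, (Hm_ph x).E]

/-- criterion -/
lemma U_eq {x y : F} (h : E 0 x = ph y) : U x = y := by
  apply ph_inj
  rw [ph_U, h]

lemma Hm_res (r : ℕ) (f : ℂ⟦X⟧) : Hm r (io (res r f)) := by
  intro n hn
  rw [PowerSeries.coeff_coe] at hn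
  split_ifs at hn with h
  · simp at hn
  · rw [res, coeff_mk] at hn
    split_ifs at hn with h1
    · have : n = ((n.natAbs : ℕ) : ℤ) := by omega
      rw [this, Int.cast_natCast, ← h1, ZMod.natCast_mod]
    · simp at hn

def q : F := io X
lemma q_ne : q ≠ 0 := by
  rw [q, HahnSeries.ofPowerSeries_X]
  simp
lemma Hm_qinv (n : ℕ) : Hm (-n) ((q ^ n)⁻¹) := by
  have h1 : q ^ n * HahnSeries.single (-n : ℤ) (1:ℂ) = 1 := by
    rw [q, ← map_pow, HahnSeries.ofPowerSeries_X_pow, HahnSeries.single_mul_single]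
    simp
  rw [← eq_inv_of_mul_eq_one_right h1]
  intro k hk
  rw [HahnSeries.coeff_single] at hk
  split_ifs at hk with h
  · rw [h]; push_cast; rfl
  · simp at hk

def j (N : ℕ) : F := io (JR ℂ N)
lemma j_ne (N : ℕ) (hN : 1 ≤ N := by norm_num) : j N ≠ 0 := ((JR_unit N hN).map io).ne_zero
lemma fr_j (p hp N) (hN : 1 ≤ N := by norm_num) : fr p hp (j N) = j (p * N) := by
  rw [j, fr_io, expand_JR _ _ _ hN, j]
lemma fr_q (p hp) : fr p hp q = q ^ p := by
  rw [q, fr_io, expand_X, map_pow]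
lemma ph_j (N) (hN : 1 ≤ N := by norm_num) : ph (j N) = j (7 * N) := fr_j _ _ _ hN
lemma f2_j (N) (hN : 1 ≤ N := by norm_num) : f2 (j N) = j (2 * N) := fr_j _ _ _ hN

end partE
end D5

namespace D5
open PowerSeries

section partF

def iq : F := (q ^ 2 * j 49)⁻¹
def u : F := io (res 0 (JR ℂ 1)) * iq
def v : F := io (res 1 (JR ℂ 1)) * iq
def w : F := io (res 5 (JR ℂ 1)) * iq
def Z : F := j 1 * iq
def a : F := f2 u
def b : F := f2 v
def d : F := f2 w
def Z2 : F := f2 Z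

lemma iq_ne : iq ≠ 0 := inv_ne_zero (mul_ne_zero (pow_ne_zero _ q_ne) (j_ne 49))
lemma iq_mul : q ^ 2 * j 49 * iq = 1 :=
  mul_inv_cancel₀ (mul_ne_zero (pow_ne_zero _ q_ne) (j_ne 49))
lemma Z_ne : Z ≠ 0 := mul_ne_zero (j_ne 1) iq_ne
lemma Z2_ne : Z2 ≠ 0 := (map_ne_zero f2).2 Z_ne

lemma Hm_iq : Hm 5 iq := by
  have h : iq = (q ^ 2)⁻¹ * ph (j 7)⁻¹ := by
    rw [iq, mul_inv, map_inv₀, ph_j 7]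
  rw [h]
  exact ((Hm_qinv 2).mul (Hm_ph _)).cast
lemma hu : Hm 5 u := ((Hm_res 0 _).mul Hm_iq).cast
lemma hv : Hm 6 v := ((Hm_res 1 _).mul Hm_iq).cast
lemma hw : Hm 3 w := ((Hm_res 5 _).mul Hm_iq).cast
lemma ha : Hm 3 a := hu.f2.cast
lemma hb : Hm 5 b := hv.f2.cast
lemma hd : Hm 6 d := hw.f2.cast

instance : CharZero F := charZero_of_injective_ringHom (f := io.comp (PowerSeries.C (R := ℂ)))
    (HahnSeries.ofPowerSeries_injective.comp PowerSeries.C_injective)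

def Mo (n : ℤ) (i j k l m p : ℕ) : F := n * u ^ i * v ^ j * w ^ k * a ^ l * b ^ m * d ^ p

lemma mon {n : ℤ} {i j k l m p : ℕ} {r : ZMod 7}
    (h : (i * 5 + j * 6 + k * 3 + l * 3 + m * 5 + p * 6 : ZMod 7) = r := by decide) :
    Hm r (Mo n i j k l m p) :=
  (((((((Hm.int n).mul (hu.pow i)).mul (hv.pow j)).mul (hw.pow k)).mul (ha.pow l)).mul
    (hb.pow m)).mul (hd.pow p)).cast (by rw [← h]; ring)

lemma mon3 {r x y z} (h1 : Hm r x) (h2 : Hm r y) (h3 : Hm r z) : Hm r (x + y + z) := (h1.add h2).add h3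

lemma Z_eq : Z = u + v + w - 1 := by
  have h := res_sum (JR ℂ 1)
  rw [d1_zero 3 (by simp), d1_zero 4 (by simp), d1_zero 6 (by simp), d1_two] at h
  have h2 := congrArg io h
  simp only [map_add, map_neg, map_mul, map_pow, map_zero] at h2
  have h3 := iq_mul
  simp only [q, j] at h3
  rw [Z, u, v, w, j, h2]
  linear_combination -h3
lemma Z2_eq : Z2 = a + b + d - 1 := by
  rw [Z2, Z_eq]; simp [a, b, d]

lemma Z_cube : ∃ s1 s2 s4, Hm 1 s1 ∧ Hm 2 s2 ∧ Hm 4 s4 ∧ Z ^ 3 = -7 + s1 + s2 + s4 := by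
  have h := res_sum (JR ℂ 1 ^ 3)
  rw [d2_zero 2 (by simp), d2_zero 4 (by simp), d2_zero 5 (by simp), d2_six] at h
  have h2 := congrArg io h
  simp only [map_add, map_neg, map_mul, map_pow, map_zero] at h2
  have h3 := iq_mul
  simp only [q, j] at h3
  have h7 : io 7 = 7 := map_ofNat io 7
  refine ⟨io (res 0 (JR ℂ 1 ^ 3)) * iq ^ 3, io (res 1 (JR ℂ 1 ^ 3)) * iq ^ 3,
    io (res 3 (JR ℂ 1 ^ 3)) * iq ^ 3, ((Hm_res 0 _).mul (Hm_iq.pow 3)).cast,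
    ((Hm_res 1 _).mul (Hm_iq.pow 3)).cast, ((Hm_res 3 _).mul (Hm_iq.pow 3)).cast, ?_⟩
  rw [Z, mul_pow, j, h2, h7]
  generalize io X = x at *
  generalize io (JR ℂ 49) = y at *
  have h4 : (x ^ 2 * y * iq) ^ 3 = 1 := by rw [h3, one_pow]
  linear_combination -7 * h4

lemma uvw_rel : u * v * w = -1 ∧ u = v ^ 2 - v * w ^ 2 ∧ v = w ^ 2 - w * u ^ 2 ∧ w = u ^ 2 - u * v ^ 2 := by
  obtain ⟨s1, s2, s4, h1, h2, h4, h⟩ := Z_cube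
  rw [Z_eq] at h
  have := indep
    (x0 := Mo (6) 1 1 1 0 0 0 + Mo (6) 0 0 0 0 0 0)
    (x1 := Mo (1) 3 0 0 0 0 0 + Mo (3) 0 2 1 0 0 0 + Mo (-6) 1 0 1 0 0 0 - s1)
    (x2 := Mo (1) 0 0 3 0 0 0 + Mo (3) 2 1 0 0 0 0 + Mo (-6) 0 1 1 0 0 0 - s2)
    (x3 := Mo (-3) 2 0 0 0 0 0 + Mo (3) 1 2 0 0 0 0 + Mo (3) 0 0 1 0 0 0)
    (x4 := Mo (1) 0 3 0 0 0 0 + Mo (3) 1 0 2 0 0 0 + Mo (-6) 1 1 0 0 0 0 - s4)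
    (x5 := Mo (-3) 0 2 0 0 0 0 + Mo (3) 0 1 2 0 0 0 + Mo (3) 1 0 0 0 0 0)
    (x6 := Mo (-3) 0 0 2 0 0 0 + Mo (3) 2 0 1 0 0 0 + Mo (3) 0 1 0 0 0 0)
    (Hm.add mon mon) ((mon3 mon mon mon).sub h1)
    ((mon3 mon mon mon).sub h2) (mon3 mon mon mon)
    ((mon3 mon mon mon).sub h4) (mon3 mon mon mon)
    (mon3 mon mon mon) (by simp only [Mo]; push_cast; linear_combination h)
  obtain ⟨k0, -, -, k3, -, k5, k6⟩ := this
  simp only [Mo] at k0 k3 k5 k6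
  push_cast at k0 k3 k5 k6
  refine ⟨?_, ?_, ?_, ?_⟩
  · linear_combination (1/6) * k0
  · linear_combination (1/3) * k5
  · linear_combination (1/3) * k6
  · linear_combination (1/3) * k3

lemma abd_rel : a * b * d = -1 ∧ a = b ^ 2 - b * d ^ 2 ∧ b = d ^ 2 - d * a ^ 2 ∧ d = a ^ 2 - a * b ^ 2 := by
  obtain ⟨h1, h2, h3, h4⟩ := uvw_rel
  refine ⟨?_, ?_, ?_, ?_⟩
  · simpa [a, b, d] using congrArg f2 h1
  · simpa [a, b, d] using congrArg f2 h2
  · simpa [a, b, d] using congrArg f2 h3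
  · simpa [a, b, d] using congrArg f2 h4

end partF
end D5

namespace D5
open PowerSeries

section partG

lemma G_ex : ∃ g1 g2 g4, Hm 1 g1 ∧ Hm 2 g2 ∧ Hm 4 g4 ∧ (1 + g1 + g2 + g4) * Z2 = Z ^ 2 := by
  have h := res_sum (Th ℂ)
  rw [d3_zero 3 (by simp), d3_zero 5 (by simp), d3_zero 6 (by simp), d3_one] at h
  have h2 := congrArg io h
  simp only [map_add, map_zero] at h2
  have h3 := congrArg io (c3 (R := ℂ))
  change io (JR ℂ 2 * Th ℂ) = _ at h3
  rw [map_mul, map_pow] at h3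
  change j 2 * io (Th ℂ) = j 1 ^ 2 at h3
  have h4 := congrArg (fr 49 (by norm_num)) h3
  rw [map_mul, map_pow, fr_j _ _ 2, fr_j _ _ 1, fr_io] at h4
  norm_num at h4
  have hk : Hm 0 (j 98 * (j 49 ^ 2)⁻¹) := by
    refine (Hm_ph (j 14 * (j 7 ^ 2)⁻¹)).eq ?_
    rw [map_mul, map_inv₀, map_pow, ph_j 14, ph_j 7]
  refine ⟨io (res 1 (Th ℂ)) * (j 98 * (j 49 ^ 2)⁻¹), io (res 2 (Th ℂ)) * (j 98 * (j 49 ^ 2)⁻¹),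
    io (res 4 (Th ℂ)) * (j 98 * (j 49 ^ 2)⁻¹), ((Hm_res 1 _).mul hk).cast,
    ((Hm_res 2 _).mul hk).cast, ((Hm_res 4 _).mul hk).cast, ?_⟩
  have h5 := j_ne 49
  have h6 := j_ne 98
  have hq := q_ne
  have e : 1 + io (res 1 (Th ℂ)) * (j 98 * (j 49 ^ 2)⁻¹) + io (res 2 (Th ℂ)) * (j 98 * (j 49 ^ 2)⁻¹)
     + io (res 4 (Th ℂ)) * (j 98 * (j 49 ^ 2)⁻¹) = io (Th ℂ) * (j 98 * (j 49 ^ 2)⁻¹) := by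
    rw [h2]
    field_simp
    linear_combination -h4
  rw [e, Z2, Z, iq, map_mul, map_inv₀, map_mul, map_pow, f2_j 1, f2_j 49, fr_q]
  norm_num
  field_simp
  linear_combination h3

def ee : F := q ^ 2 * j 1 * j 14 ^ 7 / (j 2 * j 7 ^ 7)

lemma H_ex : ∃ h1 h2 h4, Hm 1 h1 ∧ Hm 2 h2 ∧ Hm 4 h4 ∧ (1 + h1 + h2 + h4) * Z = Z2 ^ 2 ∧
    h1 * h2 * h4 * ph ee = 1 := by
  have h := res_sum (Ps ℂ)
  rw [d4_zero 2 (by simp), d4_zero 4 (by simp), d4_zero 5 (by simp), d4_six] at h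
  have h2 := congrArg io h
  simp only [map_add, map_zero, map_mul] at h2
  have h3 := congrArg io (c4 (R := ℂ))
  change io (JR ℂ 1 * Ps ℂ) = _ at h3
  have h2' : io 2 = 2 := map_ofNat io 2
  rw [map_mul, map_mul, map_pow, h2'] at h3
  change j 1 * io (Ps ℂ) = 2 * j 2 ^ 2 at h3
  have h4 := congrArg (fr 49 (by norm_num)) h3
  have h49 : fr 49 (by norm_num) 2 = 2 := map_ofNat _ 2
  rw [map_mul, map_mul, map_pow, fr_j _ _ 1, fr_j _ _ 2, fr_io, h49] at h4
  norm_num at h4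
  have hk : Hm 1 ((q ^ 6)⁻¹ * (j 49 * (2 * j 98 ^ 2)⁻¹)) := by
    have := (Hm_qinv 6).mul (Hm_ph (j 7 * (2 * j 14 ^ 2)⁻¹))
    have h7 : ph 2 = 2 := map_ofNat ph 2
    rw [map_mul, map_inv₀, map_mul, map_pow, ph_j 14, ph_j 7, h7] at this
    exact this.cast
  have h5 := j_ne 49
  have h6 := j_ne 98
  have hq := q_ne
  refine ⟨io (res 0 (Ps ℂ)) * ((q ^ 6)⁻¹ * (j 49 * (2 * j 98 ^ 2)⁻¹)), io (res 1 (Ps ℂ)) * ((q ^ 6)⁻¹ * (j 49 * (2 * j 98 ^ 2)⁻¹)),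
    io (res 3 (Ps ℂ)) * ((q ^ 6)⁻¹ * (j 49 * (2 * j 98 ^ 2)⁻¹)), ((Hm_res 0 _).mul hk).cast,
    ((Hm_res 1 _).mul hk).cast, ((Hm_res 3 _).mul hk).cast, ?_, ?_⟩
  · have e : 1 + io (res 0 (Ps ℂ)) * ((q ^ 6)⁻¹ * (j 49 * (2 * j 98 ^ 2)⁻¹)) + io (res 1 (Ps ℂ)) * ((q ^ 6)⁻¹ * (j 49 * (2 * j 98 ^ 2)⁻¹))
       + io (res 3 (Ps ℂ)) * ((q ^ 6)⁻¹ * (j 49 * (2 * j 98 ^ 2)⁻¹)) = io (Ps ℂ) * ((q ^ 6)⁻¹ * (j 49 * (2 * j 98 ^ 2)⁻¹)) := by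
      rw [h2, map_pow]
      change _ = ((_ + (q ^ 6 * _)) * _)
      field_simp
      linear_combination -q ^ 6 * h4
    rw [e, Z2, Z, iq, map_mul, map_inv₀, map_mul, map_pow, f2_j 1, f2_j 49, fr_q]
    norm_num
    field_simp
    linear_combination h3
  · have h7 := congrArg ph (congrArg io (c5 (R := ℂ)))
    simp only [map_mul, map_pow] at h7
    change _ * (ph (j 1) * ph (j 14)) = ph (j 7) ^ 4 * ph (j 2) at h7
    rw [ph_j 1, ph_j 14, ph_j 7, ph_j 2] at h7
    simp only [ph, fr_io] at h7
    rw [d4_0, d4_1, d4_3, ee, map_div₀]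
    simp only [map_mul, map_pow, h2']
    change _ * (ph q ^ 2 * ph (j 1) * ph (j 14) ^ 7 / (ph (j 2) * ph (j 7) ^ 7)) = 1
    rw [ph_j 1, ph_j 14, ph_j 7, ph_j 2, fr_q]
    change (2 * q ^ 0 * _ * _) * (2 * q ^ 1 * _ * _) * (2 * q ^ 3 * _ * _) * _ = 1
    have h8 := j_ne 7
    have h9 := j_ne 14
    norm_num at h7 ⊢
    field_simp
    linear_combination h7

lemma JR1_coeff0 : coeff 0 (JR ℂ 1) = 1 := by simp [JR, ip]
lemma JR1_coeff1 : coeff 1 (JR ℂ 1) = -1 := by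
  simp [JR, ip, Finset.prod_range_succ]
  rw [show (1 - X) * (1 - X ^ 2 : ℂ⟦X⟧) = 1 - X + X ^ 2 * (X - 1) by ring]
  simp [coeff_X_pow_mul', coeff_one]

lemma wd_ne : w * d ≠ v * a := by
  intro h
  have h1 : io (res 5 (JR ℂ 1)) * f2 (io (res 5 (JR ℂ 1))) = io (res 1 (JR ℂ 1)) * f2 (io (res 0 (JR ℂ 1))) := by
    have h2 : iq * f2 iq ≠ 0 := mul_ne_zero iq_ne ((map_ne_zero f2).2 iq_ne)
    apply mul_right_cancel₀ h2
    rw [w, d, v, a, w, u, map_mul, map_mul] at h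
    linear_combination h
  rw [fr_io, fr_io, ← map_mul, ← map_mul] at h1
  have h2 := congrArg (coeff 1) (HahnSeries.ofPowerSeries_injective h1)
  rw [coeff_mul, coeff_mul, Finset.Nat.antidiagonal_succ] at h2
  simp [res, JR1_coeff1, JR1_coeff0] at h2

lemma u_ne : u ≠ 0 := by intro h; have := uvw_rel.1; rw [h] at this; norm_num at this
lemma v_ne : v ≠ 0 := by intro h; have := uvw_rel.1; rw [h] at this; norm_num at this
lemma w_ne : w ≠ 0 := by intro h; have := uvw_rel.1; rw [h] at this; norm_num at this
lemma a_ne : a ≠ 0 := by intro h; have := abd_rel.1; rw [h] at this; norm_num at this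
lemma b_ne : b ≠ 0 := by intro h; have := abd_rel.1; rw [h] at this; norm_num at this
lemma d_ne : d ≠ 0 := by intro h; have := abd_rel.1; rw [h] at this; norm_num at this

lemma g_rel : u*v*(v+d+w*a) + w*a*d*(u+b+v*d) = 0 ∧ u*w*(u+b+v*d)+v*d*b*(w+a+u*b) = 0 := by
  obtain ⟨g1, g2, g4, h1, h2, h4, h⟩ := G_ex
  rw [Z_eq, Z2_eq] at h
  obtain ⟨-, k1, k2, k3, k4, k5, k6⟩ := indep
    (x0 := -1 + g1 * d + g2 * b + g4 * a - 1) (x1 := -g1 + g2 * d - Mo 2 1 0 1 0 0 0)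
    (x2 := -g2 + g4 * b - Mo 2 0 1 1 0 0 0)
    (x3 := Mo 1 0 0 0 1 0 0 + g4 * d + Mo 2 0 0 1 0 0 0 - Mo 1 2 0 0 0 0 0)
    (x4 := -g4 + g1 * a - Mo 2 1 1 0 0 0 0)
    (x5 := Mo 1 0 0 0 0 1 0 + g2 * a + Mo 2 1 0 0 0 0 0 - Mo 1 0 2 0 0 0 0)
    (x6 := Mo 1 0 0 0 0 0 1 + g1 * b + Mo 2 0 1 0 0 0 0 - Mo 1 0 0 2 0 0 0)
    ((((Hm.one.neg.add (h1.mul hd).cast).add (h2.mul hb).cast).add (h4.mul ha).cast).sub Hm.one)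
    ((h1.neg.add (h2.mul hd).cast).sub mon) ((h2.neg.add (h4.mul hb).cast).sub mon)
    ((mon3 mon (h4.mul hd).cast mon).sub mon) ((h4.neg.add (h1.mul ha).cast).sub mon)
    ((mon3 mon (h2.mul ha).cast mon).sub mon) ((mon3 mon (h1.mul hb).cast mon).sub mon)
    (by simp only [Mo]; push_cast; linear_combination h)
  simp only [Mo] at k1 k2 k3 k4 k5 k6
  push_cast at k1 k2 k3 k4 k5 k6
  obtain ⟨r1, r2, r3, r4⟩ := uvw_rel
  obtain ⟨s1, s2, s3, s4⟩ := abd_rel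
  have two : (2 : F) ≠ 0 := two_ne_zero
  have e4 : g4 = -(v*w*a*d+u*w*a+u*v) := by
    apply mul_left_cancel₀ two
    linear_combination -k4 - a * k1 - a * d * k2 + g4 * s1
  have e1 : g1 = -(u*w+v*w*d+u*v*b*d) := by
    apply mul_left_cancel₀ two
    linear_combination -k1 - d * k2 - d * b * k4 + g1 * s1
  rw [e4] at k3
  rw [e1] at k6
  constructor
  · linear_combination -k3 + r4 + a * r1 + w * s1
  · linear_combination -k6 + r3 + d * r1 + v * s1

lemma h_rel : ∃ h1 h2 h4, (1 + h1 + h2 + h4) * Z = Z2 ^ 2 ∧ h1 * h2 * h4 * ph ee = 1 ∧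
    h1 = -(a*b+d*a*v+b*d*u*v) ∧ h2 = -(a*b*w*u+b*d*u+d*a) ∧ h4 = -(d*a*w*v+b*a*w+b*d) ∧
    b*d*(v+d+w*a) + a*w*v*(u+b+v*d) = 0 := by
  obtain ⟨g1, g2, g4, h1, h2, h4, h, he⟩ := H_ex
  have h' := h
  rw [Z_eq, Z2_eq] at h
  obtain ⟨-, k1, k2, k3, k4, k5, k6⟩ := indep
    (x0 := -1 + g1 * v + g2 * u + g4 * w - 1) (x1 := -g1 + g2 * v - Mo 2 0 0 0 1 1 0)
    (x2 := -g2 + g4 * u - Mo 2 0 0 0 1 0 1)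
    (x3 := Mo 1 0 0 1 0 0 0 + g4 * v + Mo 2 0 0 0 1 0 0 - Mo 1 0 0 0 0 2 0)
    (x4 := -g4 + g1 * w - Mo 2 0 0 0 0 1 1)
    (x5 := Mo 1 1 0 0 0 0 0 + g2 * w + Mo 2 0 0 0 0 1 0 - Mo 1 0 0 0 0 0 2)
    (x6 := Mo 1 0 1 0 0 0 0 + g1 * u + Mo 2 0 0 0 0 0 1 - Mo 1 0 0 0 2 0 0)
    ((((Hm.one.neg.add (h1.mul hv).cast).add (h2.mul hu).cast).add (h4.mul hw).cast).sub Hm.one)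
    ((h1.neg.add (h2.mul hv).cast).sub mon) ((h2.neg.add (h4.mul hu).cast).sub mon)
    ((mon3 mon (h4.mul hv).cast mon).sub mon) ((h4.neg.add (h1.mul hw).cast).sub mon)
    ((mon3 mon (h2.mul hw).cast mon).sub mon) ((mon3 mon (h1.mul hu).cast mon).sub mon)
    (by simp only [Mo]; push_cast; linear_combination h)
  simp only [Mo] at k1 k2 k3 k4 k5 k6
  push_cast at k1 k2 k3 k4 k5 k6
  obtain ⟨r1, r2, r3, r4⟩ := uvw_rel
  obtain ⟨s1, s2, s3, s4⟩ := abd_rel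
  have two : (2 : F) ≠ 0 := two_ne_zero
  have e4 : g4 = -(d*a*w*v+b*a*w+b*d) := by
    apply mul_left_cancel₀ two
    linear_combination -k4 - w * k1 - w * v * k2 + g4 * r1
  have e1 : g1 = -(a*b+d*a*v+b*d*u*v) := by
    apply mul_left_cancel₀ two
    linear_combination -k1 - v * k2 - v * u * k4 + g1 * r1
  have e2 : g2 = -(a*b*w*u+b*d*u+d*a) := by
    apply mul_left_cancel₀ two
    linear_combination -k2 - u * k4 - w * u * k1 + g2 * r1
  refine ⟨g1, g2, g4, h', he, e1, e2, e4, ?_⟩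
  rw [e4] at k3
  linear_combination -k3 + s2 + w * s1 + a * r1

lemma eps : w + a + u*b = 0 ∧ v + d + w*a = 0 ∧ u + b + v*d = 0 := by
  obtain ⟨g1, g2⟩ := g_rel
  obtain ⟨h1, h2, h4, -, -, -, -, -, h3⟩ := h_rel
  obtain ⟨r1, -⟩ := uvw_rel
  obtain ⟨s1, -⟩ := abd_rel
  have e3 : u + b + v*d = 0 := by
    have : w * a * (w * d - v * a) * (u + b + v*d) = 0 := by
      linear_combination w * g1 - a * h3 - (v+d+w*a) * r1 + (v+d+w*a) * s1
    rcases mul_eq_zero.1 this with h | h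
    · exact absurd h (mul_ne_zero (mul_ne_zero w_ne a_ne) (sub_ne_zero.2 wd_ne))
    · exact h
  have e2 : v + d + w*a = 0 := by
    have : u * v * (v + d + w*a) = 0 := by linear_combination g1 - w*a*d*e3
    rcases mul_eq_zero.1 this with h | h
    · exact absurd h (mul_ne_zero u_ne v_ne)
    · exact h
  have e1 : w + a + u*b = 0 := by
    have : v * d * b * (w + a + u*b) = 0 := by linear_combination g2 - u*w*e3
    rcases mul_eq_zero.1 this with h | h
    · exact absurd h (mul_ne_zero (mul_ne_zero v_ne d_ne) b_ne)
    · exact h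
  exact ⟨e1, e2, e3⟩

end partG
end D5

namespace D5
open PowerSeries

section partH

def la {α : Type} (f : α → α → α) : List α → List α → List α
  | [], y => y
  | x, [] => x
  | a :: x, b :: y => f a b :: la f x y
def lm {α : Type} (f g : α → α → α) (z : α) : List α → List α → List α
  | [], _ => []
  | a :: x, y => la f (y.map (g a)) (z :: lm f g z x y)

abbrev P1 := List Int
abbrev P2 := List P1
abbrev P3 := List P2
def add1 : P1 → P1 → P1 := la (fun x y => x + y)
def mul1 : P1 → P1 → P1 := lm (fun x y => x + y) (fun x y => x * y) 0
def add2 : P2 → P2 → P2 := la add1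
def mul2 : P2 → P2 → P2 := lm add1 mul1 []
def add3 : P3 → P3 → P3 := la add2
def mul3 : P3 → P3 → P3 := lm add2 mul2 []

def z1 (l : P1) : Bool := l.all (fun x => x == 0)
def red : P2 → P1 × P1 × P1
  | [] => ([], [], [])
  | a :: l => match red l with
    | (x, y, z) => (add1 a (mul1 [0, -1, -1] z), add1 x (mul1 [0, 1] z), add1 y (mul1 [1, -1] z))
def isz (a : P2) : Bool := match red a with
  | (x, y, z) => z1 x && z1 y && z1 z
def rot : List P2 → P3 → List P2
  | l, [] => l
  | [], _ :: _ => []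
  | a :: l, c :: cs => rot (l ++ [add2 (mul2 [[0, 0, 0, 0, 1, 1]] a) c]) cs
def zs : List P2 := [[], [], [], [], [], [], []]
def chkA (p : P3) : Bool := (rot zs p).all isz
def chkr : ℕ → List P2 → Bool
  | _, [] => true
  | n, a :: l => (n % 7 != 0 || isz a) && chkr (n + 1) l
def chk0 (p : P3) : Bool := chkr p.length (rot zs p)

section ev
variable {α : Type} {K : Type*} [CommRing K]
def el (x : K) (f : α → K) : List α → K
  | [] => 0
  | a :: l => f a + x * el x f l

lemma el_la (x : K) (f : α → K) (g : α → α → α) (hg : ∀ a b, f (g a b) = f a + f b) (l l' : List α) :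
    el x f (la g l l') = el x f l + el x f l' := by
  induction l generalizing l' with
  | nil => simp [la, el]
  | cons a l ih =>
    cases l' with
    | nil => simp [la, el]
    | cons b l' => simp only [la, el, hg, ih]; ring
lemma el_map (x : K) (f : α → K) (h : α → α) (c : K) (hg : ∀ b, f (h b) = c * f b) (l : List α) :
    el x f (l.map h) = c * el x f l := by
  induction l with
  | nil => simp [el]
  | cons a l ih => simp only [List.map_cons, el, hg, ih]; ring
lemma el_lm (x : K) (f : α → K) (g h : α → α → α) (z : α) (hz : f z = 0)
    (hg : ∀ a b, f (g a b) = f a + f b) (hh : ∀ a b, f (h a b) = f a * f b) (l l' : List α) :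
    el x f (lm g h z l l') = el x f l * el x f l' := by
  induction l with
  | nil => simp [lm, el]
  | cons a l ih =>
    rw [lm, el_la x f g hg, el_map x f (h a) (f a) (hh a)]
    simp only [el, hz, ih]; ring

def e1 (m : K) : P1 → K := el m (fun n : ℤ => (n : K))
def e2 (m r : K) : P2 → K := el r (e1 m)
def e3 (W m r : K) : P3 → K := el W (e2 m r)

lemma e1_add (m : K) (l l') : e1 m (add1 l l') = e1 m l + e1 m l' :=
  el_la _ _ _ (by intros; push_cast; rfl) _ _
lemma e1_mul (m : K) (l l') : e1 m (mul1 l l') = e1 m l * e1 m l' :=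
  el_lm _ _ _ _ _ (by simp) (by intros; push_cast; rfl) (by intros; push_cast; rfl) _ _
lemma e2_add (m r : K) (l l') : e2 m r (add2 l l') = e2 m r l + e2 m r l' :=
  el_la _ _ _ (e1_add m) _ _
lemma e2_mul (m r : K) (l l') : e2 m r (mul2 l l') = e2 m r l * e2 m r l' :=
  el_lm r (e1 m) _ _ _ rfl (e1_add m) (e1_mul m) _ _
lemma e3_add (W m r : K) (l l') : e3 W m r (add3 l l') = e3 W m r l + e3 W m r l' :=
  el_la _ _ _ (e2_add m r) _ _
lemma e3_mul (W m r : K) (l l') : e3 W m r (mul3 l l') = e3 W m r l * e3 W m r l' :=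
  el_lm W (e2 m r) _ _ _ rfl (e2_add m r) (e2_mul m r) _ _

lemma z1_sound (m : K) (l : P1) (h : z1 l = true) : e1 m l = 0 := by
  induction l with
  | nil => rfl
  | cons a l ih =>
    simp only [z1, List.all_cons, Bool.and_eq_true, beq_iff_eq] at h
    change ((a : ℤ) : K) + m * e1 m l = 0
    rw [ih h.2, h.1]; simp

lemma red_sound {m r : K} (hr : r ^ 3 + (m - 1) * r ^ 2 - m * r + m ^ 2 + m = 0) (l : P2) :
    e2 m r l = e1 m (red l).1 + r * e1 m (red l).2.1 + r ^ 2 * e1 m (red l).2.2 := by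
  induction l with
  | nil => simp [red, e2, e1, el]
  | cons a l ih =>
    change e1 m a + r * e2 m r l = _
    rw [ih]
    simp only [red, e1_add, e1_mul]
    have h1 : e1 m [0, -1, -1] = -m - m ^ 2 := by simp [e1, el]; ring
    have h2 : e1 m [0, 1] = m := by simp [e1, el]
    have h3 : e1 m [1, -1] = 1 - m := by simp [e1, el]; ring
    rw [h1, h2, h3]
    linear_combination e1 m (red l).2.2 * hr

lemma isz_sound {m r : K} (hr : r ^ 3 + (m - 1) * r ^ 2 - m * r + m ^ 2 + m = 0) (l : P2)
    (h : isz l = true) : e2 m r l = 0 := by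
  simp only [isz, Bool.and_eq_true] at h
  rw [red_sound hr, z1_sound m _ h.1.1, z1_sound m _ h.1.2, z1_sound m _ h.2]; simp

lemma el_append (x : K) (f : α → K) (l : List α) (a : α) :
    el x f (l ++ [a]) = el x f l + x ^ l.length * f a := by
  induction l with
  | nil => simp [el]
  | cons b l ih => simp only [List.cons_append, el, ih, List.length_cons]; ring

lemma rot_sound {W m r : K} (hW : W ^ 7 * (m ^ 4 * (m + 1)) = 1) (cs : P3) (l : List P2)
    (hl : l.length = 7) :
    e3 W m r l + W ^ 7 * e3 W m r cs = W ^ cs.length * e3 W m r (rot l cs) := by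
  induction cs generalizing l with
  | nil =>
    have : rot l [] = l := by cases l <;> rfl
    rw [this]; simp [e3, el]
  | cons c cs ih =>
    cases l with
    | nil => simp at hl
    | cons a l =>
      simp only [List.length_cons] at hl
      have := ih (l ++ [add2 (mul2 [[0, 0, 0, 0, 1, 1]] a) c]) (by simp; omega)
      rw [rot, List.length_cons, pow_succ' W cs.length, mul_assoc W, ← this]
      change e2 m r a + W * e3 W m r l + W ^ 7 * (e2 m r c + W * e3 W m r cs) = _
      have h2 : e3 W m r (l ++ [add2 (mul2 [[0, 0, 0, 0, 1, 1]] a) c]) = e3 W m r l + W ^ 6 *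
          (m ^ 4 * (m + 1) * e2 m r a + e2 m r c) := by
        rw [e3, el_append, e2_add, e2_mul, show l.length = 6 by omega]
        have : e2 m r [[0, 0, 0, 0, 1, 1]] = m ^ 4 * (m + 1) := by simp [e2, e1, el]; ring
        rw [this]
      rw [h2]
      linear_combination -e2 m r a * hW

lemma zs_ev (W m r : K) : e3 W m r zs = 0 := by simp [zs, e3, e2, el]

lemma chkA_sound {W m r : K} (hW : W ^ 7 * (m ^ 4 * (m + 1)) = 1)
    (hr : r ^ 3 + (m - 1) * r ^ 2 - m * r + m ^ 2 + m = 0) (p : P3) (h : chkA p = true) :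
    e3 W m r p = 0 := by
  have h1 := rot_sound (r := r) hW p zs rfl
  have h2 : ∀ l : List P2, l.all isz = true → e3 W m r l = 0 := by
    intro l hl
    induction l with
    | nil => rfl
    | cons a l ih =>
      simp only [List.all_cons, Bool.and_eq_true] at hl
      change e2 m r a + W * e3 W m r l = 0
      rw [ih hl.2, isz_sound hr _ hl.1]; simp
  rw [h2 _ h, zs_ev, zero_add, mul_zero] at h1
  linear_combination (m ^ 4 * (m + 1)) * h1 - e3 W m r p * hW
end ev

/-! parametrisation -/
def W : F := u * v ^ 2
def mm : F := w ^ 3 * u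
def rr : F := u * w ^ 2 * a

lemma pw : w = mm * W := by
  have h := uvw_rel.1
  rw [mm, W]; linear_combination (w - u * v * w ^ 2) * h
lemma pv : v = -(mm * W ^ 2) := by
  have h := uvw_rel.1
  rw [mm, W]; linear_combination v * (1 - u * v * w + (u * v * w) ^ 2) * h
lemma pa : a = rr * W := by
  have h := uvw_rel.1
  rw [rr, W]; linear_combination (a - u * v * w * a) * h
lemma pu : u = (mm + 1) * mm ^ 2 * W ^ 4 := by
  have h := uvw_rel.1
  have h2 := uvw_rel.2.1
  have h1 : (mm + 1) * v = -u ^ 2 * w := by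
    rw [mm]; linear_combination u * w * h2 + v * h
  have h3 : (mm + 1) * mm ^ 2 * W ^ 4 = ((mm + 1) * v) * w ^ 6 * u ^ 6 * v ^ 7 := by
    rw [mm, W]; ring
  rw [h3, h1]
  have h4 : (u * v * w) ^ 7 = -1 := by rw [h]; norm_num
  linear_combination u * h4
lemma hW : W ^ 7 * (mm ^ 4 * (mm + 1)) = 1 := by
  have h : (mm + 1) * mm ^ 2 * W ^ 4 * (mm ^ 2 * W ^ 3) = 1 := by
    rw [← pu, mm, W]
    have h := uvw_rel.1
    have h4 : (u * v * w) ^ 6 = 1 := by rw [h]; norm_num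
    linear_combination h4
  linear_combination h
lemma pd : d = mm * (1 - rr) * W ^ 2 := by
  have h := eps.2.1
  have h1 := pv
  have h2 := pw
  have h3 := pa
  linear_combination h - h1 - a * h2 - mm * W * h3
lemma pb : b = -(mm ^ 2 * (mm + rr) * W ^ 4) := by
  have h := eps.1
  have h0 := uvw_rel.1
  have h1 : b = v * w * (w + a) := by linear_combination b * h0 - v * w * h
  have h2 := pv
  have h3 := pw
  have h4 := pa
  rw [h1, h4, h2, h3]; ring
lemma W_ne : W ≠ 0 := by intro h; have := hW; rw [h] at this; norm_num at this
lemma mm_ne : mm ≠ 0 := by intro h; have := hW; rw [h] at this; norm_num at this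
lemma hrr : rr ^ 3 + (mm - 1) * rr ^ 2 - mm * rr + mm ^ 2 + mm = 0 := by
  have h := abd_rel.1
  rw [pa, pb, pd] at h
  have h1 := hW
  have : mm ^ 3 * W ^ 7 * (rr ^ 3 + (mm - 1) * rr ^ 2 - mm * rr + mm ^ 2 + mm) = 0 := by
    linear_combination h + h1
  rcases mul_eq_zero.1 this with h | h
  · exact absurd h (mul_ne_zero (pow_ne_zero _ mm_ne) (pow_ne_zero _ W_ne))
  · exact h

lemma Hm_W : Hm 3 W := (hu.mul (hv.pow 2)).cast
lemma Hm_mm : Hm 0 mm := ((hw.pow 3).mul hu).cast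
lemma Hm_rr : Hm 0 rr := ((hu.mul (hw.pow 2)).mul ha).cast

lemma Hm0_e1 (l : P1) : Hm 0 (e1 mm l) := by
  induction l with
  | nil => exact Hm.zero
  | cons a l ih => exact (Hm.int a).add ((Hm_mm.mul ih).cast)
lemma Hm0_e2 (l : P2) : Hm 0 (e2 mm rr l) := by
  induction l with
  | nil => exact Hm.zero
  | cons a l ih => exact (Hm0_e1 a).add ((Hm_rr.mul ih).cast)

lemma E_Hm0 {c : F} (hc : Hm 0 c) (y) : E 0 (c * y) = c * E 0 y := by
  conv_lhs => rw [E_sum y]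
  rw [Finset.mul_sum, map_sum, Finset.sum_eq_single 0]
  · exact ((hc.mul (Hm_E 0 y)).cast).E
  · intro r _ hr
    exact (hc.mul (Hm_E r y)).E' (by simpa using hr)
  · simp

abbrev ev : P3 → F := e3 W mm rr

lemma chk0_sound (p : P3) (h : chk0 p = true) : E 0 (ev p) = 0 := by
  have h1 := rot_sound (r := rr) hW p zs rfl
  rw [zs_ev, zero_add] at h1
  have h2 : ∀ (l : List P2) (n : ℕ), chkr n l = true → E 0 (W ^ n * e3 W mm rr l) = 0 := by
    intro l
    induction l with
    | nil => intro n _; simp [e3, el]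
    | cons a l ih =>
      intro n hn
      simp only [chkr, Bool.and_eq_true, Bool.or_eq_true] at hn
      change E 0 (W ^ n * (e2 mm rr a + W * e3 W mm rr l)) = 0
      rw [mul_add, map_add, ← mul_assoc, ← pow_succ, ih _ hn.2, add_zero]
      rcases hn.1 with h | h
      · refine ((Hm_W.pow n).mul (Hm0_e2 a)).E' ?_
        intro h0
        have h3 : ((n * 3 : ℕ) : ZMod 7) = 0 := by push_cast; linear_combination h0
        rw [ZMod.natCast_eq_zero_iff] at h3
        simp at h; omega
      · rw [isz_sound hrr _ h]; simp
  have h3 := h2 _ _ h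
  rw [← h1, E_Hm0 ((Hm_W.pow 7).cast)] at h3
  rcases mul_eq_zero.1 h3 with h | h
  · exact absurd h (pow_ne_zero _ W_ne)
  · exact h

def cu : P3 := [[], [], [], [], [[0, 0, 1, 1]]]
def cv : P3 := [[], [], [[0, -1]]]
def cw : P3 := [[], [[0, 1]]]
def ca : P3 := [[], [[], [1]]]
def cb : P3 := [[], [], [], [], [[0, 0, 0, -1], [0, 0, -1]]]
def cd : P3 := [[], [], [[0, 1], [0, -1]]]
def cn (n : ℤ) : P3 := [[[n]]]
def cZ : P3 := [[[-1]], [[0, 1]], [[0, -1]], [], [[0, 0, 1, 1]]]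
def cZ2 : P3 := [[[-1]], [[], [1]], [[0, 1], [0, -1]], [], [[0, 0, 0, -1], [0, 0, -1]]]

lemma ev_cu : ev cu = u := by rw [pu]; simp [ev, e3, e2, e1, el, cu]; ring
lemma ev_cv : ev cv = v := by rw [pv]; simp [ev, e3, e2, e1, el, cv]; ring
lemma ev_cw : ev cw = w := by rw [pw]; simp [ev, e3, e2, e1, el, cw]; ring
lemma ev_ca : ev ca = a := by rw [pa]; simp [ev, e3, e2, e1, el, ca]; ring
lemma ev_cb : ev cb = b := by rw [pb]; simp [ev, e3, e2, e1, el, cb]; ring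
lemma ev_cd : ev cd = d := by rw [pd]; simp [ev, e3, e2, e1, el, cd]; ring
lemma ev_cn (n : ℤ) : ev (cn n) = n := by simp [ev, e3, e2, e1, el, cn]
lemma ev_cZ : ev cZ = Z := by rw [Z_eq, pu, pv, pw]; simp [ev, e3, e2, e1, el, cZ]; ring
lemma ev_cZ2 : ev cZ2 = Z2 := by rw [Z2_eq, pa, pb, pd]; simp [ev, e3, e2, e1, el, cZ2]; ring

end partH
end D5

namespace D5
open PowerSeries

section partI

def cneg (p : P3) : P3 := mul3 (cn (-1)) p
def csub (p r : P3) : P3 := add3 p (cneg r)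
/-- Horner in the first argument with coefficients P3 -/
def hor (x : P3) : List P3 → P3
  | [] => []
  | a :: l => add3 a (mul3 x (hor x l))
lemma e3_hor {K : Type*} [CommRing K] (W m r : K) (x : P3) (l : List P3) :
    e3 W m r (hor x l) = el (e3 W m r x) (e3 W m r) l := by
  induction l with
  | nil => rfl
  | cons a l ih => rw [hor, e3_add, e3_mul, ih]; rfl
lemma e3_cn {K : Type*} [CommRing K] (W m r : K) (n : ℤ) : e3 W m r (cn n) = n := by
  simp [e3, e2, e1, el, cn]
lemma e3_cneg {K : Type*} [CommRing K] (W m r : K) (p) : e3 W m r (cneg p) = - e3 W m r p := by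
  rw [cneg, e3_mul, e3_cn]; simp
lemma e3_csub {K : Type*} [CommRing K] (W m r : K) (p p') :
    e3 W m r (csub p p') = e3 W m r p - e3 W m r p' := by
  rw [csub, e3_add, e3_cneg]; ring

/-- minus (u^3 v + w^3 u + v^3 w) minus 8 -/
def cS (x y z : P3) : P3 := csub (cn (-8)) (add3 (mul3 (mul3 x (mul3 x x)) y)
  (add3 (mul3 (mul3 z (mul3 z z)) x) (mul3 (mul3 y (mul3 y y)) z)))
def cT : P3 := [[[-8, -1]], [], [], [], [], [], [], [[0, 0, 0, 1, 3, 1]]]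

def cmul (n : ℤ) (p : P3) : P3 := mul3 (cn n) p
def cBpoly : P3 := csub (hor cZ [[], add3 (cn 343) (cmul 49 cT), add3 (cn 343) (cmul 35 cT),
  add3 (cn 147) (cmul 7 cT), cn 49, cn 21, cn 7, cn 1]) (mul3 cT cT)

lemma cS_cT : chkA (csub (cS cu cv cw) cT) = true := by decide +kernel
lemma chkB : chkA cBpoly = true := by decide +kernel

def SS : F := -(u ^ 3 * v + w ^ 3 * u + v ^ 3 * w) - 8
lemma ev_cS (x y z : P3) : ev (cS x y z) =
    -(ev x ^ 3 * ev y + ev z ^ 3 * ev x + ev y ^ 3 * ev z) - 8 := by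
  simp only [ev, cS, e3_csub, e3_add, e3_mul, e3_cn]; push_cast; ring
lemma ev_cT : ev cT = SS := by
  have h := chkA_sound hW hrr _ cS_cT
  rw [e3_csub] at h
  have h2 := ev_cS cu cv cw
  rw [ev_cu, ev_cv, ev_cw] at h2
  rw [SS, ← h2]
  linear_combination -h

lemma B_gen (Y : F) (hY : Y ^ 7 * (mm ^ 4 * (mm + 1)) = 1) (z s : F) (hz : z = e3 Y mm rr cZ)
    (hs : s = e3 Y mm rr cT) :
    z ^ 7 + 7 * z ^ 6 + 21 * z ^ 5 + 49 * z ^ 4 + 147 * z ^ 3 + 343 * z ^ 2 + 343 * z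
      + s * (7 * z ^ 3 + 35 * z ^ 2 + 49 * z) - s ^ 2 = 0 := by
  have h := chkA_sound hY hrr _ chkB
  rw [cBpoly, e3_csub, e3_hor] at h
  simp only [el, e3_add, e3_mul, e3_cn, cmul, ← hz, ← hs] at h
  change _ at h
  have h0 : e3 Y mm rr [] = 0 := rfl
  rw [h0] at h
  push_cast at h
  linear_combination h

/-! roots of unity -/
def zt : ℂ := Complex.exp (2 * Real.pi * Complex.I / 7)
lemma zt_prim : IsPrimitiveRoot zt 7 := by
  have := Complex.isPrimitiveRoot_exp 7 (by norm_num)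
  rw [zt]; convert this using 2; norm_num
lemma zt7 : zt ^ 7 = 1 := zt_prim.pow_eq_one

def zc (k : ℕ) : F := io (PowerSeries.C (zt ^ k))
lemma zc_pow (k n) : zc k ^ n = zc (k * n) := by rw [zc, zc, ← map_pow, ← map_pow, pow_mul]
lemma zc_Hm (k) : Hm 0 (zc k) := by
  intro n hn
  rw [zc, HahnSeries.ofPowerSeries_C, HahnSeries.C_apply, HahnSeries.coeff_single] at hn
  split_ifs at hn with h
  · simp [h]
  · simp at hn

def Zk (k : ℕ) : F := zc (5 * k) * u + zc (6 * k) * v + zc (3 * k) * w - 1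
lemma zc_mod (k l : ℕ) (h : k % 7 = l % 7) : zc k = zc l := by
  have : zt ^ k = zt ^ l := by rw [← pow_mod_orderOf, ← pow_mod_orderOf zt l, ← zt_prim.eq_orderOf, h]
  rw [zc, zc, this]

lemma Zk_ev (k) : Zk k = e3 (zc (3 * k) * W) mm rr cZ := by
  rw [Zk, pu, pv, pw]
  simp [e3, e2, e1, el, cZ]
  have h4 : zc (3 * k) ^ 4 = zc (5 * k) := by rw [zc_pow]; exact zc_mod _ _ (by omega)
  have h2 : zc (3 * k) ^ 2 = zc (6 * k) := by rw [zc_pow]; exact zc_mod _ _ (by omega)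
  rw [← h4, ← h2]; ring
lemma SS_ev (k) : SS = e3 (zc (3 * k) * W) mm rr cT := by
  rw [← ev_cT]
  simp only [ev, e3, cT, el, e2]
  have h7 : zc (3 * k) ^ 7 = 1 := by
    rw [zc_pow, zc_mod _ 0 (by omega)]; simp [zc]
  linear_combination -W ^ 7 * (e1 mm [0,0,0,1,3,1]) * h7

lemma Zk_root (k) : Zk k ^ 7 + 7 * Zk k ^ 6 + 21 * Zk k ^ 5 + 49 * Zk k ^ 4 + 147 * Zk k ^ 3
    + 343 * Zk k ^ 2 + 343 * Zk k + SS * (7 * Zk k ^ 3 + 35 * Zk k ^ 2 + 49 * Zk k) - SS ^ 2 = 0 := by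
  refine B_gen (zc (3 * k) * W) ?_ _ _ (Zk_ev k) (SS_ev k)
  have h7 : zc (3 * k) ^ 7 = 1 := by
    rw [zc_pow, zc_mod _ 0 (by omega)]; simp [zc]
  rw [mul_pow, h7, one_mul]; exact hW

lemma Zk_inj {k l : ℕ} (hk : k < 7) (hl : l < 7) (h : Zk k = Zk l) : k = l := by
  rw [Zk, Zk] at h
  have := indep (x0 := 0) (x1 := 0) (x2 := 0) (x4 := 0)
    (x5 := (zc (5*k) - zc (5*l)) * u) (x6 := (zc (6*k) - zc (6*l)) * v)
    (x3 := (zc (3*k) - zc (3*l)) * w) Hm.zero Hm.zero Hm.zero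
    ((((zc_Hm _).sub (zc_Hm _)).mul hw).cast) Hm.zero ((((zc_Hm _).sub (zc_Hm _)).mul hu).cast)
    ((((zc_Hm _).sub (zc_Hm _)).mul hv).cast) (by linear_combination h)
  have h1 := this.2.2.2.2.2.1
  have h2 := sub_eq_zero.1 ((mul_eq_zero.1 h1).resolve_right u_ne)
  have h3 := PowerSeries.C_injective (HahnSeries.ofPowerSeries_injective h2)
  have h4 : zt ^ k = zt ^ l := by
    have h5 : ∀ n : ℕ, zt ^ n = (zt ^ (5 * n)) ^ 3 := by
      intro n
      rw [← pow_mul, show 5 * n * 3 = 7 * (2 * n) + n by ring, pow_add, pow_mul, zt7]; simp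
    rw [h5, h5 l, h3]
  exact zt_prim.pow_inj hk hl h4

lemma Zk_prod : ∏ k ∈ Finset.range 7, Zk k = SS ^ 2 := by
  classical
  set P : Polynomial F := Polynomial.X ^ 7 + (7 * Polynomial.X ^ 6 + 21 * Polynomial.X ^ 5
    + 49 * Polynomial.X ^ 4 + 147 * Polynomial.X ^ 3 + 343 * Polynomial.X ^ 2 + 343 * Polynomial.X
    + Polynomial.C SS * (7 * Polynomial.X ^ 3 + 35 * Polynomial.X ^ 2 + 49 * Polynomial.X)
    - Polynomial.C SS ^ 2) with hP
  have hev : ∀ x, P.eval x = x ^ 7 + 7 * x ^ 6 + 21 * x ^ 5 + 49 * x ^ 4 + 147 * x ^ 3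
    + 343 * x ^ 2 + 343 * x + SS * (7 * x ^ 3 + 35 * x ^ 2 + 49 * x) - SS ^ 2 := by
    intro x; simp [hP]; ring
  have hlow : (7 * Polynomial.X ^ 6 + 21 * Polynomial.X ^ 5
    + 49 * Polynomial.X ^ 4 + 147 * Polynomial.X ^ 3 + 343 * Polynomial.X ^ 2 + 343 * Polynomial.X
    + Polynomial.C SS * (7 * Polynomial.X ^ 3 + 35 * Polynomial.X ^ 2 + 49 * Polynomial.X)
    - Polynomial.C SS ^ 2 : Polynomial F).degree < (7 : ℕ) := by
    refine lt_of_le_of_lt (b := ((6 : ℕ) : WithBot ℕ)) ?_ (by norm_num)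
    compute_degree
    norm_num
  have hmon : P.Monic := Polynomial.monic_X_pow_add (hlow)
  have hdeg : P.degree = (7 : ℕ) := by
    rw [hP, Polynomial.degree_add_eq_left_of_degree_lt, Polynomial.degree_X_pow]
    rw [Polynomial.degree_X_pow]; exact hlow
  have hinj : Set.InjOn Zk (Finset.range 7 : Finset ℕ) := by
    intro k hk l hl h
    simp only [Finset.coe_range, Set.mem_Iio] at hk hl
    exact Zk_inj hk hl h
  have heq : P = ∏ k ∈ Finset.range 7, (Polynomial.X - Polynomial.C (Zk k)) := by
    have hm2 : (∏ k ∈ Finset.range 7, (Polynomial.X - Polynomial.C (Zk k))).Monic :=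
      Polynomial.monic_prod_X_sub_C _ _
    have hd2 : (∏ k ∈ Finset.range 7, (Polynomial.X - Polynomial.C (Zk k))).degree = ((7 : ℕ) : WithBot ℕ) := by
      rw [Polynomial.degree_prod]; simp
    refine Polynomial.eq_of_degree_sub_lt_of_eval_finset_eq ((Finset.range 7).image Zk) ?_ ?_
    · rw [Finset.card_image_of_injOn hinj, Finset.card_range, ← hdeg]
      refine Polynomial.degree_sub_lt_left (by rw [hdeg, hd2]) hmon.ne_zero ?_
      rw [hmon.leadingCoeff, hm2.leadingCoeff]
    · intro x hx
      obtain ⟨k, hk, rfl⟩ := Finset.mem_image.1 hx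
      rw [hev, Zk_root, Polynomial.eval_prod]
      symm
      apply Finset.prod_eq_zero hk
      simp
  have h0 := congrArg (Polynomial.eval 0) heq
  rw [hev, Polynomial.eval_prod] at h0
  simp only [Polynomial.eval_sub, Polynomial.eval_X, Polynomial.eval_C, Finset.prod_range_succ,
    Finset.prod_range_zero] at h0 ⊢
  linear_combination h0

end partI
end D5

namespace D5
open PowerSeries

section partJ

lemma CL.prodr {R : Type*} [CommRing R] (G : ℕ → ℕ → R⟦X⟧) (g : ℕ → R⟦X⟧) (m : ℕ) (h : ∀ k, CL (G k) (g k)) :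
    CL (fun n => ∏ k ∈ Finset.range m, G k n) (∏ k ∈ Finset.range m, g k) := by
  induction m with
  | zero => simpa using CL.const _
  | succ m ih => simp only [Finset.prod_range_succ]; exact ih.mul (h m)

lemma rescale_X_pow (c : ℂ) (M : ℕ) : rescale c (X ^ M : ℂ⟦X⟧) = C (c ^ M) * X ^ M := by
  rw [map_pow, rescale_X, mul_pow, ← map_pow]

lemma CL.resc {G : ℕ → ℂ⟦X⟧} {g : ℂ⟦X⟧} (c : ℂ) (h : CL G g) :
    CL (fun n => rescale c (G n)) (rescale c g) := fun M => by
  obtain ⟨a, ha⟩ := h M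
  refine ⟨a, fun n hn => ?_⟩
  have := map_dvd (rescale c) (ha n hn)
  rw [rescale_X_pow, map_sub] at this
  exact (Dvd.intro_left _ rfl).trans this

lemma root_prod (s : ℕ) (hs : ¬ 7 ∣ s) (x : ℂ⟦X⟧) :
    ∏ k ∈ Finset.range 7, (1 - C ((zt ^ k) ^ s) * x) = 1 - x ^ 7 := by
  have hp : IsPrimitiveRoot (C (zt ^ s) : ℂ⟦X⟧) 7 := by
    have h1 : IsPrimitiveRoot (zt ^ s) 7 :=
      zt_prim.pow_of_coprime s (((Nat.Prime.coprime_iff_not_dvd (by norm_num)).2 hs).symm)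
    exact h1.map_of_injective (f := (C : ℂ →+* ℂ⟦X⟧)) PowerSeries.C_injective
  have := hp.pow_sub_pow_eq_prod_sub_mul (1 : ℂ⟦X⟧) x (by norm_num)
  rw [one_pow] at this
  rw [this]
  have hc : ∀ k : ℕ, (C ((zt ^ k) ^ s) : ℂ⟦X⟧) = C (zt ^ s) ^ k := by
    intro k; rw [← map_pow, ← pow_mul, ← pow_mul, mul_comm]
  refine Finset.prod_nbij (fun k => C (zt ^ s) ^ k) ?_ ?_ ?_ ?_
  · intro k _
    rw [Polynomial.mem_nthRootsFinset (by norm_num), ← pow_mul, mul_comm, pow_mul, hp.pow_eq_one, one_pow]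
  · intro k hk l hl h
    simp only [Finset.coe_range, Set.mem_Iio] at hk hl
    exact hp.pow_inj hk hl h
  · intro z hz
    have hz' := (Polynomial.mem_nthRootsFinset (by norm_num) _).1 (Finset.mem_coe.1 hz)
    obtain ⟨i, hi, h⟩ := hp.eq_pow_of_pow_eq_one hz'
    exact ⟨i, by simpa using hi, h⟩
  · intro k _; rw [hc]

lemma resc_prod : (∏ k ∈ Finset.range 7, rescale (zt ^ k) (JR ℂ 1)) * JR ℂ 49 = JR ℂ 7 * JR ℂ 7 ^ 7 := by
  have h7 : CL (fun n => ∏ k ∈ Finset.range 7, (∏ i ∈ Finset.range n, (1 - X^(7*(i+1)) : ℂ⟦X⟧)))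
    (JR ℂ 7 ^ 7) := by
    have := CL.prodr (fun _ n => (∏ i ∈ Finset.range n, (1 - X^(7*(i+1)) : ℂ⟦X⟧))) (fun _ => JR ℂ 7) 7
      (fun _ => JR_CL' 7 (by norm_num))
    simpa using this
  refine CL.unique (((CL.prodr _ _ 7 (fun k => (JR_CL' (R := ℂ) 1 le_rfl).resc (zt ^ k))).comp
    (fun n => 7 * n) (tend_mul 7 (by norm_num))).mul (JR_CL' 49 (by norm_num)))
    ((((JR_CL' (R := ℂ) 7 (by norm_num)).comp (fun n => 7 * n) (tend_mul 7 (by norm_num))).mul h7).congr'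
    0 fun n _ => ?_)
  simp only [map_prod, map_sub, map_one, rescale_X_pow]
  rw [Finset.prod_comm, Finset.prod_comm (s := Finset.range 7) (t := Finset.range n),
    prod_blocks, prod_blocks, ← Finset.prod_mul_distrib, ← Finset.prod_mul_distrib]
  refine Finset.prod_congr rfl fun i _ => ?_
  rw [Finset.prod_range_succ, Finset.prod_range_succ (n := 6) (f := fun r => (1 - X ^ (7 * (7 * i + r + 1)) : ℂ⟦X⟧))]
  have e1 : ∏ x ∈ Finset.range 6, ∏ k ∈ Finset.range 7, (1 - C ((zt ^ k) ^ (1 * (7 * i + x + 1))) * X ^ (1 * (7 * i + x + 1)))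
    = ∏ x ∈ Finset.range 6, (1 - X ^ (7 * (7 * i + x + 1)) : ℂ⟦X⟧) := by
    refine Finset.prod_congr rfl fun x hx => ?_
    have := Finset.mem_range.1 hx
    rw [root_prod _ (by omega), ← pow_mul]
    congr 2; ring
  have e2 : ∀ k ∈ Finset.range 7, (1 - C ((zt ^ k) ^ (1 * (7 * i + 6 + 1))) * X ^ (1 * (7 * i + 6 + 1)) : ℂ⟦X⟧)
     = 1 - X ^ (7 * (i + 1)) := by
    intro k _
    rw [← pow_mul, show k * (1 * (7 * i + 6 + 1)) = 7 * (k * (i + 1)) by ring, pow_mul, zt7, one_pow, map_one]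
    congr 1; rw [one_mul]; congr 1; ring
  rw [e1, Finset.prod_congr rfl e2]
  ring_nf

lemma Zk_resc (k : ℕ) : io (rescale (zt ^ k) (JR ℂ 1)) * (zc (5 * k) * iq) = Zk k := by
  have hr : ∀ r, rescale (zt ^ k) (res r (JR ℂ 1)) = C (zt ^ (k * r)) * res r (JR ℂ 1) := by
    intro r
    ext n
    rw [coeff_rescale, coeff_C_mul]
    simp only [res, coeff_mk]
    split_ifs with h
    · rw [← pow_mul]
      congr 1
      rw [← pow_mod_orderOf, ← pow_mod_orderOf zt (k * r), ← zt_prim.eq_orderOf, ← h]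
      simp [Nat.mul_mod]
    · simp
  have h := congrArg (rescale (zt ^ k)) (res_sum (JR ℂ 1))
  simp only [map_add, hr] at h
  rw [d1_zero 3 (by simp), d1_zero 4 (by simp), d1_zero 6 (by simp), d1_two] at h
  have h2 := congrArg io h
  simp only [map_add, map_neg, map_mul, map_pow, mul_zero, add_zero] at h2
  have h3 := iq_mul
  simp only [q, j] at h3
  have hz : ∀ m, io (C (zt) : ℂ⟦X⟧) ^ m = zc m := by intro m; simp [zc]
  simp only [hz] at h2
  rw [h2, Zk, u, v, w]
  have hzz : ∀ m n, zc m * zc n = zc (m + n) := by intro m n; simp [zc, pow_add]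
  have a0 : zc (k * 0) * zc (5 * k) = zc (5 * k) := by rw [hzz]; exact zc_mod _ _ (by omega)
  have a1 : zc (k * 1) * zc (5 * k) = zc (6 * k) := by rw [hzz]; exact zc_mod _ _ (by omega)
  have a2 : zc (k * 2) * zc (5 * k) = 1 := by
    rw [hzz, zc_mod _ 0 (by omega)]; simp [zc]
  have a5 : zc (k * 5) * zc (5 * k) = zc (3 * k) := by rw [hzz]; exact zc_mod _ _ (by omega)
  linear_combination io (res 0 (JR ℂ 1)) * iq * a0 + io (res 1 (JR ℂ 1)) * iq * a1
    + io (res 5 (JR ℂ 1)) * iq * a5 - (io X ^ 2 * io (JR ℂ 49) * iq) * a2 - h3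

lemma SS_sq : SS ^ 2 * (q ^ 2 * j 49) ^ 7 * j 49 = j 7 ^ 8 := by
  have h := congrArg io resc_prod
  rw [map_mul, map_prod, map_mul, map_pow] at h
  rw [← Zk_prod]
  have h1 : ∏ k ∈ Finset.range 7, Zk k = (∏ k ∈ Finset.range 7, io (rescale (zt ^ k) (JR ℂ 1))) * iq ^ 7 := by
    simp only [← Zk_resc, Finset.prod_mul_distrib]
    have : ∏ k ∈ Finset.range 7, zc (5 * k) = 1 := by
      have hzz : ∀ m n, zc m * zc n = zc (m + n) := by intro m n; simp [zc, pow_add]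
      simp only [Finset.prod_range_succ, Finset.prod_range_zero, one_mul, hzz]
      rw [zc_mod _ 0 (by norm_num)]; simp [zc]
    rw [this]; simp
  rw [h1]
  have h2 : (q ^ 2 * j 49 * iq) ^ 7 = 1 := by rw [iq_mul, one_pow]
  simp only [j] at *
  linear_combination h + (∏ k ∈ Finset.range 7, io (rescale (zt ^ k) (JR ℂ 1))) * io (JR ℂ 49) * h2

def T : F := j 1 ^ 4 / (q * j 7 ^ 4)
def T2 : F := f2 T
def ka : F := T + 8 - 8 * ee
lemma T_ne : T ≠ 0 := div_ne_zero (pow_ne_zero _ (j_ne 1)) (mul_ne_zero q_ne (pow_ne_zero _ (j_ne 7)))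
lemma ph_T : ph T * (q ^ 7 * j 49 ^ 4) = j 7 ^ 4 := by
  rw [T, map_div₀, map_mul, map_pow, map_pow, ph_j 1, ph_j 7, fr_q]
  have := j_ne 49
  have := q_ne
  norm_num
  field_simp

lemma SS_T : SS = ph T := by
  have h7 : q ^ 7 * j 49 ^ 4 ≠ 0 := mul_ne_zero (pow_ne_zero _ q_ne) (pow_ne_zero _ (j_ne 49))
  have h1 : SS ^ 2 = ph T ^ 2 := by
    have h := SS_sq
    have h2 := ph_T
    apply mul_right_cancel₀ (pow_ne_zero 2 h7)
    rw [← mul_pow, ← mul_pow, h2]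
    linear_combination h
  rcases sq_eq_sq_iff_eq_or_eq_neg.1 h1 with h | h
  · exact h
  exfalso
  have h2 := ph_T
  rw [← neg_eq_iff_eq_neg.2 h] at h2
  have h3 := iq_mul
  rw [SS, u, v, w] at h2
  have h4 : io (-((res 0 (JR ℂ 1)) ^ 3 * (res 1 (JR ℂ 1)) + (res 5 (JR ℂ 1)) ^ 3 * (res 0 (JR ℂ 1))
     + (res 1 (JR ℂ 1)) ^ 3 * (res 5 (JR ℂ 1))) - 8 * X ^ 8 * JR ℂ 49 ^ 4 + X * JR ℂ 7 ^ 4) = 0 := by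
    have h5 : (q ^ 2 * j 49 * iq) ^ 4 = 1 := by rw [h3, one_pow]
    simp only [map_add, map_sub, map_neg, map_mul, map_pow, map_ofNat]
    simp only [q, j] at *
    linear_combination -(io X) * h2 + ((io (res 0 (JR ℂ 1)) ^ 3 * io (res 1 (JR ℂ 1)) + io (res 5 (JR ℂ 1)) ^ 3 * io (res 0 (JR ℂ 1))
     + io (res 1 (JR ℂ 1)) ^ 3 * io (res 5 (JR ℂ 1)))) * h5
  have h6 := HahnSeries.ofPowerSeries_injective (h4.trans (map_zero io).symm)
  have h7 := congrArg (coeff 1) h6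
  have j0 : constantCoeff (JR ℂ 7) = 1 := by
    rw [← coeff_zero_eq_constantCoeff_apply]; simp [JR, ip]
  have e8 : coeff 1 (8 * X ^ 8 * JR ℂ 49 ^ 4) = 0 := by
    rw [show (8 * X ^ 8 * JR ℂ 49 ^ 4 : ℂ⟦X⟧) = X ^ 8 * (8 * JR ℂ 49 ^ 4) by ring, coeff_X_pow_mul']
    simp
  have c0 := JR1_coeff0
  have c1 := JR1_coeff1
  simp only [map_add, map_sub, map_neg, e8] at h7
  have ex : coeff 1 (X * JR ℂ 7 ^ 4) = 1 := by
    rw [show (1 : ℕ) = 0 + 1 from rfl, coeff_succ_X_mul]; simp [j0]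
  rw [ex] at h7
  have hm : ∀ f g : ℂ⟦X⟧, coeff 1 (f * g) = coeff 0 f * coeff 1 g + coeff 1 f * coeff 0 g := by
    intro f g; rw [coeff_mul]; simp [Finset.Nat.antidiagonal_succ]
  have hm0 : ∀ f g : ℂ⟦X⟧, coeff 0 (f * g) = coeff 0 f * coeff 0 g := by
    intro f g; rw [coeff_mul]; simp
  simp only [hm, hm0, pow_succ, pow_zero, one_mul] at h7
  simp only [res, coeff_mk, c0, c1] at h7
  norm_num at h7

end partJ
end D5

namespace D5
open PowerSeries

section partK

def ck : P3 := [[[4]], [], [], [], [], [], [], [[0, 0, 0, 0, -1, -2], [0, 0, 0, 1, 1, 1]]]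
def cT2 : P3 := [[[-8]], [], [], [], [], [], [],
  [[0, 0, 0, -1, 1, 3, 1], [0, 0, 0, -1, -4, -2], [0, 0, 1, 1, 2, 1]], [], [], [], [], [], [],
  [[0, 0, 0, 0, 0, 0, 0, 0, 0, 2, 3], [0, 0, 0, 0, 0, 0, 0, 0, 1, 2, -1],
    [0, 0, 0, 0, 0, 0, 0, 0, 0, -1]]]

lemma eqA {p p' : P3} (h : chkA (csub p p') = true) : ev p = ev p' := by
  have := chkA_sound hW hrr _ h
  rw [e3_csub] at this
  exact sub_eq_zero.1 this

lemma ev_cT' : ev cT = ph T := by rw [ev_cT, SS_T]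

def ch1 : P3 := cneg (add3 (mul3 ca cb) (add3 (mul3 cd (mul3 ca cv)) (mul3 cb (mul3 cd (mul3 cu cv)))))
def ch2 : P3 := cneg (add3 (mul3 ca (mul3 cb (mul3 cw cu))) (add3 (mul3 cb (mul3 cd cu)) (mul3 cd ca)))
def ch4 : P3 := cneg (add3 (mul3 cd (mul3 ca (mul3 cw cv))) (add3 (mul3 cb (mul3 ca cw)) (mul3 cb cd)))

lemma ck_chk : chkA (csub (mul3 ch1 (mul3 ch2 (mul3 ch4 (csub (add3 cT (cn 8)) ck)))) (cn 8)) = true := by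
  decide +kernel
lemma cT2_chk : chkA (csub (cS ca cb cd) cT2) = true := by decide +kernel

lemma ev_cT2 : ev cT2 = ph T2 := by
  rw [← eqA cT2_chk, ev_cS, ev_ca, ev_cb, ev_cd, T2, ← f2_ph, ← SS_T, SS]
  simp only [map_sub, map_add, map_neg, map_mul, map_pow, map_ofNat, a, b, d]

lemma ev_ck : ev ck = ph ka := by
  obtain ⟨h1, h2, h4, -, he, e1, e2, e4, -⟩ := h_rel
  have h := eqA ck_chk
  simp only [ev, ch1, ch2, ch4, e3_csub, e3_mul, e3_add, e3_cn, e3_cneg] at h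
  have h' := h
  have hT := ev_cT'
  have a1 := ev_ca; have a2 := ev_cb; have a3 := ev_cd; have a4 := ev_cu; have a5 := ev_cv; have a6 := ev_cw
  simp only [ev] at hT a1 a2 a3 a4 a5 a6
  simp only [hT, a1, a2, a3, a4, a5, a6] at h'
  rw [ka, map_sub, map_add, map_mul, map_ofNat]
  push_cast at h'
  have h3 : h1 * h2 * h4 * (ph T + 8 - ev ck) = 8 := by
    rw [e1, e2, e4]; simp only [ev]; linear_combination h'
  have hne : h1 * h2 * h4 ≠ 0 := by
    intro h0; rw [h0] at he; simp at he
  apply mul_left_cancel₀ hne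
  linear_combination -h3 + 8 * he

lemma kk_chk : chkA (csub (mul3 ck ck) (add3 (cmul 7 ck) (add3 cT cT2))) = true := by decide +kernel
lemma kT_chk : chkA (csub (mul3 ck cT2) (add3 (mul3 cT ck) (mul3 (add3 cT (cn 7)) cT2))) = true := by
  decide +kernel
lemma TT_chk : chkA (csub (mul3 cT2 cT2) (add3 (mul3 cT cT) (mul3 (mul3 cT (add3 cT (cn 7))) (add3 ck cT2)))) = true := by
  decide +kernel

lemma kk : ka ^ 2 = 7 * ka + T + T2 := by
  have h := eqA kk_chk
  have h1 := ev_cT'; have h2 := ev_cT2; have h3 := ev_ck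
  simp only [ev] at h h1 h2 h3
  simp only [cmul, e3_mul, e3_add, e3_cn, h1, h2, h3] at h
  apply ph_inj
  simp only [map_add, map_mul, map_pow, map_ofNat]
  push_cast at h
  linear_combination h
lemma kT : ka * T2 = T * ka + (T + 7) * T2 := by
  have h := eqA kT_chk
  have h1 := ev_cT'; have h2 := ev_cT2; have h3 := ev_ck
  simp only [ev] at h h1 h2 h3
  simp only [cmul, e3_mul, e3_add, e3_cn, h1, h2, h3] at h
  apply ph_inj
  simp only [map_add, map_mul, map_pow, map_ofNat]
  push_cast at h
  linear_combination h
lemma TT : T2 ^ 2 = T ^ 2 + (T ^ 2 + 7 * T) * (ka + T2) := by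
  have h := eqA TT_chk
  have h1 := ev_cT'; have h2 := ev_cT2; have h3 := ev_ck
  simp only [ev] at h h1 h2 h3
  simp only [cmul, e3_mul, e3_add, e3_cn, h1, h2, h3] at h
  apply ph_inj
  simp only [map_add, map_mul, map_pow, map_ofNat]
  push_cast at h
  linear_combination h

lemma relB : Z ^ 7 + 7 * Z ^ 6 + 21 * Z ^ 5 + 49 * Z ^ 4 + 147 * Z ^ 3 + 343 * Z ^ 2 + 343 * Z
      + ph T * (7 * Z ^ 3 + 35 * Z ^ 2 + 49 * Z) = ph T ^ 2 := by
  have := B_gen W hW Z SS ev_cZ.symm ev_cT.symm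
  rw [← SS_T]; linear_combination this

def cC : P3 := hor cZ [hor cZ2 [[], cmul (-2) cT, cn 14, cn 7, cn 1],
  hor cZ2 [cmul (-2) cT2, cn 21, cn 21, cn 5], hor cZ2 [cn 14, cn 21, cn 9, cn 1],
  hor cZ2 [cn 7, cn 5, cn 1], cn 1]
lemma cC_chk : chkA cC = true := by decide +kernel
lemma relC : Z2 ^ 4 + 7 * Z2 ^ 3 + 14 * Z2 ^ 2 - 2 * ph T * Z2
    + Z * (-2 * ph T2 + 21 * Z2 + 21 * Z2 ^ 2 + 5 * Z2 ^ 3)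
    + Z ^ 2 * (14 + 21 * Z2 + 9 * Z2 ^ 2 + Z2 ^ 3) + Z ^ 3 * (7 + 5 * Z2 + Z2 ^ 2) + Z ^ 4 = 0 := by
  have h := chkA_sound hW hrr _ cC_chk
  have h1 := ev_cT'; have h2 := ev_cT2; have h3 := ev_cZ; have h4 := ev_cZ2
  simp only [ev] at h h1 h2 h3 h4
  simp only [cC, e3_hor, el, cmul, e3_mul, e3_add, e3_cn, h1, h2, h3, h4] at h
  have h0 : e3 W mm rr [] = 0 := rfl
  rw [h0] at h
  push_cast at h
  linear_combination h

/-! tables -/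
abbrev K3 := P1 × P1 × P1
def pT (p : P1) : F := e1 T p
def kv (x : K3) : F := pT x.1 + pT x.2.1 * ka + pT x.2.2 * T2
def hT (p : P1) : P3 := hor cT (p.map cn)
def ch (x : K3) : P3 := add3 (hT x.1) (add3 (mul3 (hT x.2.1) ck) (mul3 (hT x.2.2) cT2))

lemma ev_hT (p : P1) : ev (hT p) = ph (pT p) := by
  rw [hT, ev, e3_hor, pT, e1]
  have := ev_cT'
  rw [ev] at this
  rw [this]
  induction p with
  | nil => simp [el]
  | cons a l ih => rw [List.map_cons, el, el, ih, map_add, map_mul, e3_cn, map_intCast]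
lemma ev_ch (x : K3) : ev (ch x) = ph (kv x) := by
  have h1 := ev_hT; have h2 := ev_cT2; have h3 := ev_ck
  simp only [ev] at *
  rw [ch, e3_add, e3_add, e3_mul, e3_mul, h1, h1, h1, h2, h3, kv, map_add, map_add, map_mul, map_mul]
  ring

/-- row j: `U (Z2^j Z^(n+i)) = kv l[i]` -/
def Row (x : F) : List K3 → Prop
  | [] => True
  | k :: l => U x = kv k ∧ Row (Z * x) l
def rowc (P : P3) : List K3 → Bool
  | [] => true
  | k :: l => chk0 (csub P (ch k)) && rowc (mul3 cZ P) l
lemma rowc_sound (P : P3) (l : List K3) (h : rowc P l = true) : Row (ev P) l := by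
  induction l generalizing P with
  | nil => trivial
  | cons k l ih =>
    rw [rowc, Bool.and_eq_true] at h
    refine ⟨?_, ?_⟩
    · have h1 := chk0_sound _ h.1
      rw [ev, e3_csub, map_sub, sub_eq_zero] at h1
      apply U_eq
      have h2 := ev_ch k
      simp only [ev] at *
      rw [h1, h2, (Hm_ph _).E]
    · have := ih _ h.2
      rwa [ev, e3_mul, ← ev, ev_cZ] at this

def R0 : List K3 := [([1],[],[]), ([-1],[],[]), ([1],[],[]), ([-7],[],[]), ([-7,-4],[],[]), ([49,10],[],[]), ([49],[],[])]
def R1 : List K3 := [([-1],[],[]), ([1],[],[]), ([7],[-2],[]), ([-7,1],[7],[]), ([49,6],[-14],[]), ([-294,-28],[49,1],[]), ([343,-14],[-98,8],[])]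
def R2 : List K3 := [([1],[],[]), ([-7],[2],[]), ([-7],[],[]), ([0,-4],[-7],[1]), ([49],[],[]), ([343,56],[-98,-12],[-14]), ([-343,49,1],[343,14],[49])]
def R3 : List K3 := [([-7],[],[]), ([42],[-7],[1]), ([-49,1],[7],[-4]), ([49],[],[]), ([-343,14],[98,3],[7]), ([-343,-245],[0,35],[0,-5]), ([2401,490,-6],[-686,-112],[98,28])]

lemma R0_chk : rowc (cn 1) R0 = true := by decide +kernel
lemma R1_chk : rowc cZ2 R1 = true := by decide +kernel
lemma R2_chk : rowc (mul3 cZ2 cZ2) R2 = true := by decide +kernel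
lemma R3_chk : rowc (mul3 cZ2 (mul3 cZ2 cZ2)) R3 = true := by decide +kernel
lemma R0_row : Row 1 R0 := by
  have := rowc_sound _ _ R0_chk
  rwa [ev, e3_cn, Int.cast_one] at this
lemma R1_row : Row Z2 R1 := by
  have := rowc_sound _ _ R1_chk
  rwa [ev_cZ2] at this
lemma R2_row : Row (Z2 ^ 2) R2 := by
  have := rowc_sound _ _ R2_chk
  rwa [ev, e3_mul, ← ev, ev_cZ2, ← pow_two] at this
lemma R3_row : Row (Z2 ^ 3) R3 := by
  have := rowc_sound _ _ R3_chk
  rwa [ev, e3_mul, e3_mul, ← ev, ev_cZ2, show Z2 * (Z2 * Z2) = Z2 ^ 3 by ring] at this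

end partK
end D5

namespace D5
open PowerSeries

section partL

lemma pT_add (p r : P1) : pT (add1 p r) = pT p + pT r := by
  rw [pT, pT, pT, e1, add1, el_la]; intro a b; push_cast; ring
lemma pT_mul (p r : P1) : pT (mul1 p r) = pT p * pT r := by
  rw [pT, pT, pT, e1, mul1, el_lm]
  · simp
  · intro a b; push_cast; ring
  · intro a b; push_cast; ring
lemma pT_cons (c : ℤ) (l : P1) : pT (c :: l) = c + T * pT l := rfl
lemma pT_nil : pT [] = 0 := rfl

def kadd (x y : K3) : K3 := (add1 x.1 y.1, add1 x.2.1 y.2.1, add1 x.2.2 y.2.2)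
def ksc (p : P1) (x : K3) : K3 := (mul1 p x.1, mul1 p x.2.1, mul1 p x.2.2)
def kka (x : K3) : K3 := (mul1 [0, 1] x.2.1, add1 x.1 (add1 (mul1 [7] x.2.1) (mul1 [0, 1] x.2.2)),
  add1 x.2.1 (mul1 [7, 1] x.2.2))
def kT2 (x : K3) : K3 := (mul1 [0, 0, 1] x.2.2, add1 (mul1 [0, 1] x.2.1) (mul1 [0, 7, 1] x.2.2),
  add1 x.1 (add1 (mul1 [7, 1] x.2.1) (mul1 [0, 7, 1] x.2.2)))
lemma kv_add (x y) : kv (kadd x y) = kv x + kv y := by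
  simp only [kv, kadd, pT_add]; ring
lemma kv_sc (p x) : kv (ksc p x) = pT p * kv x := by
  simp only [kv, ksc, pT_mul]; ring
lemma kv_ka (x) : kv (kka x) = ka * kv x := by
  simp only [kv, kka, pT_add, pT_mul, pT_cons, pT_nil]; push_cast
  linear_combination -pT x.2.1 * kk - pT x.2.2 * kT
lemma kv_T2 (x) : kv (kT2 x) = T2 * kv x := by
  simp only [kv, kT2, pT_add, pT_mul, pT_cons, pT_nil]; push_cast
  linear_combination -pT x.2.1 * kT - pT x.2.2 * TT

def nx (a0 a1 a2 a3 a4 a5 a6 : K3) : K3 :=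
  kadd (ksc [0, 0, 1] a0) (kadd (ksc [-343, -49] a1) (kadd (ksc [-343, -35] a2)
    (kadd (ksc [-147, -7] a3) (kadd (ksc [-49] a4) (kadd (ksc [-21] a5) (ksc [-7] a6))))))
def ext : ℕ → List K3 → List K3
  | 0, l => l
  | n + 1, a0 :: a1 :: a2 :: a3 :: a4 :: a5 :: a6 :: _ =>
      a0 :: ext n [a1, a2, a3, a4, a5, a6, nx a0 a1 a2 a3 a4 a5 a6]
  | _, _ => []
lemma ext_row (n : ℕ) (x : F) (l : List K3) (h : Row x l) : Row x (ext n l) := by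
  induction n generalizing x l with
  | zero => exact h
  | succ n ih =>
    match l, h with
    | a0 :: a1 :: a2 :: a3 :: a4 :: a5 :: a6 :: _, ⟨h0, h1, h2, h3, h4, h5, h6, _⟩ =>
      refine ⟨h0, ih _ _ ⟨h1, h2, h3, h4, h5, h6, ?_, trivial⟩⟩
      have e : Z * (Z * (Z * (Z * (Z * (Z * (Z * x)))))) = ph (pT [0, 0, 1]) * x
        + ph (pT [-343, -49]) * (Z * x) + ph (pT [-343, -35]) * (Z * (Z * x))
        + ph (pT [-147, -7]) * (Z * (Z * (Z * x))) + ph (pT [-49]) * (Z * (Z * (Z * (Z * x))))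
        + ph (pT [-21]) * (Z * (Z * (Z * (Z * (Z * x))))) + ph (pT [-7]) * (Z * (Z * (Z * (Z * (Z * (Z * x)))))) := by
        simp only [pT_cons, pT_nil, map_add, map_mul, map_intCast, map_zero, map_one]
        push_cast
        linear_combination x * relB
      rw [e]
      simp only [map_add, U_ph, h0, h1, h2, h3, h4, h5, h6, nx, kv_add, kv_sc]
      ring
    | [], _ => trivial
    | [_], _ => trivial
    | [_, _], _ => trivial
    | [_, _, _], _ => trivial
    | [_, _, _, _], _ => trivial
    | [_, _, _, _, _], _ => trivial
    | [_, _, _, _, _, _], _ => trivial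

def stp : List K3 → List K3 → List K3 → List K3 → List K3
  | a0 :: a1 :: a2 :: a3 :: a4 :: a, b0 :: b1 :: b2 :: b3 :: b, c0 :: c1 :: c2 :: c3 :: c, d0 :: d1 :: d2 :: d =>
    kadd (kadd (ksc [2] (kT2 a1)) (kadd (ksc [-14] a2) (kadd (ksc [-7] a3) (ksc [-1] a4))))
    (kadd (kadd (ksc [0, 2] b0) (kadd (ksc [-21] b1) (kadd (ksc [-21] b2) (ksc [-5] b3))))
    (kadd (kadd (ksc [-14] c0) (kadd (ksc [-21] c1) (kadd (ksc [-9] c2) (ksc [-1] c3))))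
      (kadd (ksc [-7] d0) (kadd (ksc [-5] d1) (ksc [-1] d2)))))
    :: stp (a1 :: a2 :: a3 :: a4 :: a) (b1 :: b2 :: b3 :: b) (c1 :: c2 :: c3 :: c) (d1 :: d2 :: d)
  | _, _, _, _ => []
lemma stp_row (x : F) (l0 l1 l2 l3 : List K3) (h0 : Row x l0) (h1 : Row (Z2 * x) l1)
    (h2 : Row (Z2 * (Z2 * x)) l2) (h3 : Row (Z2 * (Z2 * (Z2 * x))) l3) :
    Row (Z2 * (Z2 * (Z2 * (Z2 * x)))) (stp l0 l1 l2 l3) := by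
  induction l0 generalizing x l1 l2 l3 with
  | nil => rw [stp]; trivial; simp
  | cons a0 l0 ih =>
    have key : ∀ l0' l1' l2' l3', a0 :: l0 = l0' → l1 = l1' → l2 = l2' → l3 = l3' → Row (Z2 * (Z2 * (Z2 * (Z2 * x)))) (stp l0' l1' l2' l3') := by
      intro l0' l1' l2' l3' g0 g1 g2 g3
      unfold stp
      split
      · rename_i A0 a1 a2 a3 a4 a b0 b1 b2 b3 b c0 c1 c2 c3 c d0 d1 d2 d
        subst g1 g2 g3
        obtain ⟨rfl, rfl⟩ := List.cons.inj g0
        have s1 : Row (Z2 * (Z * x)) (b1 :: b2 :: b3 :: b) := by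
          rw [show Z2 * (Z * x) = Z * (Z2 * x) by ring]; exact h1.2
        have s2 : Row (Z2 * (Z2 * (Z * x))) (c1 :: c2 :: c3 :: c) := by
          rw [show Z2 * (Z2 * (Z * x)) = Z * (Z2 * (Z2 * x)) by ring]; exact h2.2
        have s3 : Row (Z2 * (Z2 * (Z2 * (Z * x)))) (d1 :: d2 :: d) := by
          rw [show Z2 * (Z2 * (Z2 * (Z * x))) = Z * (Z2 * (Z2 * (Z2 * x))) by ring]; exact h3.2
        have s := ih (Z * x) _ _ _ h0.2 s1 s2 s3
        rw [show Z2 * (Z2 * (Z2 * (Z2 * (Z * x)))) = Z * (Z2 * (Z2 * (Z2 * (Z2 * x)))) by ring] at s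
        refine ⟨?_, s⟩
        obtain ⟨-, e1, e2, e3, e4, -⟩ := h0
        obtain ⟨f0, f1, f2, f3, -⟩ := h1
        obtain ⟨g0, g1, g2, g3, -⟩ := h2
        obtain ⟨i0, i1, i2, -⟩ := h3
        have hp : ∀ (n : ℤ) (y : F), ph (pT [n]) * y = ph (n : F) * y := by
          intro n y; rw [pT_cons, pT_nil]; simp
        have e : Z2 * (Z2 * (Z2 * (Z2 * x))) =
          ((ph (pT [2]) * (ph T2 * (Z * x)) + (ph (pT [-14]) * (Z * (Z * x)) + (ph (pT [-7]) * (Z * (Z * (Z * x))) + ph (pT [-1]) * (Z * (Z * (Z * (Z * x))))))))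
          + ((ph (pT [0, 2]) * (Z2 * x) + (ph (pT [-21]) * (Z * (Z2 * x)) + (ph (pT [-21]) * (Z * (Z * (Z2 * x))) + ph (pT [-5]) * (Z * (Z * (Z * (Z2 * x)))))))
          + ((ph (pT [-14]) * (Z2 * (Z2 * x)) + (ph (pT [-21]) * (Z * (Z2 * (Z2 * x))) + (ph (pT [-9]) * (Z * (Z * (Z2 * (Z2 * x)))) + ph (pT [-1]) * (Z * (Z * (Z * (Z2 * (Z2 * x))))))))
          + (ph (pT [-7]) * (Z2 * (Z2 * (Z2 * x))) + (ph (pT [-5]) * (Z * (Z2 * (Z2 * (Z2 * x)))) + ph (pT [-1]) * (Z * (Z * (Z2 * (Z2 * (Z2 * x)))))))))  := by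
          simp only [pT_cons, pT_nil, map_add, map_mul, map_intCast, map_zero, map_one]
          push_cast
          linear_combination x * relC
        rw [e]
        simp only [map_add, U_ph, e1, e2, e3, e4, f0, f1, f2, f3, g0, g1, g2, g3, i0, i1, i2, kv_add, kv_sc, kv_T2]
      · trivial
    exact key _ _ _ _ rfl rfl rfl rfl

def nxt (s : List K3 × List K3 × List K3 × List K3) : List K3 × List K3 × List K3 × List K3 :=
  (s.2.1, s.2.2.1, s.2.2.2, ext 7 (stp s.1 s.2.1 s.2.2.1 s.2.2.2))
def rws : ℕ → List K3 × List K3 × List K3 × List K3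
  | 0 => (ext 7 R0, ext 7 R1, ext 7 R2, ext 7 R3)
  | n + 1 => nxt (rws n)
lemma rws_row (n : ℕ) : Row (Z2 ^ n) (rws n).1 ∧ Row (Z2 * Z2 ^ n) (rws n).2.1 ∧
    Row (Z2 * (Z2 * Z2 ^ n)) (rws n).2.2.1 ∧ Row (Z2 * (Z2 * (Z2 * Z2 ^ n))) (rws n).2.2.2 := by
  induction n with
  | zero =>
    simp only [pow_zero, mul_one, rws]
    refine ⟨ext_row _ _ _ R0_row, ext_row _ _ _ R1_row, ?_, ?_⟩
    · rw [← pow_two]; exact ext_row _ _ _ R2_row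
    · rw [show Z2 * (Z2 * Z2) = Z2 ^ 3 by ring]; exact ext_row _ _ _ R3_row
  | succ n ih =>
    obtain ⟨h0, h1, h2, h3⟩ := ih
    rw [pow_succ', rws]
    exact ⟨h1, h2, h3, ext_row _ _ _ (stp_row _ _ _ _ _ h0 h1 h2 h3)⟩
def rw' (n : ℕ) : List K3 := (rws n).1
lemma rw_row (n) : Row (Z2 ^ n) (rw' n) := (rws_row n).1

end partL
end D5

namespace D5
open PowerSeries

section partM

/-! products -/
def t : F := T⁻¹
lemma tT : t * T = 1 := inv_mul_cancel₀ T_ne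
lemma t_ne : t ≠ 0 := inv_ne_zero T_ne
def p0 : F := ka * t
def p1 : F := T2 * t
def y : F := Z⁻¹
lemma yZ : y * Z = 1 := inv_mul_cancel₀ Z_ne
lemma y_ne : y ≠ 0 := inv_ne_zero Z_ne
def A5 : F := Z2 ^ 5 * y ^ 16
lemma T2_ne : T2 ≠ 0 := (map_ne_zero f2).2 T_ne

lemma T_mul : T * (q * j 7 ^ 4) = j 1 ^ 4 :=
  div_mul_cancel₀ _ (mul_ne_zero q_ne (pow_ne_zero _ (j_ne 7)))
lemma T2_mul : T2 * (q ^ 2 * j 14 ^ 4) = j 2 ^ 4 := by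
  have h := congrArg f2 T_mul
  rw [map_mul, map_mul, map_pow, map_pow, f2_j 7, f2_j 1, fr_q] at h
  exact h
lemma ee_mul : ee * (j 2 * j 7 ^ 7) = q ^ 2 * j 1 * j 14 ^ 7 :=
  div_mul_cancel₀ _ (mul_ne_zero (j_ne 2) (pow_ne_zero _ (j_ne 7)))
lemma Z_mul : Z * (q ^ 2 * j 49) = j 1 := by
  rw [Z]; linear_combination j 1 * iq_mul
lemma Z2_mul : Z2 * (q ^ 4 * j 98) = j 2 := by
  have h := congrArg f2 Z_mul
  rw [map_mul, map_mul, map_pow, f2_j 49, f2_j 1, fr_q] at h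
  rw [← pow_mul] at h
  exact h
lemma ph_ee : ph ee * (j 14 * j 49 ^ 7) = q ^ 14 * j 7 * j 98 ^ 7 := by
  have h := congrArg ph ee_mul
  rw [map_mul, map_mul, map_mul, map_mul, map_pow, map_pow, map_pow, ph_j 2, ph_j 7, ph_j 1, ph_j 14, fr_q, ← pow_mul] at h
  exact h
lemma ph_T' : ph T * (q ^ 7 * j 49 ^ 4) = j 7 ^ 4 := ph_T
lemma ph_T2 : ph T2 * (q ^ 14 * j 98 ^ 4) = j 14 ^ 4 := by
  have h := congrArg ph T2_mul
  rw [map_mul, map_mul, map_pow, map_pow, map_pow, ph_j 2, ph_j 14, fr_q, ← pow_mul] at h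
  exact h

lemma t_eq : t = y ^ 4 * ph T := by
  have hq := q_ne
  have h1 := j_ne 1; have h2 := j_ne 7; have h4 := j_ne 49
  have e1 : T = j 1 ^ 4 / (q * j 7 ^ 4) := eq_div_of_mul_eq (by simp [*]) T_mul
  have e2 : Z = j 1 / (q ^ 2 * j 49) := eq_div_of_mul_eq (by simp [*]) Z_mul
  have e3 : ph T = j 7 ^ 4 / (q ^ 7 * j 49 ^ 4) := eq_div_of_mul_eq (by simp [*]) ph_T'
  rw [t, y, e3, e1, e2]
  field_simp

lemma p1_eq : ph p1 * p1 = (Z2 * y) ^ 4 := by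
  have hq := q_ne
  have h1 := j_ne 1; have h2 := j_ne 7; have h4 := j_ne 49
  have h5 := j_ne 2; have h6 := j_ne 14; have h7 := j_ne 98
  have e1 : T = j 1 ^ 4 / (q * j 7 ^ 4) := eq_div_of_mul_eq (by simp [*]) T_mul
  have e2 : Z = j 1 / (q ^ 2 * j 49) := eq_div_of_mul_eq (by simp [*]) Z_mul
  have e3 : ph T = j 7 ^ 4 / (q ^ 7 * j 49 ^ 4) := eq_div_of_mul_eq (by simp [*]) ph_T'
  have e4 : T2 = j 2 ^ 4 / (q ^ 2 * j 14 ^ 4) := eq_div_of_mul_eq (by simp [*]) T2_mul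
  have e5 : Z2 = j 2 / (q ^ 4 * j 98) := eq_div_of_mul_eq (by simp [*]) Z2_mul
  have e6 : ph T2 = j 14 ^ 4 / (q ^ 14 * j 98 ^ 4) := eq_div_of_mul_eq (by simp [*]) ph_T2
  rw [p1, t, y, map_mul, map_inv₀, e3, e6, e1, e4, e2, e5]
  field_simp

def ff : F := j 2 ^ 7 * j 7 / (j 1 ^ 7 * j 14)
lemma ff_ee : ff = ee * T2 ^ 2 * t ^ 2 := by
  have hq := q_ne
  have h1 := j_ne 1; have h2 := j_ne 7
  have h5 := j_ne 2; have h6 := j_ne 14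
  have e1 : T = j 1 ^ 4 / (q * j 7 ^ 4) := eq_div_of_mul_eq (by simp [*]) T_mul
  have e4 : T2 = j 2 ^ 4 / (q ^ 2 * j 14 ^ 4) := eq_div_of_mul_eq (by simp [*]) T2_mul
  have e5 : ee = q ^ 2 * j 1 * j 14 ^ 7 / (j 2 * j 7 ^ 7) := rfl
  rw [ff, t, e1, e4, e5]
  field_simp
lemma ff_ph : ff = ph ee * (Z2 * y) ^ 7 := by
  have hq := q_ne
  have h1 := j_ne 1; have h2 := j_ne 7; have h4 := j_ne 49
  have h5 := j_ne 2; have h6 := j_ne 14; have h7 := j_ne 98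
  have e2 : Z = j 1 / (q ^ 2 * j 49) := eq_div_of_mul_eq (by simp [*]) Z_mul
  have e5 : Z2 = j 2 / (q ^ 4 * j 98) := eq_div_of_mul_eq (by simp [*]) Z2_mul
  have e6 : ph ee = q ^ 14 * j 7 * j 98 ^ 7 / (j 14 * j 49 ^ 7) := eq_div_of_mul_eq (by simp [*]) ph_ee
  rw [ff, y, e2, e5, e6]
  field_simp

lemma p0_ff : 1 + 7 * p0 = 8 * ff := by
  have h : (T + 8 - ka) * T2 ^ 2 = T ^ 2 + 7 * T * ka := by
    linear_combination TT - T2 * kT - T * kT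
  have he : 8 * ee = T + 8 - ka := by rw [ka]; ring
  rw [ff_ee, p0]
  have ht := tT
  linear_combination -(T2 ^ 2 * t ^ 2) * he - t ^ 2 * h - (t * T + 1 + 7 * t * ka) * ht
lemma p0_eq : 1 + 7 * p0 = ph (T + 8 - ka) * (Z2 * y) ^ 7 := by
  have he : 8 * ee = T + 8 - ka := by rw [ka]; ring
  rw [p0_ff, ff_ph, ← he, map_mul, map_ofNat]; ring
lemma p1_ne : p1 ≠ 0 := mul_ne_zero T2_ne t_ne
lemma p1_inv : p1⁻¹ = t * (7 * T + 49 + T2 - T * ka - 7 * ka) := by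
  refine inv_eq_of_mul_eq_one_right ?_
  rw [p1]
  have ht := tT
  have h : T2 * (7 * T + 49 + T2 - T * ka - 7 * ka) = T ^ 2 := by
    linear_combination TT - (T + 7) * kT
  linear_combination t ^ 2 * h + (t * T + 1) * ht
lemma p1_eq' : p1 = (Z2 * y) ^ 4 * ph p1⁻¹ := by
  rw [← p1_eq, map_inv₀]
  have : ph p1 ≠ 0 := (map_ne_zero ph).2 p1_ne
  field_simp

/-! lattices -/
def Lat (b : Fin 3 → F) (P : Fin 3 → ℕ → ℤ → Prop) : AddSubgroup F :=
  AddSubgroup.closure {x | ∃ i a k, P i a k ∧ x = 7 ^ a * t ^ k * b i}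
lemma Lat.gen {b P} {i : Fin 3} {a : ℕ} {k : ℤ} (h : P i a k) : 7 ^ a * t ^ k * b i ∈ Lat b P :=
  AddSubgroup.subset_closure ⟨i, a, k, h, rfl⟩
lemma Lat.map {b P} (f : F →+ F) (M : AddSubgroup F)
    (h : ∀ i a k, P i a k → f (7 ^ a * t ^ k * b i) ∈ M) {x : F} (hx : x ∈ Lat b P) : f x ∈ M := by
  have : Lat b P ≤ M.comap f := by
    rw [Lat, AddSubgroup.closure_le]
    rintro _ ⟨i, a, k, hP, rfl⟩
    exact h i a k hP
  exact this hx
lemma Lat.mul {b P P'} (a' : ℕ) (k' : ℤ) (h : ∀ i a k, P i a k → P' i (a + a') (k + k')) {x : F}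
    (hx : x ∈ Lat b P) : 7 ^ a' * t ^ k' * x ∈ Lat b P' := by
  refine Lat.map (AddMonoidHom.mulLeft (7 ^ a' * t ^ k')) _ ?_ hx
  intro i a k hP
  have := Lat.gen (b := b) (h i a k hP)
  rw [pow_add, zpow_add₀ t_ne] at this
  rw [AddMonoidHom.coe_mulLeft]
  convert this using 1; ring

def Pw (C o : Fin 3 → ℤ) (e : ℤ) (i : Fin 3) (a : ℕ) (k : ℤ) : Prop :=
  C i - 2 * e ≤ 4 * a - 7 * k ∧ o i + 2 * e ≤ 7 * k

lemma y7 : y ^ 7 = ph t ^ 2 * (1 + 7 * y + 21 * y ^ 2 + 49 * y ^ 3 + 147 * y ^ 4 + 343 * y ^ 5 + 343 * y ^ 6)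
    + ph t * (7 * y ^ 4 + 35 * y ^ 5 + 49 * y ^ 6) := by
  have h := relB
  have hT : ph T ≠ 0 := (map_ne_zero ph).2 T_ne
  have hZ := Z_ne
  rw [y, t, map_inv₀]
  field_simp
  linear_combination -h

lemma prop_lat (b : Fin 3 → F) (C o : Fin 3 → ℤ) (x : F) (e0 : ℤ)
    (h : ∀ i : ℕ, i < 7 → U (x * y ^ (e0 + i)) ∈ Lat b (Pw C o (e0 + i))) (n : ℕ) :
    U (x * y ^ (e0 + n)) ∈ Lat b (Pw C o (e0 + n)) := by
  induction n using Nat.strong_induction_on with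
  | _ n ih =>
    by_cases hn : n < 7
    · exact h n hn
    obtain ⟨m, rfl⟩ : ∃ m, n = m + 7 := ⟨n - 7, by omega⟩
    have step : ∀ (i a' : ℕ) (k' : ℤ), i < 7 → -2 * (7 - (i : ℤ)) ≤ 4 * a' - 7 * k' → 2 * (7 - (i : ℤ)) ≤ 7 * k' →
        7 ^ a' * t ^ k' * U (x * y ^ (e0 + (m + i : ℕ))) ∈ Lat b (Pw C o (e0 + (m + 7 : ℕ))) := by
      intro i a' k' hi h1 h2
      refine Lat.mul a' k' ?_ (ih (m + i) (by omega))
      rintro i' a k ⟨g1, g2⟩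
      constructor
      · push_cast at *; linarith
      · push_cast at *; linarith
    have hy : ∀ i : ℕ, y ^ (e0 + (m + i : ℕ)) = y ^ (e0 + m) * y ^ i := by
      intro i; rw [Nat.cast_add, ← add_assoc, zpow_add₀ y_ne, zpow_natCast]
    have e : U (x * y ^ (e0 + (m + 7 : ℕ))) =
      (7 ^ 0 * t ^ (2:ℤ) * U (x * y ^ (e0 + (m + 0 : ℕ))) + 7 ^ 1 * t ^ (2:ℤ) * U (x * y ^ (e0 + (m + 1 : ℕ)))
      + 3 • (7 ^ 1 * t ^ (2:ℤ) * U (x * y ^ (e0 + (m + 2 : ℕ)))) + 7 ^ 2 * t ^ (2:ℤ) * U (x * y ^ (e0 + (m + 3 : ℕ)))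
      + 3 • (7 ^ 2 * t ^ (2:ℤ) * U (x * y ^ (e0 + (m + 4 : ℕ)))) + 7 ^ 3 * t ^ (2:ℤ) * U (x * y ^ (e0 + (m + 5 : ℕ)))
      + 7 ^ 3 * t ^ (2:ℤ) * U (x * y ^ (e0 + (m + 6 : ℕ))))
      + (7 ^ 1 * t ^ (1:ℤ) * U (x * y ^ (e0 + (m + 4 : ℕ))) + 5 • (7 ^ 1 * t ^ (1:ℤ) * U (x * y ^ (e0 + (m + 5 : ℕ))))
      + 7 ^ 2 * t ^ (1:ℤ) * U (x * y ^ (e0 + (m + 6 : ℕ)))) := by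
      have hc : ∀ (a' k' : ℕ) (z : F), 7 ^ a' * t ^ (k' : ℤ) * U z = U (ph (7 ^ a' * t ^ k') * z) := by
        intro a' k' z; rw [U_ph, zpow_natCast]
      have h2 := hc; 
      simp only [show (2 : ℤ) = ((2 : ℕ) : ℤ) from rfl, show (1 : ℤ) = ((1 : ℕ) : ℤ) from rfl, hc, ← map_nsmul, ← map_add]
      congr 1
      simp only [hy, map_mul, map_pow, map_ofNat, nsmul_eq_mul]
      push_cast
      linear_combination (x * y ^ (e0 + m)) * y7
    rw [e]
    refine add_mem (add_mem (add_mem (add_mem (add_mem (add_mem (add_mem ?_ ?_) ?_) ?_) ?_) ?_) ?_) (add_mem (add_mem ?_ ?_) ?_)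
    all_goals first | apply AddSubgroup.nsmul_mem | skip
    all_goals apply step <;> norm_num

/-! checks -/
def pchk (d : ℕ) (am : ℤ → ℕ) (ok : ℤ → Bool) : ℤ → P1 → Bool
  | _, [] => true
  | k, c :: l => (c == 0 || (ok k && c % 7 ^ (d + am k) == 0)) && pchk d am ok (k - 1) l
lemma pchk_sound {b : Fin 3 → F} {P : Fin 3 → ℕ → ℤ → Prop} (i : Fin 3) (d : ℕ) (am ok)
    (h : ∀ k, ok k = true → P i (am k) k) (k : ℤ) (l : P1) (hl : pchk d am ok k l = true) :
    ∃ x ∈ Lat b P, pT l * t ^ k * b i = 7 ^ d * x := by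
  induction l generalizing k with
  | nil => exact ⟨0, zero_mem _, by simp [pT_nil]⟩
  | cons c l ih =>
    rw [pchk, Bool.and_eq_true] at hl
    obtain ⟨x, hx, e⟩ := ih _ hl.2
    have ht : T * t ^ k = t ^ (k - 1) := by
      rw [zpow_sub_one₀ t_ne, t, inv_inv]; ring
    have h1 : ∃ x ∈ Lat b P, (c : F) * t ^ k * b i = 7 ^ d * x := by
      have h0 := hl.1
      rw [Bool.or_eq_true, Bool.and_eq_true, beq_iff_eq, beq_iff_eq] at h0
      rcases h0 with h0 | ⟨h0, h1⟩
      · exact ⟨0, zero_mem _, by simp [h0]⟩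
      · obtain ⟨m, hm⟩ := Int.dvd_of_emod_eq_zero h1
        refine ⟨m • (7 ^ (am k) * t ^ k * b i), AddSubgroup.zsmul_mem _ (Lat.gen (h k h0)) m, ?_⟩
        rw [hm]; push_cast; rw [zsmul_eq_mul]; ring
    obtain ⟨x', hx', e'⟩ := h1
    refine ⟨x' + x, add_mem hx' hx, ?_⟩
    rw [pT_cons]
    linear_combination e' + e + pT l * b i * ht

def kchk (d : ℕ) (sh : ℤ) (am : Fin 3 → ℤ → ℕ) (ok : Fin 3 → ℤ → Bool) (V : K3) : Bool :=
  pchk d (am 0) (ok 0) sh V.1 && pchk d (am 1) (ok 1) sh V.2.1 && pchk d (am 2) (ok 2) sh V.2.2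
lemma kchk_sound {b : Fin 3 → F} {P : Fin 3 → ℕ → ℤ → Prop} (d : ℕ) (sh am ok)
    (h : ∀ i k, ok i k = true → P i (am i k) k) (V : K3) (hl : kchk d sh am ok V = true) :
    ∃ x ∈ Lat b P, (pT V.1 * b 0 + pT V.2.1 * b 1 + pT V.2.2 * b 2) * t ^ sh = 7 ^ d * x := by
  simp only [kchk, Bool.and_eq_true] at hl
  obtain ⟨x0, h0, e0⟩ := pchk_sound (b := b) (P := P) 0 d _ _ (h 0) _ _ hl.1.1
  obtain ⟨x1, h1, e1⟩ := pchk_sound (b := b) (P := P) 1 d _ _ (h 1) _ _ hl.1.2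
  obtain ⟨x2, h2, e2⟩ := pchk_sound (b := b) (P := P) 2 d _ _ (h 2) _ _ hl.2
  exact ⟨x0 + x1 + x2, add_mem (add_mem h0 h1) h2, by linear_combination e0 + e1 + e2⟩

def amw (C : Fin 3 → ℤ) (e : ℤ) (i : Fin 3) (k : ℤ) : ℕ := ((C i - 2 * e + 7 * k + 3) / 4).toNat
def okw (o : Fin 3 → ℤ) (e : ℤ) (i : Fin 3) (k : ℤ) : Bool := decide (o i + 2 * e ≤ 7 * k)
lemma okw_sound (C o e i k) (h : okw o e i k = true) : Pw C o e i (amw C e i k) k := by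
  have h := of_decide_eq_true h
  refine ⟨?_, h⟩
  rw [amw]; omega

end partM
end D5

namespace D5
open PowerSeries

section partN

def kvb (b : Fin 3 → F) (V : K3) : F := pT V.1 * b 0 + pT V.2.1 * b 1 + pT V.2.2 * b 2
def bE : Fin 3 → F := ![1, ka, T2]
def bO : Fin 3 → F := ![1, ka, ka + T2]
def tau (V : K3) : K3 := (V.1, add1 V.2.1 (mul1 [-1] V.2.2), V.2.2)
lemma kvb_E (V) : kvb bE V = kv V := by simp [kvb, kv, bE]
lemma kvb_O (V) : kvb bO (tau V) = kv V := by
  simp only [kvb, kv, bO, tau, pT_add, pT_mul, pT_cons, pT_nil]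
  simp; ring

def Fam (b : Fin 3 → F) (d : ℕ) (sh : ℤ) (x : F) : List K3 → Prop
  | [] => True
  | k :: l => 7 ^ d * U x = t ^ sh * kvb b k ∧ Fam b d sh (Z * x) l
def wch (d : ℕ) (sh : ℤ) (C o : Fin 3 → ℤ) : ℤ → List K3 → Bool
  | _, [] => true
  | e, k :: l => kchk d sh (amw C e) (okw o e) k && wch d sh C o (e - 1) l

lemma wch_sound {b d sh C o} (x : F) (e : ℤ) (l : List K3) (h : Fam b d sh x l)
    (hc : wch d sh C o e l = true) (i : ℕ) (hi : i < l.length) :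
    U (Z ^ i * x) ∈ Lat b (Pw C o (e - i)) := by
  induction l generalizing x e i with
  | nil => simp at hi
  | cons k l ih =>
    rw [wch, Bool.and_eq_true] at hc
    obtain ⟨h1, h2⟩ := h
    cases i with
    | zero =>
      obtain ⟨z, hz, ez⟩ := kchk_sound (b := b) (P := Pw C o e) d sh _ _ (okw_sound C o e) k hc.1
      rw [kvb, mul_comm (t ^ sh), ez] at h1
      have h7 : (7 : F) ^ d ≠ 0 := pow_ne_zero _ (by norm_num)
      have := mul_left_cancel₀ h7 h1
      simpa [this] using hz
    | succ i =>
      have := ih (Z * x) (e - 1) h2 hc.2 i (by simpa using hi)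
      rw [pow_succ, mul_assoc]
      convert this using 3
      push_cast; ring

lemma fam_all {b d sh C o} (x : F) (s : ℕ) (l : List K3) (h : Fam b d sh (x * y ^ (-(s : ℤ))) l)
    (hc : wch d sh C o (-(s : ℤ)) l = true) (hl : 7 ≤ l.length) (e : ℕ) :
    U (x * y ^ (e : ℤ)) ∈ Lat b (Pw C o e) := by
  have := prop_lat b C o x (-(s : ℤ) - 6) (fun i hi => ?_) (e + s + 6)
  · have h3 : -(s : ℤ) - 6 + (e + s + 6 : ℕ) = e := by push_cast; ring
    rwa [h3] at this
  · have h2 := wch_sound _ _ l h hc (6 - i) (by omega)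
    have h3 : (-(s : ℤ) - (6 - i : ℕ)) = -(s : ℤ) - 6 + i := by push_cast [Nat.cast_sub (show i ≤ 6 by omega)]; ring
    rw [h3] at h2
    convert h2 using 2
    have : y ^ (-(s : ℤ) - 6 + i) = Z ^ (6 - i) * y ^ (-(s : ℤ)) := by
      rw [← h3, sub_eq_add_neg, add_comm, zpow_add₀ y_ne, zpow_neg, zpow_natCast, y, inv_pow, inv_inv]
    rw [this]; ring

lemma row_drop (n : ℕ) (x : F) (l : List K3) (h : Row x l) : Row (Z ^ n * x) (l.drop n) := by
  induction n generalizing x l with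
  | zero => simpa using h
  | succ n ih =>
    cases l with
    | nil => simp [Row]
    | cons k l => rw [pow_succ, mul_assoc]; exact ih _ _ h.2
lemma fam_row (x : F) (l) (h : Row x l) : Fam bE 0 0 x l := by
  induction l generalizing x with
  | nil => trivial
  | cons k l ih => exact ⟨by rw [kvb_E, h.1]; simp, ih _ h.2⟩
lemma fam_tau {d sh} (x : F) (l) (h : Fam bE d sh x l) : Fam bO d sh x (l.map tau) := by
  induction l generalizing x with
  | nil => trivial
  | cons k l ih => exact ⟨by rw [kvb_O, h.1, kvb_E], ih _ h.2⟩
def minv (V : K3) : K3 := kadd (ksc [49, 7] V) (kadd (kT2 V) (ksc [-7, -1] (kka V)))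
lemma fam_p1 (x : F) (l) (h : Row x l) : Fam bE 0 1 (ph p1⁻¹ * x) (l.map minv) := by
  induction l generalizing x with
  | nil => trivial
  | cons k l ih =>
    refine ⟨?_, ?_⟩
    · rw [kvb_E, U_ph, h.1, minv, p1_inv]
      simp only [kv_add, kv_sc, kv_ka, kv_T2, pT_cons, pT_nil, zpow_one]
      push_cast; ring
    · have := ih _ h.2
      rwa [← mul_assoc, mul_comm _ Z, mul_assoc] at this
def m0 (V V' : K3) : K3 := kadd (ksc [8, 1] V) (kadd (ksc [-1] (kka V)) (ksc [-1] V'))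
lemma U7 (x : F) : 7 * U ((1 / 7) * x) = U x := by
  have h : 7 * U ((1 / 7) * x) = U ((7 : F) * ((1 / 7) * x)) := by
    have := U_ph 7 ((1 / 7) * x)
    rw [map_ofNat] at this
    rw [this]
  rw [h]; congr 1; ring
lemma fam_p0 (x x' : F) (l l') (h : Row x l) (h' : Row x' l') :
    Fam bE 1 0 ((1 / 7) * (ph (T + 8 - ka) * x - x')) (List.zipWith m0 l l') := by
  induction l generalizing x x' l' with
  | nil => trivial
  | cons k l ih =>
    cases l' with
    | nil => trivial
    | cons k' l' =>
      refine ⟨?_, ?_⟩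
      · rw [kvb_E, pow_one, U7, map_sub, U_ph, h.1, h'.1, m0]
        simp only [kv_add, kv_sc, kv_ka, pT_cons, pT_nil, zpow_zero]
        push_cast; ring
      · have := ih _ _ _ h.2 h'.2
        convert this using 1; ring
def mc (V V' : K3) : K3 := kadd (ksc [0, 1] V) (ksc [7] V')
lemma fam_c (x x' : F) (l l') (h : Fam bE 1 0 x l) (h' : Fam bE 0 1 x' l') :
    Fam bE 1 1 (x + x') (List.zipWith mc l l') := by
  induction l generalizing x x' l' with
  | nil => trivial
  | cons k l ih =>
    cases l' with
    | nil => trivial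
    | cons k' l' =>
      refine ⟨?_, ?_⟩
      · have h1 := h.1
        have h2 := h'.1
        rw [kvb_E] at *
        rw [mc]
        simp only [kv_add, kv_sc, pT_cons, pT_nil, map_add, zpow_zero, zpow_one, pow_zero, pow_one] at *
        push_cast
        linear_combination h1 + 7 * h2 - kv k * tT
      · have := ih _ _ _ h.2 h'.2
        rwa [← mul_add] at this

def CO : Fin 3 → ℤ := ![-26, -33, -33]
def oO : Fin 3 → ℤ := ![22, 29, 22]
def CE : Fin 3 → ℤ := ![-5, -8, -11]
def oE : Fin 3 → ℤ := ![-3, 4, 11]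
def oC : Fin 3 → ℤ := ![-2, 5, 12]

def lA1 := (rw' 5).map tau
def lAp1 := ((rw' 9).map minv).map tau
def lAp0 := (List.zipWith m0 (rw' 12) ((rw' 5).drop 7)).map tau
def l1 := rw' 0
def lp1 := (rw' 4).map minv
def lp0 := List.zipWith m0 (rw' 7) ((rw' 0).drop 7)
def lc := List.zipWith mc lp0 (((rw' 4).drop 3).map minv)
def wl (d : ℕ) (sh : ℤ) (C o : Fin 3 → ℤ) (e : ℤ) (l : List K3) : Bool :=
  wch d sh C o e (l.take 7) && (l.take 7).length == 7

lemma cA1 : wl 0 0 CO oO (-16) lA1 = true := by decide +kernel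
lemma cAp1 : wl 0 1 CO oO (-20) lAp1 = true := by decide +kernel
lemma cAp0 : wl 1 0 CO oO (-23) lAp0 = true := by decide +kernel
lemma ck1 : wl 0 0 CE oE 0 l1 = true := by decide +kernel
lemma cp1 : wl 0 1 CE oE (-4) lp1 = true := by decide +kernel
lemma cp0 : wl 1 0 CE oE (-7) lp0 = true := by decide +kernel
lemma cc : wl 1 1 CE oC (-7) lc = true := by decide +kernel

lemma fam_take {b d sh} (n : ℕ) (x : F) (l) (h : Fam b d sh x l) : Fam b d sh x (l.take n) := by
  induction l generalizing x n with
  | nil => simp [Fam]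
  | cons k l ih =>
    cases n with
    | zero => simp [Fam]
    | succ n => exact ⟨h.1, ih n _ h.2⟩
lemma fam_wl {b d sh C o} (x x' : F) (s : ℕ) (l : List K3) (h : Fam b d sh x' l)
    (hx : x' = x * y ^ (-(s : ℤ)))
    (hc : wl d sh C o (-(s : ℤ)) l = true) (e : ℕ) :
    U (x * y ^ (e : ℤ)) ∈ Lat b (Pw C o e) := by
  rw [wl, Bool.and_eq_true, beq_iff_eq] at hc
  subst hx
  exact fam_all x s _ (fam_take 7 _ _ h) hc.1 hc.2.ge e

lemma yi (s : ℕ) : y ^ (-(s : ℤ)) = Z ^ s := by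
  rw [zpow_neg, zpow_natCast, y, inv_pow, inv_inv]
lemma yZp (n : ℕ) : y ^ n * Z ^ n = 1 := by rw [← mul_pow, yZ, one_pow]
lemma p0_e : p0 = 1 / 7 * (ph (T + 8 - ka) * (Z2 * y) ^ 7 - 1) := by
  linear_combination 1 / 7 * p0_eq
lemma hA1 (e : ℕ) : U (A5 * y ^ (e : ℤ)) ∈ Lat bO (Pw CO oO e) := by
  refine fam_wl A5 _ 16 lA1 (fam_tau _ _ (fam_row _ _ (rw_row 5))) ?_ cA1 e
  rw [yi, A5]
  linear_combination -Z2 ^ 5 * yZp 16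
lemma hAp1 (e : ℕ) : U (A5 * p1 * y ^ (e : ℤ)) ∈ Lat bO (Pw CO oO e) := by
  refine fam_wl (A5 * p1) _ 20 lAp1 (fam_tau _ _ (fam_p1 _ _ (rw_row 9))) ?_ cAp1 e
  have := p1_eq'
  rw [yi, A5]
  linear_combination -Z2 ^ 9 * ph p1⁻¹ * yZp 20 - Z2 ^ 5 * y ^ 16 * Z ^ 20 * this
lemma hAp0 (e : ℕ) : U (A5 * p0 * y ^ (e : ℤ)) ∈ Lat bO (Pw CO oO e) := by
  refine fam_wl (A5 * p0) _ 23 lAp0 (fam_tau _ _ (fam_p0 _ _ _ _ (rw_row 12) (row_drop 7 _ _ (rw_row 5)))) ?_ cAp0 e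
  rw [yi, A5, p0_e]
  linear_combination -Z2 ^ 12 * (1 / 7) * ph (T + 8 - ka) * yZp 23 + (1 / 7) * Z2 ^ 5 * Z ^ 7 * yZp 16
lemma h1 (e : ℕ) : U (1 * y ^ (e : ℤ)) ∈ Lat bE (Pw CE oE e) := by
  refine fam_wl 1 _ 0 l1 (fam_row _ _ (rw_row 0)) ?_ ck1 e
  rw [yi]; simp
lemma hp1 (e : ℕ) : U (p1 * y ^ (e : ℤ)) ∈ Lat bE (Pw CE oE e) := by
  refine fam_wl p1 _ 4 lp1 (fam_p1 _ _ (rw_row 4)) ?_ cp1 e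
  have := p1_eq'
  rw [yi]
  linear_combination -Z ^ 4 * this - Z2 ^ 4 * ph p1⁻¹ * yZp 4
lemma hp0 (e : ℕ) : U (p0 * y ^ (e : ℤ)) ∈ Lat bE (Pw CE oE e) := by
  refine fam_wl p0 _ 7 lp0 (fam_p0 _ _ _ _ (rw_row 7) (row_drop 7 _ _ (rw_row 0))) ?_ cp0 e
  have := p0_e
  rw [yi]
  linear_combination -Z ^ 7 * this - Z2 ^ 7 * (1 / 7) * ph (T + 8 - ka) * yZp 7
lemma hpc (e : ℕ) : U ((p0 + p1) * y ^ (e : ℤ)) ∈ Lat bE (Pw CE oC e) := by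
  refine fam_wl (p0 + p1) _ 7 lc (fam_c _ _ _ _ (fam_p0 _ _ _ _ (rw_row 7) (row_drop 7 _ _ (rw_row 0)))
    (fam_p1 _ _ (row_drop 3 _ _ (rw_row 4)))) ?_ cc e
  have := p0_e
  have h2 := p1_eq'
  rw [yi]
  linear_combination -Z ^ 7 * this - Z2 ^ 7 * (1 / 7) * ph (T + 8 - ka) * yZp 7 -Z ^ 7 * h2 - Z2 ^ 4 * Z ^ 3 * ph p1⁻¹ * yZp 4
end partN
end D5

namespace D5
open PowerSeries

section partO

lemma U_tn (x : F) (a n : ℕ) : U (7 ^ a * t ^ (n : ℤ) * x) = 7 ^ a * t ^ (-(n : ℤ)) * U (x * y ^ ((4 * n : ℕ) : ℤ)) := by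
  have h : 7 ^ a * t ^ (n : ℤ) * x = ph (7 ^ a * T ^ n) * (x * y ^ ((4 * n : ℕ) : ℤ)) := by
    have := t_eq
    rw [zpow_natCast, zpow_natCast, map_mul, map_pow, map_pow, map_ofNat, pow_mul]
    rw [this, mul_pow]; ring
  rw [h, U_ph, zpow_neg, zpow_natCast t, t, inv_pow, inv_inv]
lemma lat_U {b C o P'} (x : F) (h : ∀ e : ℕ, U (x * y ^ (e : ℤ)) ∈ Lat b (Pw C o e)) (a n : ℕ)
    (hP : ∀ (i : Fin 3) (a' : ℕ) (k : ℤ), C i - 8 * n ≤ 4 * (a' : ℤ) - 7 * k → o i + 8 * n ≤ 7 * k → P' i (a' + a) (k + -(n : ℤ))) :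
    U (7 ^ a * t ^ (n : ℤ) * x) ∈ Lat b P' := by
  rw [U_tn]
  refine Lat.mul a _ ?_ (h (4 * n))
  rintro i a' k ⟨h1, h2⟩
  push_cast at h1 h2
  exact hP i a' k (by linarith) (by linarith)

def oE' : Fin 3 → ℤ := ![1, 8, 15]
def Po (i : Fin 3) (a : ℕ) (k : ℤ) : Prop := Pw CO oO 0 i a k ∧ (i = 2 → k = 4 → 1 ≤ a)
def LE : AddSubgroup F := Lat bE (Pw CE oE' 0)
def LO : AddSubgroup F := Lat bO Po

lemma tk (x : F) (k : ℤ) : t ^ k * x = t ^ (k - 1) * (x * t) := by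
  rw [zpow_sub_one₀ t_ne]; have := t_ne; field_simp

lemma odd_fam (x : F) (h : ∀ e : ℕ, U (x * y ^ (e : ℤ)) ∈ Lat bO (Pw CO oO e)) (a n : ℕ)
    (h1 : 1 ≤ a) (h2 : (n : ℤ) ≤ 4 * a) : U (7 ^ a * t ^ (n : ℤ) * x) ∈ LO := by
  refine lat_U x h a n ?_
  intro i a' k g1 g2
  refine ⟨⟨?_, ?_⟩, ?_⟩
  · push_cast; linarith
  · linarith
  · intros; omega
lemma odd_step {x : F} (hx : x ∈ LE) : U (A5 * x) ∈ LO := by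
  refine Lat.map (U.comp (AddMonoidHom.mulLeft A5)) _ ?_ hx
  intro i a k hP
  obtain ⟨h1, h2⟩ := hP
  rw [AddMonoidHom.comp_apply, AddMonoidHom.coe_mulLeft]
  fin_cases i
  · simp [CE, oE', bE] at h1 h2 ⊢
    obtain ⟨n, rfl⟩ := Int.eq_ofNat_of_zero_le (show 0 ≤ k by omega)
    rw [mul_comm]
    exact odd_fam _ hA1 a n (by omega) (by omega)
  · simp [CE, oE', bE] at h1 h2 ⊢
    obtain ⟨n, hn⟩ := Int.eq_ofNat_of_zero_le (show 0 ≤ k - 1 by omega)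
    have e : A5 * (7 ^ a * t ^ k * ka) = 7 ^ a * t ^ (n : ℤ) * (A5 * p0) := by
      rw [mul_assoc, tk, hn, p0]; ring
    rw [e]
    exact odd_fam _ hAp0 a n (by omega) (by omega)
  · simp [CE, oE', bE] at h1 h2 ⊢
    obtain ⟨n, hn⟩ := Int.eq_ofNat_of_zero_le (show 0 ≤ k - 1 by omega)
    have e : A5 * (7 ^ a * t ^ k * T2) = 7 ^ a * t ^ (n : ℤ) * (A5 * p1) := by
      rw [mul_assoc, tk, hn, p1]; ring
    rw [e]
    exact odd_fam _ hAp1 a n (by omega) (by omega)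
lemma even_fam {o} (x : F) (h : ∀ e : ℕ, U (x * y ^ (e : ℤ)) ∈ Lat bE (Pw CE o e)) (a n : ℕ)
    (ho : ∀ i, oE' i ≤ o i + n) (h2 : (n : ℤ) ≤ 4 * a) : U (7 ^ a * t ^ (n : ℤ) * x) ∈ LE := by
  refine lat_U x h a n ?_
  intro i a' k g1 g2
  have := ho i
  refine ⟨?_, ?_⟩
  · push_cast; linarith
  · linarith
lemma oE_le (n : ℕ) (hn : 4 ≤ n) (i) : oE' i ≤ oE i + n := by
  fin_cases i <;> simp [oE, oE'] <;> omega
lemma oC_le (n : ℕ) (hn : 3 ≤ n) (i) : oE' i ≤ oC i + n := by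
  fin_cases i <;> simp [oC, oE'] <;> omega
lemma even_step {x : F} (hx : x ∈ LO) : U x ∈ LE := by
  refine Lat.map U _ ?_ hx
  intro i a k hP
  obtain ⟨⟨h1, h2⟩, h3⟩ := hP
  fin_cases i
  · simp [CO, oO, bO] at h1 h2 h3 ⊢
    obtain ⟨n, rfl⟩ := Int.eq_ofNat_of_zero_le (show 0 ≤ k by omega)
    have := even_fam _ D5.h1 a n (oE_le n (by omega)) (by omega)
    rwa [mul_one] at this
  · simp [CO, oO, bO] at h1 h2 h3 ⊢
    obtain ⟨n, hn⟩ := Int.eq_ofNat_of_zero_le (show 0 ≤ k - 1 by omega)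
    have e : (7 ^ a * t ^ k * ka) = 7 ^ a * t ^ (n : ℤ) * p0 := by
      rw [mul_assoc, tk, hn, p0]; ring
    rw [e]
    exact even_fam _ hp0 a n (oE_le n (by omega)) (by omega)
  · simp [CO, oO, bO] at h1 h2 h3 ⊢
    obtain ⟨n, hn⟩ := Int.eq_ofNat_of_zero_le (show 0 ≤ k - 1 by omega)
    have e : (7 ^ a * t ^ k * (ka + T2)) = 7 ^ a * t ^ (n : ℤ) * (p0 + p1) := by
      rw [mul_assoc, tk, hn, p0, p1]; ring
    rw [e]
    by_cases h4 : 4 ≤ n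
    · rw [mul_add, map_add]
      exact add_mem (even_fam _ hp0 a n (oE_le n (by omega)) (by omega)) (even_fam _ hp1 a n (oE_le n (by omega)) (by omega))
    · have hk : k = 4 := by omega
      have := h3 hk
      exact even_fam _ hpc a n (oC_le n (by omega)) (by omega)

/-! first step -/
def nd (g0 g1 g2 g3 g4 g5 g6 : K3) : K3 :=
  kadd (ksc [0, 0, 0, 0, 0, 0, 0, 0, 0, 0, 0, 0, 1] g0) (kadd (ksc [0, 0, 0, 0, 0, 0, 0, 0, 0, 0, 7] g1)
  (kadd (ksc [0, 0, 0, 0, 0, 0, 0, 0, 21] g2) (kadd (ksc [0, 0, 0, 0, 0, 0, 49] g3)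
  (kadd (ksc [0, 0, 0, 0, 147, 7] g4) (kadd (ksc [0, 0, 343, 35] g5) (ksc [343, 49] g6))))))
def dn : ℕ → K3 → K3 → K3 → K3 → K3 → K3 → K3 → K3
  | 0, g0, _, _, _, _, _, _ => g0
  | n + 1, g0, g1, g2, g3, g4, g5, g6 => dn n g1 g2 g3 g4 g5 g6 (nd g0 g1 g2 g3 g4 g5 g6)
def gx (i : ℕ) (x : F) (g : K3) : Prop := kv g = T ^ (2 * i) * U (x * y ^ i)
lemma nd_gx (i x g0 g1 g2 g3 g4 g5 g6) (h0 : gx i x g0) (h1 : gx (i + 1) x g1) (h2 : gx (i + 2) x g2)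
    (h3 : gx (i + 3) x g3) (h4 : gx (i + 4) x g4) (h5 : gx (i + 5) x g5) (h6 : gx (i + 6) x g6) :
    gx (i + 7) x (nd g0 g1 g2 g3 g4 g5 g6) := by
  unfold gx at *
  have e : x * y ^ (i + 7) = ph (t ^ 2) * (x * y ^ i) + ph (7 * t ^ 2) * (x * y ^ (i + 1))
     + ph (21 * t ^ 2) * (x * y ^ (i + 2)) + ph (49 * t ^ 2) * (x * y ^ (i + 3))
     + ph (147 * t ^ 2 + 7 * t) * (x * y ^ (i + 4)) + ph (343 * t ^ 2 + 35 * t) * (x * y ^ (i + 5))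
     + ph (343 * t ^ 2 + 49 * t) * (x * y ^ (i + 6)) := by
    simp only [map_add, map_mul, map_pow, map_ofNat]
    linear_combination x * y ^ i * y7
  rw [e]
  simp only [map_add U, U_ph, nd, kv_add, kv_sc, h0, h1, h2, h3, h4, h5, h6, pT_cons, pT_nil]
  have hT := T_ne
  rw [t]
  push_cast
  field_simp
  ring
lemma dn_gx (n i x g0 g1 g2 g3 g4 g5 g6) (h0 : gx i x g0) (h1 : gx (i + 1) x g1) (h2 : gx (i + 2) x g2)
    (h3 : gx (i + 3) x g3) (h4 : gx (i + 4) x g4) (h5 : gx (i + 5) x g5) (h6 : gx (i + 6) x g6) :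
    gx (i + n) x (dn n g0 g1 g2 g3 g4 g5 g6) := by
  induction n generalizing i g0 g1 g2 g3 g4 g5 g6 with
  | zero => exact h0
  | succ n ih =>
    have := ih (i + 1) _ _ _ _ _ _ _ h1 h2 h3 h4 h5 h6 (nd_gx i x _ _ _ _ _ _ _ h0 h1 h2 h3 h4 h5 h6)
    rw [dn, show i + (n + 1) = i + 1 + n by omega]
    exact this
def rg (i : ℕ) : K3 := ksc (List.replicate (2 * i) 0 ++ [1]) ((rw' 5).getD (6 - i) ([], [], []))
lemma row_get (x : F) (l : List K3) (h : Row x l) (i : ℕ) (hi : i < l.length) (z) : U (Z ^ i * x) = kv (l.getD i z) := by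
  induction l generalizing x i with
  | nil => simp at hi
  | cons k l ih =>
    cases i with
    | zero => simpa using h.1
    | succ i =>
      have := ih _ h.2 i (by simpa using hi)
      rw [pow_succ, mul_assoc, this]; simp
lemma pT_rep (n : ℕ) : pT (List.replicate n 0 ++ [1]) = T ^ n := by
  induction n with
  | zero => simp [pT_cons, pT_nil]
  | succ n ih => rw [List.replicate_succ, List.cons_append, pT_cons, ih, pow_succ']; simp
lemma rg_gx (i : ℕ) (hi : i ≤ 6) : gx i (Z2 ^ 5 * Z ^ 6) (rg i) := by
  have hl : (rw' 5).length = 14 := by decide +kernel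
  rw [gx, rg, kv_sc, pT_rep, ← row_get _ _ (rw_row 5) (6 - i) (by omega)]
  congr 2
  have h : Z ^ 6 = Z ^ (6 - i) * Z ^ i := by rw [← pow_add]; congr 1; omega
  rw [h]
  linear_combination -Z2 ^ 5 * Z ^ (6 - i) * yZp i
def r22 (_ : Unit) : K3 := dn 22 (rg 0) (rg 1) (rg 2) (rg 3) (rg 4) (rg 5) (rg 6)
lemma r22_gx : gx 22 (Z2 ^ 5 * Z ^ 6) (r22 ()) := by
  rw [r22]
  have := dn_gx 22 0 (Z2 ^ 5 * Z ^ 6) _ _ _ _ _ _ _ (rg_gx 0 (by omega)) (rg_gx 1 (by omega)) (rg_gx 2 (by omega))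
    (rg_gx 3 (by omega)) (rg_gx 4 (by omega)) (rg_gx 5 (by omega)) (rg_gx 6 (by omega))
  rw [zero_add] at this
  exact this
def am' (i : Fin 3) (k : ℤ) : ℕ := max (amw CO 0 i k) (if i = 2 ∧ k = 4 then 1 else 0)
lemma c22 : kchk 0 ((2 * 22 : ℕ) : ℤ) am' (okw oO 0) (tau (r22 ())) = true := by decide +kernel
lemma am_le (i k) : amw CO 0 i k ≤ am' i k := le_max_left _ _
lemma am_24 : 1 ≤ am' 2 4 := by rw [am', if_pos ⟨rfl, rfl⟩]; exact le_max_right _ _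
lemma am_ok (i : Fin 3) (k : ℤ) (h : okw oO 0 i k = true) : Po i (am' i k) k := by
  obtain ⟨g1, g2⟩ := okw_sound CO oO 0 i k h
  have h3 : ((amw CO 0 i k : ℕ) : ℤ) ≤ (am' i k : ℕ) := Int.ofNat_le.2 (am_le i k)
  refine ⟨⟨by linarith, g2⟩, ?_⟩
  rintro rfl rfl
  exact am_24
lemma od1 : Z2 ^ 5 * Z ^ 6 * y ^ 22 = A5 := by
  rw [A5]; linear_combination Z2 ^ 5 * y ^ 16 * yZp 6
lemma od2 (n : ℕ) : T ^ n * t ^ (n : ℤ) = 1 := by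
  rw [zpow_natCast, ← mul_pow, mul_comm, tT, one_pow]
lemma od3 (V : K3) (i : ℕ) (x z : F) (h : gx i x V)
   (e : kvb bO (tau V) * t ^ ((2 * i : ℕ) : ℤ) = 7 ^ 0 * z) : U (x * y ^ i) = z := by
  have h : kv V = T ^ (2 * i) * U (x * y ^ i) := h
  rw [kvb_O, h, pow_zero, one_mul, mul_right_comm, od2, one_mul] at e
  exact e
lemma od4 (V : K3) (i : ℕ) (x : F) (h : gx i x V)
   (c : kchk 0 ((2 * i : ℕ) : ℤ) am' (okw oO 0) (tau V) = true) : U (x * y ^ i) ∈ LO := by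
  obtain ⟨z, hz, e⟩ := kchk_sound (b := bO) (P := Po) 0 _ am' (okw oO 0) am_ok (tau V) c
  rw [od3 V i x z h e]; exact hz
lemma odd0 : U A5 ∈ LO := by
  have := od4 (r22 ()) 22 _ r22_gx c22
  rwa [od1] at this
end partO
end D5

namespace D5
open PowerSeries

section partP

def io' : LaurentSeries ℤ →+* F where
  toFun x := x.map (Int.castRingHom ℂ)
  map_zero' := by ext; simp
  map_add' x y := by ext; simp
  map_one' := HahnSeries.map_one (Int.castRingHom ℂ).toMonoidWithZeroHom
  map_mul' x y := HahnSeries.map_mul (Int.castRingHom ℂ : ℤ →ₙ+* ℂ)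
lemma io'_coeff (x : LaurentSeries ℤ) (n : ℤ) : (io' x).coeff n = (x.coeff n : ℂ) := rfl
lemma io'_inj : Function.Injective io' := by
  intro x y h
  ext n
  have := congrArg (fun z : F => z.coeff n) h
  simp only [io'_coeff] at this
  exact_mod_cast this
lemma io'_of (f : ℤ⟦X⟧) : io' (HahnSeries.ofPowerSeries ℤ ℤ f) = io (PowerSeries.map (Int.castRingHom ℂ) f) := by
  ext n
  rw [io'_coeff]
  have h1 := PowerSeries.coeff_coe f n
  have h2 := PowerSeries.coeff_coe (PowerSeries.map (Int.castRingHom ℂ) f) n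
  rw [h1, h2]
  split_ifs <;> simp
def oz (f : ℤ⟦X⟧) : F := io' (HahnSeries.ofPowerSeries ℤ ℤ f)
def ozh : ℤ⟦X⟧ →+* F := io'.comp (HahnSeries.ofPowerSeries ℤ ℤ)
lemma oz_J (b : ℕ) : io' (HahnSeries.ofPowerSeries ℤ ℤ (J b)) = j b := by
  rw [io'_of]
  exact congrArg io (map_JR (Int.castRingHom ℂ) b)
lemma oz_X : io' (HahnSeries.ofPowerSeries ℤ ℤ X) = q := by
  rw [io'_of, PowerSeries.map_X]; rfl

lemma tps_add (t : ℤ⟦X⟧) (c c' : ℕ → ℤ) : tpowSum t (fun n => c n + c' n) = tpowSum t c + tpowSum t c' := by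
  ext m; simp [tpowSum, add_mul, Finset.sum_add_distrib]
lemma tps_zero (t : ℤ⟦X⟧) : tpowSum t (fun _ => 0) = 0 := by
  ext m; simp [tpowSum]
lemma tps_single (t : ℤ⟦X⟧) (ht : X ∣ t) (n : ℕ) (z : ℤ) :
    tpowSum t (fun m => if m = n then z else 0) = (z : ℤ⟦X⟧) * t ^ n := by
  ext m
  have e : (z : ℤ⟦X⟧) = C z := by simp
  rw [tpowSum, coeff_mk, e, coeff_C_mul]
  simp only [ite_mul, zero_mul, Finset.sum_ite_eq', Finset.mem_range]
  split_ifs with h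
  · rfl
  · rw [X_pow_dvd_iff.1 (pow_dvd_pow_of_dvd ht n) m (by omega), mul_zero]

def rhs (t p0 : ℤ⟦X⟧) (p1 : LaurentSeries ℤ) (d : ℕ → ℕ → ℤ) : LaurentSeries ℤ :=
  HahnSeries.ofPowerSeries ℤ ℤ
            (p0 * tpowSum t fun n =>
              if 1 ≤ n then d n 0 * 7 ^ ((7 * n + 2) / 4) else 0)
        + p1 * HahnSeries.ofPowerSeries ℤ ℤ
            (tpowSum t fun n =>
              if 2 ≤ n then d n 1 * 7 ^ ((7 * n - 1) / 4) else 0)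
        + HahnSeries.ofPowerSeries ℤ ℤ
            (tpowSum t fun n =>
              if 1 ≤ n then d n 2 * 7 ^ ((7 * n - 2) / 4) else 0)
lemma if_add (P : Prop) [Decidable P] (x y e : ℤ) : (if P then (x + y) * e else 0) = (if P then x * e else 0) + (if P then y * e else 0) := by
  split_ifs <;> ring
def rh (t p0 : ℤ⟦X⟧) (p1 : LaurentSeries ℤ) : (ℕ → ℕ → ℤ) →+ LaurentSeries ℤ where
  toFun := rhs t p0 p1
  map_zero' := by
    simp [rhs, tps_zero]
  map_add' d d' := by
    simp only [rhs, Pi.add_apply, if_add, tps_add, mul_add, map_add]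
    ring
lemma rhs_2 (t p0 : ℤ⟦X⟧) (p1 : LaurentSeries ℤ) (ht : X ∣ t) (n a : ℕ) (hn : 1 ≤ n) (ha : (7 * n - 2) / 4 ≤ a) :
    rhs t p0 p1 (fun m i => if m = n ∧ i = 2 then 7 ^ (a - (7 * n - 2) / 4) else 0) =
      HahnSeries.ofPowerSeries ℤ ℤ (7 ^ a * t ^ n) := by
  have h : (fun m => if 1 ≤ m then (if m = n ∧ (2 : ℕ) = 2 then (7 : ℤ) ^ (a - (7 * n - 2) / 4) else 0) * 7 ^ ((7 * m - 2) / 4) else 0)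
     = fun m => if m = n then (7 : ℤ) ^ a else 0 := by
    funext m
    by_cases hm : m = n
    · subst hm
      rw [if_pos hn, if_pos ⟨rfl, rfl⟩, if_pos rfl, ← pow_add, Nat.sub_add_cancel ha]
    · simp [hm]
  have h' := tps_single t ht n (7 ^ a)
  rw [← h] at h'
  unfold rhs
  rw [h']
  simp [tps_zero]
lemma rhs_0 (t p0 : ℤ⟦X⟧) (p1 : LaurentSeries ℤ) (ht : X ∣ t) (n a : ℕ) (hn : 1 ≤ n) (ha : (7 * n + 2) / 4 ≤ a) :
    rhs t p0 p1 (fun m i => if m = n ∧ i = 0 then 7 ^ (a - (7 * n + 2) / 4) else 0) =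
      HahnSeries.ofPowerSeries ℤ ℤ (p0 * (7 ^ a * t ^ n)) := by
  have h : (fun m => if 1 ≤ m then (if m = n ∧ (0 : ℕ) = 0 then (7 : ℤ) ^ (a - (7 * n + 2) / 4) else 0) * 7 ^ ((7 * m + 2) / 4) else 0)
     = fun m => if m = n then (7 : ℤ) ^ a else 0 := by
    funext m
    by_cases hm : m = n
    · subst hm
      rw [if_pos hn, if_pos ⟨rfl, rfl⟩, if_pos rfl, ← pow_add, Nat.sub_add_cancel ha]
    · simp [hm]
  have h' := tps_single t ht n (7 ^ a)
  rw [← h] at h'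
  unfold rhs
  rw [h']
  simp [tps_zero]
lemma rhs_1 (t p0 : ℤ⟦X⟧) (p1 : LaurentSeries ℤ) (ht : X ∣ t) (n a : ℕ) (hn : 2 ≤ n) (ha : (7 * n - 1) / 4 ≤ a) :
    rhs t p0 p1 (fun m i => if m = n ∧ i = 1 then 7 ^ (a - (7 * n - 1) / 4) else 0) =
      p1 * HahnSeries.ofPowerSeries ℤ ℤ (7 ^ a * t ^ n) := by
  have h : (fun m => if 2 ≤ m then (if m = n ∧ (1 : ℕ) = 1 then (7 : ℤ) ^ (a - (7 * n - 1) / 4) else 0) * 7 ^ ((7 * m - 1) / 4) else 0)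
     = fun m => if m = n then (7 : ℤ) ^ a else 0 := by
    funext m
    by_cases hm : m = n
    · subst hm
      rw [if_pos hn, if_pos ⟨rfl, rfl⟩, if_pos rfl, ← pow_add, Nat.sub_add_cancel ha]
    · simp [hm]
  have h' := tps_single t ht n (7 ^ a)
  rw [← h] at h'
  unfold rhs
  rw [h']
  simp [tps_zero]

lemma ozh_app (f : ℤ⟦X⟧) : io' (HahnSeries.ofPowerSeries ℤ ℤ f) = ozh f := rfl
lemma ozh_g (tt : ℤ⟦X⟧) (x : F) (ht : ozh tt = x) (n a : ℕ) : ozh (7 ^ a * tt ^ n) = 7 ^ a * x ^ n := by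
  rw [map_mul, map_pow, map_pow, ht, map_ofNat]
lemma g_2 (tt pp0 : ℤ⟦X⟧) (pp1 : LaurentSeries ℤ) (hX : X ∣ tt)
    (ht : ozh tt = t) (n a : ℕ) (hn : 1 ≤ n) (ha : (7 * n - 2) / 4 ≤ a) :
    ∃ d, io' (rhs tt pp0 pp1 d) = 7 ^ a * t ^ n :=
  ⟨_, by rw [rhs_2 tt pp0 pp1 hX n a hn ha, ozh_app, ozh_g tt t ht]⟩
lemma g_0 (tt pp0 : ℤ⟦X⟧) (pp1 : LaurentSeries ℤ) (hX : X ∣ tt)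
    (ht : ozh tt = t) (h0 : ozh pp0 = p0) (n a : ℕ) (hn : 1 ≤ n) (ha : (7 * n + 2) / 4 ≤ a) :
    ∃ d, io' (rhs tt pp0 pp1 d) = p0 * (7 ^ a * t ^ n) :=
  ⟨_, by rw [rhs_0 tt pp0 pp1 hX n a hn ha, ozh_app, map_mul, ozh_g tt t ht, h0]⟩
lemma g_1 (tt pp0 : ℤ⟦X⟧) (pp1 : LaurentSeries ℤ) (hX : X ∣ tt)
    (ht : ozh tt = t) (h1 : io' pp1 = p1) (n a : ℕ) (hn : 2 ≤ n) (ha : (7 * n - 1) / 4 ≤ a) :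
    ∃ d, io' (rhs tt pp0 pp1 d) = p1 * (7 ^ a * t ^ n) :=
  ⟨_, by rw [rhs_1 tt pp0 pp1 hX n a hn ha, map_mul io', ozh_app, ozh_g tt t ht, h1]⟩
lemma bE0 : bE 0 = 1 := rfl
lemma bE1 : bE 1 = ka := rfl
lemma bE2 : bE 2 = T2 := rfl
lemma Pw0 (a k) (h : Pw CE oE' 0 0 a k) : 1 ≤ k ∧ 7 * k - 5 ≤ 4 * a := by
  obtain ⟨g1, g2⟩ := h
  simp [CE, oE'] at g1 g2
  constructor <;> omega
lemma Pw1 (a k) (h : Pw CE oE' 0 1 a k) : 2 ≤ k ∧ 7 * k - 8 ≤ 4 * a := by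
  obtain ⟨g1, g2⟩ := h
  simp [CE, oE'] at g1 g2
  constructor <;> omega
lemma Pw2 (a k) (h : Pw CE oE' 0 2 a k) : 3 ≤ k ∧ 7 * k - 11 ≤ 4 * a := by
  obtain ⟨g1, g2⟩ := h
  simp [CE, oE'] at g1 g2
  constructor <;> omega
lemma LE_gen (tt pp0 : ℤ⟦X⟧) (pp1 : LaurentSeries ℤ) (hX : X ∣ tt)
    (ht : ozh tt = t) (h0 : ozh pp0 = p0) (h1 : io' pp1 = p1) (i : Fin 3) (a : ℕ) (k : ℤ)
    (h : Pw CE oE' 0 i a k) : ∃ d, io' (rhs tt pp0 pp1 d) = 7 ^ a * t ^ k * bE i := by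
  have hi : i = 0 ∨ i = 1 ∨ i = 2 := by clear h; revert i; decide
  rcases hi with rfl | rfl | rfl
  · obtain ⟨g1, g2⟩ := Pw0 a k h
    obtain ⟨n, rfl⟩ := Int.eq_ofNat_of_zero_le (show 0 ≤ k by omega)
    obtain ⟨d, hd⟩ := g_2 tt pp0 pp1 hX ht n a (by omega) (by omega)
    exact ⟨d, by rw [hd, bE0, mul_one, zpow_natCast]⟩
  · obtain ⟨g1, g2⟩ := Pw1 a k h
    obtain ⟨n, hn⟩ := Int.eq_ofNat_of_zero_le (show 0 ≤ k - 1 by omega)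
    obtain ⟨d, hd⟩ := g_0 tt pp0 pp1 hX ht h0 n a (by omega) (by omega)
    refine ⟨d, ?_⟩
    rw [hd, bE1, mul_assoc _ _ ka, tk, hn, zpow_natCast, p0]
    ring
  · obtain ⟨g1, g2⟩ := Pw2 a k h
    obtain ⟨n, hn⟩ := Int.eq_ofNat_of_zero_le (show 0 ≤ k - 1 by omega)
    obtain ⟨d, hd⟩ := g_1 tt pp0 pp1 hX ht h1 n a (by omega) (by omega)
    refine ⟨d, ?_⟩
    rw [hd, bE2, mul_assoc _ _ T2, tk, hn, zpow_natCast, p1]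
    ring
lemma rh_app (t p0 p1 d) : rh t p0 p1 d = rhs t p0 p1 d := rfl
lemma LE_rhs (tt pp0 : ℤ⟦X⟧) (pp1 : LaurentSeries ℤ) (hX : X ∣ tt)
    (ht : ozh tt = t) (h0 : ozh pp0 = p0) (h1 : io' pp1 = p1)
    (x : LaurentSeries ℤ) (hx : io' x ∈ LE) : ∃ d, x = rhs tt pp0 pp1 d := by
  have key : ∀ z ∈ LE, ∃ d, io' (rhs tt pp0 pp1 d) = z := by
    intro z hz
    rw [LE, Lat] at hz
    induction hz using AddSubgroup.closure_induction with
    | mem z hz =>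
      obtain ⟨i, a, k, h, rfl⟩ := hz
      exact LE_gen tt pp0 pp1 hX ht h0 h1 i a k h
    | zero => exact ⟨0, by rw [← rh_app, map_zero, map_zero]⟩
    | add a b _ _ ha hb =>
      obtain ⟨d, hd⟩ := ha
      obtain ⟨d', hd'⟩ := hb
      exact ⟨d + d', by rw [← hd, ← hd', ← rh_app, ← rh_app, ← rh_app, map_add, map_add]⟩
    | neg a _ ha =>
      obtain ⟨d, hd⟩ := ha
      exact ⟨-d, by rw [← hd, ← rh_app, ← rh_app, map_neg, map_neg]⟩
  obtain ⟨d, hd⟩ := key _ hx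
  exact ⟨d, (io'_inj hd).symm⟩

lemma A5_mul : A5 * (j 1 ^ 16 * j 98 ^ 5) = q ^ 12 * j 2 ^ 5 * j 49 ^ 16 := by
  have hq := q_ne
  have h1 := j_ne 1; have h4 := j_ne 49
  have h5 := j_ne 2; have h7 := j_ne 98
  have e2 : Z = j 1 / (q ^ 2 * j 49) := eq_div_of_mul_eq (by simp [*]) Z_mul
  have e5 : Z2 = j 2 / (q ^ 4 * j 98) := eq_div_of_mul_eq (by simp [*]) Z2_mul
  rw [A5, y, e2, e5]
  field_simp
lemma p1_mul : p1 * (q * j 1 ^ 4 * j 14 ^ 4) = j 2 ^ 4 * j 7 ^ 4 := by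
  have hq := q_ne
  have h1 := j_ne 1; have h2 := j_ne 7
  have h5 := j_ne 2; have h6 := j_ne 14
  have e1 : T = j 1 ^ 4 / (q * j 7 ^ 4) := eq_div_of_mul_eq (by simp [*]) T_mul
  have e4 : T2 = j 2 ^ 4 / (q ^ 2 * j 14 ^ 4) := eq_div_of_mul_eq (by simp [*]) T2_mul
  rw [p1, t, e1, e4]
  field_simp
lemma t_mul : t * j 1 ^ 4 = q * j 7 ^ 4 := by
  linear_combination -t * T_mul + q * j 7 ^ 4 * tT

theorem main
    (t : PowerSeries ℤ) (ht : t * (J 1) ^ 4 = PowerSeries.X * (J 7) ^ 4)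
    (p0 : PowerSeries ℤ)
    (hp0 : (1 + 7 * p0) * ((J 1) ^ 7 * J 14) = 8 * (J 2) ^ 7 * J 7)
    (p1 : LaurentSeries ℤ)
    (hp1 : p1 * HahnSeries.ofPowerSeries ℤ ℤ (PowerSeries.X * (J 1) ^ 4 * (J 14) ^ 4)
        = HahnSeries.ofPowerSeries ℤ ℤ ((J 2) ^ 4 * (J 7) ^ 4))
    (U : LaurentSeries ℤ → LaurentSeries ℤ)
    (hU : ∀ (f : LaurentSeries ℤ) (n : ℤ), (U f).coeff n = f.coeff (7 * n))
    (A5 : LaurentSeries ℤ)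
    (hA5 : A5 * HahnSeries.ofPowerSeries ℤ ℤ ((J 1) ^ 16 * (J 98) ^ 5)
        = HahnSeries.ofPowerSeries ℤ ℤ (PowerSeries.X ^ 12 * (J 2) ^ 5 * (J 49) ^ 16))
    (L : ℕ → LaurentSeries ℤ) (hL0 : L 0 = 1)
    (hLodd : ∀ β : ℕ, L (2 * β + 1) = U (A5 * L (2 * β)))
    (hLeven : ∀ β : ℕ, L (2 * β + 2) = U (L (2 * β + 1)))
    (α : ℕ) (hα : 1 ≤ α) : ∃ d, L (2 * α) = rhs t p0 p1 d := by
  have hJ : ∀ b, ozh (J b) = j b := oz_J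
  have hq : ozh X = q := oz_X
  have hX : X ∣ t := by
    have h : (X : ℤ⟦X⟧) ∣ t * (J 1) ^ 4 := ⟨_, ht⟩
    have hu : IsUnit ((J 1) ^ 4) := (JR_unit (R := ℤ) 1 le_rfl).pow 4
    exact (hu.dvd_mul_right).1 h
  have et : ozh t = D5.t := by
    have h := congrArg ozh ht
    simp only [map_mul, map_pow, hJ, hq] at h
    refine mul_right_cancel₀ (pow_ne_zero 4 (j_ne 1)) (h.trans t_mul.symm)
  have e0 : ozh p0 = D5.p0 := by
    have h := congrArg ozh hp0
    simp only [map_mul, map_pow, map_add, map_one, map_ofNat, hJ] at h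
    have h2 : ff * (j 1 ^ 7 * j 14) = j 2 ^ 7 * j 7 :=
      div_mul_cancel₀ _ (mul_ne_zero (pow_ne_zero _ (j_ne 1)) (j_ne 14))
    have h3 : (1 + 7 * ozh p0) * (j 1 ^ 7 * j 14) = (1 + 7 * D5.p0) * (j 1 ^ 7 * j 14) := by
      rw [h, p0_ff]; linear_combination -8 * h2
    have h4 := mul_right_cancel₀ (mul_ne_zero (pow_ne_zero _ (j_ne 1)) (j_ne 14)) h3
    linear_combination 1 / 7 * h4
  have e1 : io' p1 = D5.p1 := by
    have h := congrArg io' hp1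
    rw [map_mul io'] at h
    change _ * ozh _ = ozh _ at h
    simp only [map_mul, map_pow, hJ, hq] at h
    exact mul_right_cancel₀ (mul_ne_zero (mul_ne_zero q_ne (pow_ne_zero _ (j_ne 1))) (pow_ne_zero _ (j_ne 14))) (h.trans p1_mul.symm)
  have eA : io' A5 = D5.A5 := by
    have h := congrArg io' hA5
    rw [map_mul io'] at h
    change _ * ozh _ = ozh _ at h
    simp only [map_mul, map_pow, hJ, hq] at h
    exact mul_right_cancel₀ (mul_ne_zero (pow_ne_zero _ (j_ne 1)) (pow_ne_zero _ (j_ne 98))) (h.trans A5_mul.symm)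
  have eU : ∀ x, io' (U x) = D5.U (io' x) := by
    intro x; ext n
    rw [U_coeff, io'_coeff, io'_coeff, hU]
  have key : ∀ β : ℕ, io' (L (2 * (β + 1))) ∈ LE := by
    intro β
    induction β with
    | zero =>
      rw [show 2 * (0 + 1) = 2 * 0 + 2 by rfl, hLeven, hLodd, eU, eU, mul_zero, hL0, mul_one, eA]
      exact even_step odd0
    | succ n ih =>
      rw [show 2 * (n + 1 + 1) = 2 * (n + 1) + 2 by ring, hLeven, hLodd, eU, eU, map_mul, eA]
      exact even_step (odd_step ih)
  obtain ⟨β, rfl⟩ : ∃ β, α = β + 1 := ⟨α - 1, by omega⟩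
  exact LE_rhs t p0 p1 hX et e0 e1 _ (key β)
end partP
end D5

/-- in the d₅ tower, for every `α ≥ 1` there are integers `d(n,i)` with
`L_{2α} = p₀·∑_{n≥1} d(n,0)·7^{⌊(7n+2)/4⌋}·tⁿ + p₁·∑_{n≥2} d(n,1)·7^{⌊(7n−1)/4⌋}·tⁿ
 + ∑_{n≥1} d(n,2)·7^{⌊(7n−2)/4⌋}·tⁿ`.
Here `t = q·J_7^4/J_1^4`, `p₀ = (8·J_2^7·J_7/(J_1^7·J_14) − 1)/7`,
`p₁ = q⁻¹·J_2^4·J_7^4/(J_1^4·J_14^4)`, all given by their defining equations. -/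
theorem stmt16
    (t : PowerSeries ℤ) (ht : t * (J 1) ^ 4 = PowerSeries.X * (J 7) ^ 4)
    (p0 : PowerSeries ℤ)
    (hp0 : (1 + 7 * p0) * ((J 1) ^ 7 * J 14) = 8 * (J 2) ^ 7 * J 7)
    (p1 : LaurentSeries ℤ)
    (hp1 : p1 * HahnSeries.ofPowerSeries ℤ ℤ (PowerSeries.X * (J 1) ^ 4 * (J 14) ^ 4)
        = HahnSeries.ofPowerSeries ℤ ℤ ((J 2) ^ 4 * (J 7) ^ 4))
    (U : LaurentSeries ℤ → LaurentSeries ℤ)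
    (hU : ∀ (f : LaurentSeries ℤ) (n : ℤ), (U f).coeff n = f.coeff (7 * n))
    (A5 : LaurentSeries ℤ)
    (hA5 : A5 * HahnSeries.ofPowerSeries ℤ ℤ ((J 1) ^ 16 * (J 98) ^ 5)
        = HahnSeries.ofPowerSeries ℤ ℤ (PowerSeries.X ^ 12 * (J 2) ^ 5 * (J 49) ^ 16))
    (L : ℕ → LaurentSeries ℤ) (hL0 : L 0 = 1)
    (hLodd : ∀ β : ℕ, L (2 * β + 1) = U (A5 * L (2 * β)))
    (hLeven : ∀ β : ℕ, L (2 * β + 2) = U (L (2 * β + 1)))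
    (α : ℕ) (hα : 1 ≤ α) :
    ∃ d : ℕ → ℕ → ℤ,
      L (2 * α)
        = HahnSeries.ofPowerSeries ℤ ℤ
            (p0 * tpowSum t fun n =>
              if 1 ≤ n then d n 0 * 7 ^ ((7 * n + 2) / 4) else 0)
        + p1 * HahnSeries.ofPowerSeries ℤ ℤ
            (tpowSum t fun n =>
              if 2 ≤ n then d n 1 * 7 ^ ((7 * n - 1) / 4) else 0)
        + HahnSeries.ofPowerSeries ℤ ℤ
            (tpowSum t fun n =>
              if 1 ≤ n then d n 2 * 7 ^ ((7 * n - 2) / 4) else 0) := by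
  exact D5.main t ht p0 hp0 p1 hp1 U hU A5 hA5 L hL0 hLodd hLeven α hα
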